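/- Uniqueness of bounded viscosity solutions: Assume (H1)–(H3). If W₁ and W₂ are two bounded viscosity solutions of equation (HJB) (i.e. the usc envelope of each is a viscosity subsolution and the lsc envelope of each is a viscosity supersolution, including the terminal conditions), then W₁* = (W₁)_* = W₂* = (W₂)_* on [0,T]×ℝⁿ; in particular W₁ = W₂ on [0,T)×ℝⁿ and this common function is continuous on [0,T)×ℝⁿ. -/

import Mathlib

open scoped BigOperators RealInnerProductSpace
open Filter Matrix Set Topology

noncomputable section

/-- Euclidean state space ℝⁿ. -/
abbrev EucSp (n : ℕ) := EuclideanSpace ℝ (Fin n)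

variable {n d : ℕ}

/-- The parabolic domain `[0, T) × ℝⁿ`. -/
def pdom (T : ℝ) (n : ℕ) : Set (ℝ × EucSp n) := Set.Ico (0 : ℝ) T ×ˢ (Set.univ : Set (EucSp n))

/-- Time derivative `∂ₜφ(t,x)`. -/
def tderiv (φ : ℝ → EucSp n → ℝ) (t : ℝ) (x : EucSp n) : ℝ :=
  deriv (fun s => φ s x) t

/-- Spatial gradient `∇ₓφ(t,x)`. -/
def xgrad (φ : ℝ → EucSp n → ℝ) (t : ℝ) (x : EucSp n) : EucSp n :=
  gradient (fun y => φ t y) x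

/-- Spatial Hessian matrix `∇ₓ²φ(t,x)`. -/
def xhess (φ : ℝ → EucSp n → ℝ) (t : ℝ) (x : EucSp n) : Matrix (Fin n) (Fin n) ℝ :=
  fun i j => fderiv ℝ (fun y => xgrad φ t y) x (EuclideanSpace.single j 1) i

/-- The second order operator `Lφ(t,x) = ⟨b, ∇ₓφ⟩ + ½ tr[σσᵀ ∇ₓ²φ]`. -/
def Lop (b : ℝ → EucSp n → EucSp n) (σ : ℝ → EucSp n → Matrix (Fin n) (Fin d) ℝ)
    (φ : ℝ → EucSp n → ℝ) (t : ℝ) (x : EucSp n) : ℝ :=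
  ⟪b t x, xgrad φ t x⟫ + (1 / 2) * (σ t x * (σ t x)ᵀ * xhess φ t x).trace

/-- `φ` is of class `C^{1,2}` on the set `s`. -/
structure IsC12On (φ : ℝ → EucSp n → ℝ) (s : Set (ℝ × EucSp n)) : Prop where
  cont : ContinuousOn (fun p : ℝ × EucSp n => φ p.1 p.2) s
  diff_t : ∀ p ∈ s, DifferentiableAt ℝ (fun t => φ t p.2) p.1
  cont_t : ContinuousOn (fun p : ℝ × EucSp n => tderiv φ p.1 p.2) s
  diff_x : ∀ p ∈ s, DifferentiableAt ℝ (fun y => φ p.1 y) p.2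
  diff_grad : ∀ p ∈ s, DifferentiableAt ℝ (fun y => xgrad φ p.1 y) p.2
  cont_grad : ContinuousOn (fun p : ℝ × EucSp n => xgrad φ p.1 p.2) s
  cont_hess : ContinuousOn (fun p : ℝ × EucSp n => xhess φ p.1 p.2) s

/-- The intervention operator `(MW)(t,x) = sup_{ξ∈K} [W(t,x+ξ) − c(t,x,ξ)]`. -/
def Mop (K : Set (EucSp n)) (c : ℝ → EucSp n → EucSp n → ℝ) (W : ℝ → EucSp n → ℝ)
    (t : ℝ) (x : EucSp n) : ℝ :=
  sSup ((fun ξ => W t (x + ξ) - c t x ξ) '' K)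

/-- The intervention operator `(M̃W)(t,x) = sup_{ξ∈K} [W(t,x+ξ) − e^t c(t,x,ξ)]`. -/
def Mtop (K : Set (EucSp n)) (c : ℝ → EucSp n → EucSp n → ℝ) (W : ℝ → EucSp n → ℝ)
    (t : ℝ) (x : EucSp n) : ℝ :=
  sSup ((fun ξ => W t (x + ξ) - Real.exp t * c t x ξ) '' K)

/-- Upper semicontinuous envelope, limits taken with `s < T`. -/
def uscEnvT (T : ℝ) (W : ℝ → EucSp n → ℝ) (t : ℝ) (x : EucSp n) : ℝ :=
  limsup (fun p : ℝ × EucSp n => W p.1 p.2) (𝓝[{p : ℝ × EucSp n | p.1 < T}] (t, x))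

/-- Lower semicontinuous envelope, limits taken with `s < T`. -/
def lscEnvT (T : ℝ) (W : ℝ → EucSp n → ℝ) (t : ℝ) (x : EucSp n) : ℝ :=
  liminf (fun p : ℝ × EucSp n => W p.1 p.2) (𝓝[{p : ℝ × EucSp n | p.1 < T}] (t, x))

/-- Quadratic form `⟨Xv, v⟩` of a matrix. -/
def qform (X : Matrix (Fin n) (Fin n) ℝ) (v : EucSp n) : ℝ :=
  ∑ i, ∑ j, X i j * v j * v i

/-- Parabolic subjet membership: `(p,q,X) ∈ J^{2,−}V(t,x)`. -/
def InSubjet (V : ℝ → EucSp n → ℝ) (t : ℝ) (x : EucSp n)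
    (p : ℝ) (q : EucSp n) (X : Matrix (Fin n) (Fin n) ℝ) : Prop :=
  X.IsSymm ∧
  ∀ ε > (0 : ℝ), ∀ᶠ sy : ℝ × EucSp n in 𝓝 (t, x),
    V sy.1 sy.2 ≥ V t x + p * (sy.1 - t) + ⟪q, sy.2 - x⟫
      + (1 / 2) * qform X (sy.2 - x) - ε * (|sy.1 - t| + ‖sy.2 - x‖ ^ 2)

/-- Parabolic superjet membership: `(p,q,X) ∈ J^{2,+}V(t,x)`. -/
def InSuperjet (V : ℝ → EucSp n → ℝ) (t : ℝ) (x : EucSp n)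
    (p : ℝ) (q : EucSp n) (X : Matrix (Fin n) (Fin n) ℝ) : Prop :=
  X.IsSymm ∧
  ∀ ε > (0 : ℝ), ∀ᶠ sy : ℝ × EucSp n in 𝓝 (t, x),
    V sy.1 sy.2 ≤ V t x + p * (sy.1 - t) + ⟪q, sy.2 - x⟫
      + (1 / 2) * qform X (sy.2 - x) + ε * (|sy.1 - t| + ‖sy.2 - x‖ ^ 2)

/-- Viscosity subsolution of equation (HJB). -/
def IsSubHJB (T : ℝ) (b : ℝ → EucSp n → EucSp n) (σ : ℝ → EucSp n → Matrix (Fin n) (Fin d) ℝ)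
    (f : ℝ → EucSp n → ℝ) (g : EucSp n → ℝ) (K : Set (EucSp n))
    (c : ℝ → EucSp n → EucSp n → ℝ) (U : ℝ → EucSp n → ℝ) : Prop :=
  (∀ t₀ x₀, (t₀, x₀) ∈ pdom T n → ∀ φ : ℝ → EucSp n → ℝ, IsC12On φ (pdom T n) →
    IsLocalMaxOn (fun p : ℝ × EucSp n => U p.1 p.2 - φ p.1 p.2) (pdom T n) (t₀, x₀) →
    min (-(tderiv φ t₀ x₀) - Lop b σ φ t₀ x₀ - f t₀ x₀)
        (U t₀ x₀ - Mop K c U t₀ x₀) ≤ 0) ∧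
  (∀ x, U T x ≤ g x)

/-- Viscosity supersolution of equation (HJB). -/
def IsSuperHJB (T : ℝ) (b : ℝ → EucSp n → EucSp n) (σ : ℝ → EucSp n → Matrix (Fin n) (Fin d) ℝ)
    (f : ℝ → EucSp n → ℝ) (g : EucSp n → ℝ) (K : Set (EucSp n))
    (c : ℝ → EucSp n → EucSp n → ℝ) (V : ℝ → EucSp n → ℝ) : Prop :=
  (∀ t₀ x₀, (t₀, x₀) ∈ pdom T n → ∀ φ : ℝ → EucSp n → ℝ, IsC12On φ (pdom T n) →
    IsLocalMinOn (fun p : ℝ × EucSp n => V p.1 p.2 - φ p.1 p.2) (pdom T n) (t₀, x₀) →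
    0 ≤ min (-(tderiv φ t₀ x₀) - Lop b σ φ t₀ x₀ - f t₀ x₀)
        (V t₀ x₀ - Mop K c V t₀ x₀)) ∧
  (∀ x, g x ≤ V T x)

/-- A bounded `W` is a viscosity solution of (HJB) when its usc envelope is a subsolution
and its lsc envelope is a supersolution. -/
def IsViscSolHJB (T : ℝ) (b : ℝ → EucSp n → EucSp n)
    (σ : ℝ → EucSp n → Matrix (Fin n) (Fin d) ℝ)
    (f : ℝ → EucSp n → ℝ) (g : EucSp n → ℝ) (K : Set (EucSp n))
    (c : ℝ → EucSp n → EucSp n → ℝ) (W : ℝ → EucSp n → ℝ) : Prop :=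
  IsSubHJB T b σ f g K c (uscEnvT T W) ∧ IsSuperHJB T b σ f g K c (lscEnvT T W)
/-!
Both equalities of envelopes follow from the comparison `W₁* ≤ (W₂)_*` and its mirror image.

To compare a subsolution `U` with a supersolution `V`, replace `V` by a convex combination of `V`
with the barrier `A (T - t) + C`, which makes the equation strict and, since the cost is at least
`k > 0`, the obstacle condition strict as well. If `U - V` were positive somewhere, one would
penalise the doubled function `U(X) - V(Y)` by the distance of `X` to `Y`. At an almost maximum the
two second-order jets nearly cancel by the theorem on sums; if the equation holds for `U`, this
contradicts strictness in the equation, and if instead `U ≤ MU`, moving both points by a nearly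
optimal impulse gains less than what strictness in the obstacle condition costs.

The theorem on sums is obtained by putting the sup-convolutions into the maximised function: the
penalty has anchors `ξ`, `η`, and after maximising over `X`, `Y` a semiconvex function of `(ξ, η)`
remains. Near its maximum it is expanded to second order by Alexandrov's theorem, for which only
points touched from above by a paraboloid are needed. For a convex function these are images of
points under the proximal map, which is Lipschitz; it is differentiable outside a null set by
Rademacher's theorem, and slopes coming from this null set form a null set again.
-/

/-! ### Quadratic forms and second-order expansions -/

section SecondOrder

variable {F : Type*} [NormedAddCommGroup F] [InnerProductSpace ℝ F]

/-- The quadratic form `x ↦ ½ ⟪S x, x⟫`, normalised so that its Hessian is `S` when `S` is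
symmetric. -/
def halfQuadForm (S : F →L[ℝ] F) (x : F) : ℝ := (1 / 2) * ⟪S x, x⟫

/-- Second-order Taylor expansion of `f` at the single point `x`, with gradient `p` and
Hessian `H`; `f` need not be differentiable at other points. -/
def HasSecondOrderExpansionAt (f : F → ℝ) (p : F) (H : F →L[ℝ] F) (x : F) : Prop :=
  (fun h => f (x + h) - f x - ⟪p, h⟫ - halfQuadForm H h) =o[𝓝 0] fun h => ‖h‖ ^ 2

lemma halfQuadForm_neg (S : F →L[ℝ] F) (x : F) : halfQuadForm S (-x) = halfQuadForm S x := by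
  simp [halfQuadForm]

lemma halfQuadForm_zero (S : F →L[ℝ] F) : halfQuadForm S 0 = 0 := by
  simp [halfQuadForm]

lemma halfQuadForm_smul (S : F →L[ℝ] F) (t : ℝ) (x : F) :
    halfQuadForm S (t • x) = t ^ 2 * halfQuadForm S x := by
  simp only [halfQuadForm, map_smul, real_inner_smul_left, real_inner_smul_right]
  ring

lemma halfQuadForm_add_clm (S R : F →L[ℝ] F) (x : F) :
    halfQuadForm (S + R) x = halfQuadForm S x + halfQuadForm R x := by
  simp only [halfQuadForm, _root_.add_apply, inner_add_left]
  ring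

lemma halfQuadForm_sub_clm (S R : F →L[ℝ] F) (x : F) :
    halfQuadForm (S - R) x = halfQuadForm S x - halfQuadForm R x := by
  simp only [halfQuadForm, _root_.sub_apply, inner_sub_left]
  ring

lemma halfQuadForm_smul_clm (t : ℝ) (S : F →L[ℝ] F) (x : F) :
    halfQuadForm (t • S) x = t * halfQuadForm S x := by
  simp only [halfQuadForm, _root_.smul_apply, real_inner_smul_left]
  ring

lemma halfQuadForm_id (x : F) : halfQuadForm (.id ℝ F) x = (1 / 2) * ‖x‖ ^ 2 := by
  simp [halfQuadForm]

lemma halfQuadForm_le_norm_mul_sq (S : F →L[ℝ] F) (x : F) :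
    halfQuadForm S x ≤ ‖S‖ * ‖x‖ ^ 2 := by
  have h : ⟪S x, x⟫ ≤ ‖S‖ * ‖x‖ * ‖x‖ :=
    (real_inner_le_norm _ _).trans (by gcongr; exact S.le_opNorm x)
  have : 0 ≤ ‖S‖ * ‖x‖ ^ 2 := by positivity
  unfold halfQuadForm
  linarith

lemma halfQuadForm_add {S : F →L[ℝ] F} (hS : S.toLinearMap.IsSymmetric) (x h : F) :
    halfQuadForm S (x + h) = halfQuadForm S x + ⟪S x, h⟫ + halfQuadForm S h := by
  have : ⟪S h, x⟫ = ⟪S x, h⟫ := (hS h x).trans (real_inner_comm _ _)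
  simp only [halfQuadForm, map_add, inner_add_left, inner_add_right, this]
  ring

lemma halfQuadForm_sub {S : F →L[ℝ] F} (hS : S.toLinearMap.IsSymmetric) (x h : F) :
    halfQuadForm S (x - h) = halfQuadForm S x - ⟪S x, h⟫ + halfQuadForm S h := by
  rw [sub_eq_add_neg, halfQuadForm_add hS, inner_neg_right, halfQuadForm_neg, sub_eq_add_neg]

lemma hasFDerivAt_halfQuadForm {S : F →L[ℝ] F} (hS : S.toLinearMap.IsSymmetric) (x : F) :
    HasFDerivAt (halfQuadForm S) (innerSL ℝ (S x)) x := by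
  refine ((S.hasFDerivAt.inner ℝ (hasFDerivAt_id x)).const_mul (1 / 2 : ℝ)).congr_fderiv ?_
  ext h
  have : ⟪S h, x⟫ = ⟪S x, h⟫ := (hS h x).trans (real_inner_comm _ _)
  simp [this]
  ring

lemma le_mul_norm_sq_of_eventually {q : F → ℝ} (hq : ∀ (t : ℝ) u, q (t • u) = t ^ 2 * q u) {c : ℝ}
    (h : ∀ᶠ u in 𝓝 0, q u ≤ c * ‖u‖ ^ 2) (u : F) : q u ≤ c * ‖u‖ ^ 2 := by
  have hlim : Tendsto (fun t : ℝ => t • u) (𝓝[>] 0) (𝓝 0) := by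
    have : ContinuousAt (fun t : ℝ => t • u) 0 := by fun_prop
    simpa [ContinuousAt] using this.mono_left nhdsWithin_le_nhds
  obtain ⟨t, ht, hpos⟩ := ((hlim.eventually h).and self_mem_nhdsWithin).exists
  have ht2 : 0 < t ^ 2 := pow_pos hpos 2
  rw [hq, norm_smul, mul_pow, Real.norm_eq_abs, sq_abs, mul_left_comm] at ht
  exact le_of_mul_le_mul_left ht ht2

lemma nonneg_of_eventually_nonneg_mul_add_sq {a b : ℝ}
    (h : ∀ᶠ t in 𝓝[>] (0 : ℝ), 0 ≤ t * a + t ^ 2 * b) : 0 ≤ a := by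
  have hlim : Tendsto (fun t : ℝ => a + t * b) (𝓝[>] 0) (𝓝 a) := by
    have : ContinuousAt (fun t : ℝ => a + t * b) 0 := by fun_prop
    simpa [ContinuousAt] using this.mono_left nhdsWithin_le_nhds
  refine ge_of_tendsto hlim ?_
  filter_upwards [h, self_mem_nhdsWithin] with t ht htpos
  refine le_of_mul_le_mul_left ?_ (show 0 < t from htpos)
  linarith

lemma eq_zero_of_eventually_inner_le_mul_norm_sq {v : F} {c : ℝ}
    (h : ∀ᶠ u in 𝓝 0, ⟪v, u⟫ ≤ c * ‖u‖ ^ 2) : v = 0 := by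
  have hlim : Tendsto (fun t : ℝ => t • v) (𝓝[>] 0) (𝓝 0) := by
    have : ContinuousAt (fun t : ℝ => t • v) 0 := by fun_prop
    simpa [ContinuousAt] using this.mono_left nhdsWithin_le_nhds
  have hneg : 0 ≤ -‖v‖ ^ 2 := by
    refine nonneg_of_eventually_nonneg_mul_add_sq (b := c * ‖v‖ ^ 2) ?_
    filter_upwards [hlim.eventually h] with t ht
    rw [inner_smul_right, real_inner_self_eq_norm_sq, norm_smul, mul_pow, Real.norm_eq_abs,
      sq_abs] at ht
    linarith
  exact norm_eq_zero.1 (pow_eq_zero_iff two_ne_zero |>.1 (by linarith [sq_nonneg ‖v‖]))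

lemma isSymmetric_of_hasFDerivAt_gradient {E : F → ℝ} {G : F → F}
    (hE : ∀ x, HasFDerivAt E (innerSL ℝ (G x)) x) {A : F →L[ℝ] F} {x : F}
    (hA : HasFDerivAt G A x) : A.toLinearMap.IsSymmetric := by
  intro u v
  have h : ⟪A u, v⟫ = ⟪A v, u⟫ :=
    second_derivative_symmetric hE ((innerSL ℝ).hasFDerivAt.comp x hA) u v
  exact h.trans (real_inner_comm _ _)

lemma hasSecondOrderExpansionAt_of_hasFDerivAt_gradient {E : F → ℝ} {G : F → F}
    (hE : ∀ x, HasFDerivAt E (innerSL ℝ (G x)) x) {A : F →L[ℝ] F} {x : F}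
    (hA : HasFDerivAt G A x) : HasSecondOrderExpansionAt E (G x) A x := by
  have hsymm := isSymmetric_of_hasFDerivAt_gradient hE hA
  refine Asymptotics.IsLittleO.of_bound fun ε hε => ?_
  obtain ⟨ρ, hρ, hbound⟩ := Metric.eventually_nhds_iff_ball.1
    ((hasFDerivAt_iff_isLittleO_nhds_zero.1 hA).def hε)
  filter_upwards [Metric.ball_mem_nhds 0 hρ] with h hh
  set φ : F → ℝ := fun k => E (x + k) - E x - ⟪G x, k⟫ - halfQuadForm A k
  have hderiv (k : F) : HasFDerivAt φ (innerSL ℝ (G (x + k) - G x - A k)) k := by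
    have hshift := (hE (x + k)).comp k ((hasFDerivAt_id k).const_add x)
    refine (((hshift.sub_const (E x)).sub (innerSL ℝ (G x)).hasFDerivAt).sub
      (hasFDerivAt_halfQuadForm hsymm k)).congr_fderiv ?_
    ext v
    simp
  have hmean := (convex_closedBall (0 : F) ‖h‖).norm_image_sub_le_of_norm_hasFDerivWithin_le
    (fun k _ => (hderiv k).hasFDerivWithinAt) (C := ε * ‖h‖) (x := 0) (y := h) ?_
    (by simp) (by simp)
  · simpa [φ, halfQuadForm, pow_two, mul_assoc] using hmean
  · intro k hk
    rw [innerSL_apply_norm]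
    have hkh : ‖k‖ ≤ ‖h‖ := by simpa using hk
    exact (hbound k (by simpa using hkh.trans_lt (by simpa using hh))).trans (by gcongr)

lemma HasSecondOrderExpansionAt.sub_mul_norm_sq {w : F → ℝ} {C : ℝ} {p y : F} {H : F →L[ℝ] F}
    (h : HasSecondOrderExpansionAt (fun z => w z + C * ‖z‖ ^ 2) p H y) :
    HasSecondOrderExpansionAt w (p - (2 * C) • y) (H - (2 * C) • .id ℝ F) y := by
  refine Asymptotics.IsLittleO.congr_left h fun k => ?_
  simp only
  rw [norm_add_sq_real, inner_sub_left, real_inner_smul_left, halfQuadForm_sub_clm,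
    halfQuadForm_smul_clm, halfQuadForm_id]
  ring

lemma HasSecondOrderExpansionAt.halfQuadForm_le {w : F → ℝ} {a : ℝ} {p y : F} {H : F →L[ℝ] F}
    (h : HasSecondOrderExpansionAt w p H y)
    (hup : ∀ z, w z ≤ w y + ⟪p, z - y⟫ + a * ‖z - y‖ ^ 2) (u : F) :
    halfQuadForm H u ≤ a * ‖u‖ ^ 2 := by
  have hlim : Tendsto (fun ε : ℝ => (a + ε) * ‖u‖ ^ 2) (𝓝[>] 0) (𝓝 (a * ‖u‖ ^ 2)) := by
    have : ContinuousAt (fun ε : ℝ => (a + ε) * ‖u‖ ^ 2) 0 := by fun_prop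
    simpa [ContinuousAt] using this.mono_left nhdsWithin_le_nhds
  refine ge_of_tendsto hlim ?_
  filter_upwards [self_mem_nhdsWithin] with ε hε
  refine le_mul_norm_sq_of_eventually (halfQuadForm_smul H) ?_ u
  filter_upwards [h.def hε] with k hk
  have hupk := hup (y + k)
  rw [add_sub_cancel_left] at hupk
  rw [Real.norm_of_nonneg (sq_nonneg ‖k‖), Real.norm_eq_abs] at hk
  linarith [(abs_le.1 hk).1]

lemma exists_isSymmetric_rightInverse_of_norm_le [FiniteDimensional ℝ F] {D : F →L[ℝ] F}
    (hD : D.toLinearMap.IsSymmetric) {L : ℝ} (hL : ∀ k, ‖k‖ ≤ L * ‖D k‖) :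
    ∃ B : F →L[ℝ] F, B.toLinearMap.IsSymmetric ∧ (∀ h, D (B h) = h) ∧
      ∀ h, ‖B h‖ ≤ L * ‖h‖ := by
  have hinj : Function.Injective (D : F →ₗ[ℝ] F) :=
    (injective_iff_map_eq_zero _).2 fun k hk => by simpa [show D k = 0 from hk] using hL k
  let e := LinearEquiv.ofInjectiveEndo (D : F →ₗ[ℝ] F) hinj
  have hDe (h : F) : D (e.symm h) = h := e.apply_symm_apply h
  refine ⟨LinearMap.toContinuousLinearMap (e.symm : F →ₗ[ℝ] F), fun u v => ?_, hDe, fun h => ?_⟩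
  · have := hD (e.symm u) (e.symm v)
    simpa [hDe] using this.symm
  · simpa [hDe] using hL (e.symm h)

lemma halfQuadForm_id_sub_sub_norm_sq {D B : F →L[ℝ] F} (hD : D.toLinearMap.IsSymmetric)
    (hDB : ∀ h, D (B h) = h) (k h : F) :
    halfQuadForm (.id ℝ F - D) k - (1 / 2) * ‖k - h‖ ^ 2 =
      halfQuadForm (B - .id ℝ F) h - halfQuadForm D (k - B h) := by
  have hcross : ⟪D k, B h⟫ = ⟪k, h⟫ := by
    rw [← congrArg (inner ℝ k) (hDB h)]
    exact hD k (B h)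
  rw [halfQuadForm_sub hD, hcross, halfQuadForm_sub_clm, halfQuadForm_sub_clm, halfQuadForm_id,
    halfQuadForm_id, norm_sub_sq_real]
  simp only [halfQuadForm, hDB, real_inner_comm h (B h)]
  ring

end SecondOrder

/-! ### Alexandrov's theorem at points touched from above -/

section Alexandrov

variable {F : Type*} [NormedAddCommGroup F] [InnerProductSpace ℝ F]

/-- `g` is a subgradient of the (convex) function `f` at `z`. -/
def IsSubgradientAt (f : F → ℝ) (g z : F) : Prop := ∀ y, f z + ⟪g, y - z⟫ ≤ f y

/-- `P` is the proximal map (resolvent of the subdifferential) of `f`: the relation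
`x - P x ∈ ∂f (P x)` characterises `P x` as the minimiser of `f + ½ ‖· - x‖²`. -/
def IsProximalMap (f : F → ℝ) (P : F → F) : Prop := ∀ x, IsSubgradientAt f (x - P x) (P x)

/-- The Moreau envelope `x ↦ min_z (f z + ½ ‖x - z‖²)` of a function with proximal map `P`. -/
def moreauEnvelope (f : F → ℝ) (P : F → F) (x : F) : ℝ := f (P x) + (1 / 2) * ‖x - P x‖ ^ 2

variable {f : F → ℝ}

lemma convexOn_of_forall_exists_isSubgradientAt (hf : ∀ z, ∃ g, IsSubgradientAt f g z) :
    ConvexOn ℝ univ f := by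
  refine ⟨convex_univ, fun x _ y _ a b ha hb hab => ?_⟩
  obtain ⟨g, hg⟩ := hf (a • x + b • y)
  have hzero : a * ⟪g, x - (a • x + b • y)⟫ + b * ⟪g, y - (a • x + b • y)⟫ = 0 := by
    rw [← inner_smul_right, ← inner_smul_right, ← inner_add_right, ← inner_zero_right g]
    congr 1
    linear_combination (norm := module) -hab • (a • x + b • y)
  have hx := mul_le_mul_of_nonneg_left (hg x) ha
  have hy := mul_le_mul_of_nonneg_left (hg y) hb
  have hval : f (a • x + b • y) = a * f (a • x + b • y) + b * f (a • x + b • y) := by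
    rw [← add_mul, hab, one_mul]
  simp only [smul_eq_mul]
  linarith

lemma continuous_of_forall_exists_isSubgradientAt [FiniteDimensional ℝ F]
    (hf : ∀ z, ∃ g, IsSubgradientAt f g z) : Continuous f := by
  have := (convexOn_of_forall_exists_isSubgradientAt hf).continuousOn_interior
  rwa [interior_univ, continuousOn_univ] at this

lemma IsSubgradientAt.of_isMinOn_add_sq (hf : ConvexOn ℝ univ f) {x z : F}
    (hmin : ∀ y, f z + (1 / 2) * ‖z - x‖ ^ 2 ≤ f y + (1 / 2) * ‖y - x‖ ^ 2) :
    IsSubgradientAt f (x - z) z := by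
  intro y
  suffices 0 ≤ f y - f z + ⟪z - x, y - z⟫ by
    rw [← neg_sub z x, inner_neg_left]
    linarith
  refine nonneg_of_eventually_nonneg_mul_add_sq (b := (1 / 2) * ‖y - z‖ ^ 2) ?_
  filter_upwards [Ioc_mem_nhdsGT (zero_lt_one (α := ℝ))] with t ht
  have hconv := hf.2 (mem_univ z) (mem_univ y) (sub_nonneg.2 ht.2) ht.1.le (by ring)
  have hm := hmin ((1 - t) • z + t • y)
  have hshift : (1 - t) • z + t • y - x = (z - x) + t • (y - z) := by module
  rw [hshift, norm_add_sq_real, inner_smul_right, norm_smul, mul_pow, Real.norm_eq_abs, sq_abs]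
    at hm
  simp only [smul_eq_mul] at hconv
  linarith

lemma exists_isMinOn_add_sq [FiniteDimensional ℝ F] (hf : ∀ z, ∃ g, IsSubgradientAt f g z)
    (x : F) : ∃ z, ∀ y, f z + (1 / 2) * ‖z - x‖ ^ 2 ≤ f y + (1 / 2) * ‖y - x‖ ^ 2 := by
  obtain ⟨g, hg⟩ := hf x
  have hcont : Continuous fun z => f z + (1 / 2) * ‖z - x‖ ^ 2 := by
    have := continuous_of_forall_exists_isSubgradientAt hf
    fun_prop
  obtain ⟨z, -, hmin⟩ := (isCompact_closedBall x (2 * ‖g‖)).exists_isMinOn ⟨x, by simp⟩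
    hcont.continuousOn
  refine ⟨z, fun y => ?_⟩
  by_cases hy : y ∈ Metric.closedBall x (2 * ‖g‖)
  · exact hmin hy
  · have hx : f z + (1 / 2) * ‖z - x‖ ^ 2 ≤ f x := by
      simpa using hmin (show x ∈ Metric.closedBall x (2 * ‖g‖) by simp)
    have hfar : 2 * ‖g‖ < ‖y - x‖ := by simpa [dist_eq_norm] using hy
    have hin := (abs_le.1 (abs_real_inner_le_norm g (y - x))).1
    nlinarith [hg y, norm_nonneg (y - x), norm_nonneg g]

lemma exists_isProximalMap [FiniteDimensional ℝ F] (hf : ∀ z, ∃ g, IsSubgradientAt f g z) :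
    ∃ P, IsProximalMap f P := by
  choose P hP using exists_isMinOn_add_sq hf
  exact ⟨P, fun x => .of_isMinOn_add_sq (convexOn_of_forall_exists_isSubgradientAt hf) (hP x)⟩

lemma IsSubgradientAt.norm_sub_sq_le_inner {x₁ x₂ z₁ z₂ : F}
    (h₁ : IsSubgradientAt f (x₁ - z₁) z₁) (h₂ : IsSubgradientAt f (x₂ - z₂) z₂) :
    ‖z₁ - z₂‖ ^ 2 ≤ ⟪x₁ - x₂, z₁ - z₂⟫ := by
  have a := h₁ z₂
  have b := h₂ z₁
  rw [← neg_sub z₁ z₂, inner_neg_right] at a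
  have : ⟪x₁ - x₂, z₁ - z₂⟫ - ‖z₁ - z₂‖ ^ 2 =
      ⟪x₁ - z₁, z₁ - z₂⟫ - ⟪x₂ - z₂, z₁ - z₂⟫ := by
    rw [← real_inner_self_eq_norm_sq, ← inner_sub_left, ← inner_sub_left]
    congr 1
    abel
  linarith

lemma IsSubgradientAt.norm_sub_le {x₁ x₂ z₁ z₂ : F}
    (h₁ : IsSubgradientAt f (x₁ - z₁) z₁) (h₂ : IsSubgradientAt f (x₂ - z₂) z₂) :
    ‖z₁ - z₂‖ ≤ ‖x₁ - x₂‖ := by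
  have := h₁.norm_sub_sq_le_inner h₂
  have := real_inner_le_norm (x₁ - x₂) (z₁ - z₂)
  by_contra! hlt
  nlinarith [norm_nonneg (x₁ - x₂)]

lemma IsSubgradientAt.eq_of_le_add_sq {g p z : F} {C : ℝ} (hg : IsSubgradientAt f g z)
    (hup : ∀ y, f y ≤ f z + ⟪p, y - z⟫ + C * ‖y - z‖ ^ 2) : g = p := by
  refine sub_eq_zero.1 (eq_zero_of_eventually_inner_le_mul_norm_sq (c := C)
    (Eventually.of_forall fun u => ?_))
  have h₁ := hg (z + u)
  have h₂ := hup (z + u)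
  rw [add_sub_cancel_left] at h₁ h₂
  rw [inner_sub_left]
  linarith

lemma IsSubgradientAt.norm_sub_le_of_le_add_sq {g₁ g₂ z₁ z₂ : F} {C : ℝ} (hC : 0 < C)
    (h₁ : IsSubgradientAt f g₁ z₁) (hup : ∀ y, f y ≤ f z₁ + ⟪g₁, y - z₁⟫ + C * ‖y - z₁‖ ^ 2)
    (h₂ : IsSubgradientAt f g₂ z₂) : ‖g₂ - g₁‖ ≤ 4 * C * ‖z₂ - z₁‖ := by
  set v := g₂ - g₁ with hv
  have hquad (w : F) : ⟪v, w - (z₂ - z₁)⟫ ≤ C * ‖w‖ ^ 2 := by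
    have a := h₂ (z₁ + w)
    have b := hup (z₁ + w)
    have c := h₁ z₂
    have hw : z₁ + w - z₂ = w - (z₂ - z₁) := by abel
    rw [add_sub_cancel_left] at b
    rw [hw] at a
    rw [hv, inner_sub_left, inner_sub_right g₁]
    linarith
  -- `w = v / (2C)` optimises the bound.
  have hopt := hquad ((2 * C)⁻¹ • v)
  have hsq : ‖v‖ ^ 2 ≤ 4 * C * ⟪v, z₂ - z₁⟫ := by
    rw [inner_sub_right, inner_smul_right, real_inner_self_eq_norm_sq, norm_smul, mul_pow,
      Real.norm_eq_abs, sq_abs] at hopt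
    field_simp at hopt
    linarith
  have hcs := real_inner_le_norm v (z₂ - z₁)
  by_contra! hlt
  nlinarith [norm_nonneg v, norm_nonneg (z₂ - z₁), mul_le_mul_of_nonneg_left hcs hC.le,
    mul_nonneg hC.le (norm_nonneg (z₂ - z₁))]

lemma IsSubgradientAt.norm_add_sub_add_le_of_le_add_sq {g₁ g₂ z₁ z₂ : F} {C : ℝ} (hC : 0 < C)
    (h₁ : IsSubgradientAt f g₁ z₁) (hup : ∀ y, f y ≤ f z₁ + ⟪g₁, y - z₁⟫ + C * ‖y - z₁‖ ^ 2)
    (h₂ : IsSubgradientAt f g₂ z₂) :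
    ‖(z₂ + g₂) - (z₁ + g₁)‖ ≤ (1 + 4 * C) * ‖z₂ - z₁‖ :=
  calc ‖(z₂ + g₂) - (z₁ + g₁)‖ = ‖(z₂ - z₁) + (g₂ - g₁)‖ := by congr 1; abel
    _ ≤ ‖z₂ - z₁‖ + 4 * C * ‖z₂ - z₁‖ :=
      (norm_add_le _ _).trans (by gcongr; exact h₁.norm_sub_le_of_le_add_sq hC hup h₂)
    _ = (1 + 4 * C) * ‖z₂ - z₁‖ := by ring

lemma moreauEnvelope_add_inner_sub_norm_sq (P : F → F) (x k h : F) :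
    moreauEnvelope f P x + ⟪x - P x, k⟫ - (1 / 2) * ‖x + k - (P x + h)‖ ^ 2 =
      f (P x) + ⟪x - P x, h⟫ - (1 / 2) * ‖k - h‖ ^ 2 := by
  rw [moreauEnvelope, add_sub_add_comm, norm_add_sq_real, inner_sub_right]
  ring

namespace IsProximalMap

variable {P : F → F}

lemma lipschitzWith_one (hP : IsProximalMap f P) : LipschitzWith 1 P :=
  .of_dist_le_mul fun x y => by
    simpa [dist_eq_norm] using (hP x).norm_sub_le (hP y)

lemma eq_of_isSubgradientAt (hP : IsProximalMap f P) {x z : F}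
    (hz : IsSubgradientAt f (x - z) z) : P x = z := by
  simpa [sub_eq_zero] using (hP x).norm_sub_le hz

lemma apply_add_of_isSubgradientAt (hP : IsProximalMap f P) {g z : F}
    (hg : IsSubgradientAt f g z) : P (z + g) = z :=
  hP.eq_of_isSubgradientAt (by rwa [add_sub_cancel_left])

lemma moreauEnvelope_le (hP : IsProximalMap f P) (x z : F) :
    moreauEnvelope f P x ≤ f z + (1 / 2) * ‖x - z‖ ^ 2 := by
  have h := hP x z
  have hx : x - z = (x - P x) - (z - P x) := by abel
  rw [hx, norm_sub_sq_real]
  unfold moreauEnvelope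
  linarith [sq_nonneg ‖z - P x‖]

lemma moreauEnvelope_le_add_sq (hP : IsProximalMap f P) (x y : F) :
    moreauEnvelope f P y ≤ moreauEnvelope f P x + ⟪x - P x, y - x⟫ + (1 / 2) * ‖y - x‖ ^ 2 := by
  have h := hP.moreauEnvelope_le y (P x)
  have hy : y - P x = (x - P x) + (y - x) := by abel
  rw [hy, norm_add_sq_real] at h
  unfold moreauEnvelope at h ⊢
  linarith

lemma sub_sq_le_moreauEnvelope (hP : IsProximalMap f P) (x y : F) :
    moreauEnvelope f P x + ⟪x - P x, y - x⟫ - (1 / 2) * ‖y - x‖ ^ 2 ≤ moreauEnvelope f P y := by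
  have h := hP.moreauEnvelope_le_add_sq y x
  have hfirm := (hP y).norm_sub_sq_le_inner (hP x)
  have hle := (hP y).norm_sub_le (hP x)
  have hcs := real_inner_le_norm (P y - P x) (y - x)
  have hdiff : ⟪y - P y, y - x⟫ - ⟪x - P x, y - x⟫ = ‖y - x‖ ^ 2 - ⟪P y - P x, y - x⟫ := by
    rw [← real_inner_self_eq_norm_sq, ← inner_sub_left, ← inner_sub_left]
    congr 1
    abel
  rw [← neg_sub y x, inner_neg_right, norm_neg] at h
  nlinarith [norm_nonneg (y - x)]

lemma hasFDerivAt_moreauEnvelope (hP : IsProximalMap f P) (x : F) :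
    HasFDerivAt (moreauEnvelope f P) (innerSL ℝ (x - P x)) x := by
  refine hasFDerivAt_iff_isLittleO.2 (Asymptotics.IsLittleO.of_bound fun c hc => ?_)
  filter_upwards [Metric.ball_mem_nhds x hc] with y hy
  have hyc : ‖y - x‖ < c := by simpa [dist_eq_norm] using hy
  have hu := hP.moreauEnvelope_le_add_sq x y
  have hl := hP.sub_sq_le_moreauEnvelope x y
  rw [innerSL_apply_apply, Real.norm_eq_abs, abs_le]
  constructor <;> nlinarith [norm_nonneg (y - x)]

variable {x : F} {D : F →L[ℝ] F}

lemma hasFDerivAt_id_sub (hD : HasFDerivAt P D x) :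
    HasFDerivAt (fun y => y - P y) (.id ℝ F - D) x :=
  (hasFDerivAt_id x).sub hD

lemma isSymmetric_fderiv (hP : IsProximalMap f P) (hD : HasFDerivAt P D x) :
    D.toLinearMap.IsSymmetric := by
  intro u v
  have h := isSymmetric_of_hasFDerivAt_gradient hP.hasFDerivAt_moreauEnvelope
    (hasFDerivAt_id_sub hD) u v
  simpa [inner_sub_left, inner_sub_right] using h

lemma inner_fderiv_nonneg (hP : IsProximalMap f P) (hD : HasFDerivAt P D x) (k : F) :
    0 ≤ ⟪D k, k⟫ := by
  have hslope := Tendsto.inner (𝕜 := ℝ) (hD.hasLineDerivAt k).tendsto_slope_zero_right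
    (tendsto_const_nhds (x := k))
  refine ge_of_tendsto hslope ?_
  filter_upwards [self_mem_nhdsWithin] with t ht
  have h := (sq_nonneg _).trans ((hP (x + t • k)).norm_sub_sq_le_inner (hP x))
  rw [add_sub_cancel_left, inner_smul_left, real_inner_comm] at h
  rw [inner_smul_left]
  have htpos : 0 < t := ht
  exact mul_nonneg (inv_nonneg.2 htpos.le) (nonneg_of_mul_nonneg_right h htpos)

lemma norm_le_mul_norm_fderiv {C : ℝ} (hC : 0 < C) (hP : IsProximalMap f P)
    (hD : HasFDerivAt P D x)
    (hup : ∀ z, f z ≤ f (P x) + ⟪x - P x, z - P x⟫ + C * ‖z - P x‖ ^ 2) (k : F) :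
    ‖k‖ ≤ (1 + 4 * C) * ‖D k‖ := by
  have hslope := (hD.hasLineDerivAt k).tendsto_slope_zero_right.norm.const_mul (1 + 4 * C)
  refine ge_of_tendsto hslope ?_
  filter_upwards [self_mem_nhdsWithin] with t ht
  have htpos : 0 < t := ht
  have h := (hP x).norm_add_sub_add_le_of_le_add_sq hC hup (hP (x + t • k))
  rw [add_sub_cancel, add_sub_cancel, add_sub_cancel_left, norm_smul, Real.norm_eq_abs,
    abs_of_pos htpos] at h
  rw [norm_smul, norm_inv, Real.norm_eq_abs, abs_of_pos htpos,
    mul_left_comm, ← div_eq_inv_mul, le_div_iff₀ htpos]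
  linarith

lemma moreauEnvelope_hasSecondOrderExpansionAt (hP : IsProximalMap f P)
    (hD : HasFDerivAt P D x) :
    HasSecondOrderExpansionAt (moreauEnvelope f P) (x - P x) (.id ℝ F - D) x :=
  hasSecondOrderExpansionAt_of_hasFDerivAt_gradient hP.hasFDerivAt_moreauEnvelope
    (hasFDerivAt_id_sub hD)

lemma exists_apply_add_eq {C : ℝ} (hC : 0 < C) (hP : IsProximalMap f P)
    (hf : ∀ z, ∃ g, IsSubgradientAt f g z)
    (hup : ∀ z, f z ≤ f (P x) + ⟪x - P x, z - P x⟫ + C * ‖z - P x‖ ^ 2) (h : F) :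
    ∃ k, P (x + k) = P x + h ∧ ‖k‖ ≤ (1 + 4 * C) * ‖h‖ := by
  obtain ⟨g, hg⟩ := hf (P x + h)
  refine ⟨P x + h + g - x, ?_, ?_⟩
  · rw [add_sub_cancel]
    exact hP.apply_add_of_isSubgradientAt hg
  · simpa using (hP x).norm_add_sub_add_le_of_le_add_sq hC hup hg

variable [FiniteDimensional ℝ F]

lemma hasSecondOrderExpansionAt {C : ℝ} (hC : 0 < C) (hP : IsProximalMap f P)
    (hf : ∀ z, ∃ g, IsSubgradientAt f g z) (hD : HasFDerivAt P D x)
    (hup : ∀ z, f z ≤ f (P x) + ⟪x - P x, z - P x⟫ + C * ‖z - P x‖ ^ 2) :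
    ∃ H : F →L[ℝ] F, H.toLinearMap.IsSymmetric ∧
      HasSecondOrderExpansionAt f (x - P x) H (P x) := by
  have hL : 0 < 1 + 4 * C := by positivity
  obtain ⟨B, hBsymm, hDB, hBnorm⟩ := exists_isSymmetric_rightInverse_of_norm_le
    (hP.isSymmetric_fderiv hD) (hP.norm_le_mul_norm_fderiv hC hD hup)
  refine ⟨B - .id ℝ F, hBsymm.sub .id, Asymptotics.IsLittleO.of_bound fun ε hε => ?_⟩
  obtain ⟨ρ, hρ, hE⟩ := Metric.eventually_nhds_iff_ball.1
    ((hP.moreauEnvelope_hasSecondOrderExpansionAt hD).def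
      (show 0 < ε / (1 + 4 * C) ^ 2 by positivity))
  filter_upwards [Metric.ball_mem_nhds 0 (show 0 < ρ / (1 + 4 * C) by positivity)] with h hh
  have hEk {k : F} (hk : ‖k‖ ≤ (1 + 4 * C) * ‖h‖) :
      |moreauEnvelope f P (x + k) - moreauEnvelope f P x - ⟪x - P x, k⟫
        - halfQuadForm (.id ℝ F - D) k| ≤ ε * ‖h‖ ^ 2 := by
    have hkρ : ‖k‖ < ρ := by
      rw [mem_ball_zero_iff, lt_div_iff₀ hL] at hh
      linarith
    calc _ ≤ ε / (1 + 4 * C) ^ 2 * ‖k‖ ^ 2 := by simpa using hE k (by simpa using hkρ)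
      _ ≤ ε / (1 + 4 * C) ^ 2 * ((1 + 4 * C) * ‖h‖) ^ 2 := by gcongr
      _ = ε * ‖h‖ ^ 2 := by field_simp
  rw [Real.norm_eq_abs, Real.norm_of_nonneg (sq_nonneg _), abs_le]
  have hid (k : F) := halfQuadForm_id_sub_sub_norm_sq (hP.isSymmetric_fderiv hD) hDB k h
  have hval (k : F) := moreauEnvelope_add_inner_sub_norm_sq (f := f) P x k h
  constructor
  · have hz := hid (B h)
    rw [sub_self, halfQuadForm_zero, sub_zero] at hz
    linarith [(abs_le.1 (hEk (hBnorm h))).1, hP.moreauEnvelope_le (x + B h) (P x + h),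
      hval (B h)]
  · -- `k` is chosen so that `P (x + k) = P x + h`, where the envelope bound is an equality.
    obtain ⟨k, hPk, hk⟩ := hP.exists_apply_add_eq hC hf hup h
    have henv : moreauEnvelope f P (x + k) = f (P x + h) + (1 / 2) * ‖x + k - (P x + h)‖ ^ 2 := by
      rw [moreauEnvelope, hPk]
    have hnonneg : 0 ≤ halfQuadForm D (k - B h) :=
      mul_nonneg (by norm_num) (hP.inner_fderiv_nonneg hD _)
    linarith [(abs_le.1 (hEk hk)).2, hval k, hid k]

end IsProximalMap

/-- `w + C ‖·‖²` is convex with a subgradient at every point; the condition is stated in the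
form in which it is checked for sup-convolutions. -/
def IsSemiconvexWith (C : ℝ) (w : F → ℝ) : Prop :=
  ∀ z, ∃ g, ∀ y, w z + ⟪g, y - z⟫ - C * ‖y - z‖ ^ 2 ≤ w y

lemma IsSemiconvexWith.exists_isSubgradientAt {C : ℝ} {w : F → ℝ} (hw : IsSemiconvexWith C w)
    (z : F) : ∃ g, IsSubgradientAt (fun y => w y + C * ‖y‖ ^ 2) g z := by
  obtain ⟨g, hg⟩ := hw z
  refine ⟨g + (2 * C) • z, fun y => ?_⟩
  have hy := norm_add_sq_real z (y - z)
  rw [add_sub_cancel] at hy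
  simp only
  rw [inner_add_left, real_inner_smul_left, hy]
  linarith [hg y]

variable [FiniteDimensional ℝ F]

lemma exists_norm_lt_forall_fiber_differentiableAt {P Q : F → F} {K₁ K₂ : NNReal}
    (hP : LipschitzWith K₁ P) (hQ : LipschitzWith K₂ Q) {r : ℝ} (hr : 0 < r) :
    ∃ p, ‖p‖ < r ∧ ∀ x, Q x = p → DifferentiableAt ℝ P x := by
  borelize F
  set μ : MeasureTheory.Measure F :=
    MeasureTheory.Measure.hausdorffMeasure (Module.finrank ℝ F : ℝ)
  have hnull : μ {x | ¬ DifferentiableAt ℝ P x} = 0 := hP.ae_differentiableAt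
  have himage : μ (Q '' {x | ¬ DifferentiableAt ℝ P x}) = 0 := by
    simpa [μ, hnull] using hQ.hausdorffMeasure_image_le (d := (Module.finrank ℝ F : ℝ))
      (by positivity) {x | ¬ DifferentiableAt ℝ P x}
  by_contra! hcon
  refine (Metric.measure_ball_pos μ (0 : F) hr).ne' (MeasureTheory.measure_mono_null ?_ himage)
  intro p hp
  obtain ⟨x, hx, hxd⟩ := hcon p (by simpa using hp)
  exact ⟨x, hxd, hx⟩

lemma exists_forall_le_perturbed {w : F → ℝ} (hw : Continuous w) {z₀ : F}
    (hmax : ∀ z, w z ≤ w z₀) {a : ℝ} (ha : 0 < a) (p : F) :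
    ∃ y, ‖y - z₀‖ ≤ ‖p‖ / a ∧
      ∀ z, w z ≤ w y + ⟪p + (2 * a) • (y - z₀), z - y⟫ + a * ‖z - y‖ ^ 2 := by
  have hz₀ : z₀ ∈ Metric.closedBall z₀ (‖p‖ / a) := Metric.mem_closedBall_self (by positivity)
  obtain ⟨y, hy, hymax⟩ := (isCompact_closedBall z₀ (‖p‖ / a)).exists_isMaxOn ⟨z₀, hz₀⟩
    (f := fun z => w z - a * ‖z - z₀‖ ^ 2 - ⟪p, z - z₀⟫) (by fun_prop)
  have hglobal (z : F) : w z - a * ‖z - z₀‖ ^ 2 - ⟪p, z - z₀⟫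
      ≤ w y - a * ‖y - z₀‖ ^ 2 - ⟪p, y - z₀⟫ := by
    by_cases hz : z ∈ Metric.closedBall z₀ (‖p‖ / a)
    · exact hymax hz
    · have hy₀ : w z₀ ≤ w y - a * ‖y - z₀‖ ^ 2 - ⟪p, y - z₀⟫ := by simpa using hymax hz₀
      have hfar : ‖p‖ / a < ‖z - z₀‖ := by simpa [dist_eq_norm] using hz
      rw [div_lt_iff₀ ha] at hfar
      have hcs := (abs_le.1 (abs_real_inner_le_norm p (z - z₀))).1
      nlinarith [norm_nonneg (z - z₀), hmax z]
  refine ⟨y, by simpa [dist_eq_norm] using hy, fun z => ?_⟩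
  have hz := hglobal z
  rw [← sub_add_sub_cancel' y z₀ z, norm_add_sq_real, inner_add_right] at hz
  rw [inner_add_left, real_inner_smul_left]
  linarith

lemma IsSemiconvexWith.continuous {C : ℝ} {w : F → ℝ} (hw : IsSemiconvexWith C w) :
    Continuous w := by
  have := continuous_of_forall_exists_isSubgradientAt hw.exists_isSubgradientAt
  exact (this.sub (by fun_prop : Continuous fun y : F => C * ‖y‖ ^ 2)).congr fun y =>
    add_sub_cancel_right _ _

lemma IsSemiconvexWith.exists_hasSecondOrderExpansionAt {C a r : ℝ} {w : F → ℝ} {z₀ : F}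
    (hw : IsSemiconvexWith C w) (hC : 0 ≤ C) (hmax : ∀ z, w z ≤ w z₀) (ha : 0 < a) (hr : 0 < r) :
    ∃ p y, ‖p‖ < r ∧ ‖y - z₀‖ ≤ ‖p‖ / a ∧
      (∀ z, w z ≤ w y + ⟪p + (2 * a) • (y - z₀), z - y⟫ + a * ‖z - y‖ ^ 2) ∧
      ∃ H : F →L[ℝ] F, H.toLinearMap.IsSymmetric ∧
        HasSecondOrderExpansionAt w (p + (2 * a) • (y - z₀)) H y := by
  set f : F → ℝ := fun z => w z + C * ‖z‖ ^ 2
  obtain ⟨P, hP⟩ := exists_isProximalMap hw.exists_isSubgradientAt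
  have hPlip := hP.lipschitzWith_one
  -- `Q` recovers the touching slope `p` from the point `x` with `P x = y`.
  set Q : F → F := fun x => x - P x - (2 * C) • P x - (2 * a) • (P x - z₀)
  have hQlip := ((LipschitzWith.id.sub hPlip).sub ((lipschitzWith_smul (2 * C)).comp hPlip)).sub
    ((lipschitzWith_smul (2 * a)).comp (hPlip.sub (LipschitzWith.const z₀)))
  obtain ⟨p, hpr, hdiff⟩ := exists_norm_lt_forall_fiber_differentiableAt (Q := Q) hPlip hQlip hr
  obtain ⟨y, hy, htouch⟩ := exists_forall_le_perturbed hw.continuous hmax ha p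
  refine ⟨p, y, hpr, hy, htouch, ?_⟩
  set q : F := p + (2 * a) • (y - z₀) with hq
  have hup (z : F) : f z ≤ f y + ⟪q + (2 * C) • y, z - y⟫ + (C + a) * ‖z - y‖ ^ 2 := by
    have hz := norm_add_sq_real y (z - y)
    rw [add_sub_cancel] at hz
    simp only [f]
    rw [inner_add_left, real_inner_smul_left, hz]
    linarith [htouch z]
  have hgrad : IsSubgradientAt f (q + (2 * C) • y) y := by
    obtain ⟨g, hg⟩ := hw.exists_isSubgradientAt y
    rwa [← hg.eq_of_le_add_sq hup]
  have hPy := hP.apply_add_of_isSubgradientAt hgrad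
  have hQp : Q (y + (q + (2 * C) • y)) = p := by
    simp only [Q]
    rw [hPy, hq]
    abel
  obtain ⟨H, hH, hexp⟩ := hP.hasSecondOrderExpansionAt (add_pos_of_nonneg_of_pos hC ha)
    hw.exists_isSubgradientAt (hdiff _ hQp).hasFDerivAt
    (by rwa [hPy, add_sub_cancel_left])
  rw [hPy, add_sub_cancel_left] at hexp
  have hexp' := hexp.sub_mul_norm_sq
  rw [add_sub_cancel_right] at hexp'
  exact ⟨_, hH.sub (LinearMap.IsSymmetric.id.smul (conj_trivial _)), hexp'⟩

theorem IsSemiconvexWith.exists_small_hasSecondOrderExpansionAt {C δ : ℝ} {w : F → ℝ} {z₀ : F}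
    (hw : IsSemiconvexWith C w) (hC : 0 ≤ C) (hmax : ∀ z, w z ≤ w z₀) (hδ : 0 < δ) :
    ∃ (z p : F) (H : F →L[ℝ] F), ‖z - z₀‖ ≤ δ ∧ ‖p‖ ≤ δ ∧ H.toLinearMap.IsSymmetric ∧
      (∀ h, halfQuadForm H h ≤ δ * ‖h‖ ^ 2) ∧ HasSecondOrderExpansionAt w p H z := by
  obtain ⟨p, y, hp, hy, htouch, H, hH, hexp⟩ :=
    hw.exists_hasSecondOrderExpansionAt hC hmax hδ
      (show 0 < min (δ / 3) (δ * δ) by positivity)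
  have hp₁ := hp.trans_le (min_le_left _ _)
  have hp₂ := hp.trans_le (min_le_right _ _)
  refine ⟨y, p + (2 * δ) • (y - z₀), H, hy.trans ?_, ?_, hH, hexp.halfQuadForm_le htouch, hexp⟩
  · rw [div_le_iff₀ hδ]
    exact hp₂.le
  · rw [le_div_iff₀ hδ] at hy
    have := norm_add_le p ((2 * δ) • (y - z₀))
    rw [norm_smul, Real.norm_eq_abs, abs_of_pos (by positivity)] at this
    linarith

end Alexandrov

/-! ### Sup-convolutions and the theorem on sums -/

section ExpansionCalculus

variable {F G : Type*} [NormedAddCommGroup F] [InnerProductSpace ℝ F]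
  [NormedAddCommGroup G] [InnerProductSpace ℝ G]

lemma HasSecondOrderExpansionAt.add {f g : F → ℝ} {p q x : F} {H K : F →L[ℝ] F}
    (hf : HasSecondOrderExpansionAt f p H x) (hg : HasSecondOrderExpansionAt g q K x) :
    HasSecondOrderExpansionAt (fun y => f y + g y) (p + q) (H + K) x := by
  refine (Asymptotics.IsLittleO.add hf hg).congr_left fun h => ?_
  rw [halfQuadForm_add_clm, inner_add_left]
  ring

lemma HasSecondOrderExpansionAt.sub {f g : F → ℝ} {p q x : F} {H K : F →L[ℝ] F}
    (hf : HasSecondOrderExpansionAt f p H x) (hg : HasSecondOrderExpansionAt g q K x) :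
    HasSecondOrderExpansionAt (fun y => f y - g y) (p - q) (H - K) x := by
  refine (Asymptotics.IsLittleO.sub hf hg).congr_left fun h => ?_
  rw [halfQuadForm_sub_clm, inner_sub_left]
  ring

lemma hasSecondOrderExpansionAt_halfQuadForm {Q : F →L[ℝ] F} (hQ : Q.toLinearMap.IsSymmetric)
    (x : F) : HasSecondOrderExpansionAt (halfQuadForm Q) (Q x) Q x :=
  (Asymptotics.isLittleO_zero _ _).congr_left fun h => by
    rw [halfQuadForm_add hQ]
    ring

lemma HasSecondOrderExpansionAt.halfQuadForm_eq {f : F → ℝ} {p x : F} {H K : F →L[ℝ] F}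
    (hH : HasSecondOrderExpansionAt f p H x) (hK : HasSecondOrderExpansionAt f p K x) (u : F) :
    halfQuadForm H u = halfQuadForm K u := by
  have hle {H K : F →L[ℝ] F} (hH : HasSecondOrderExpansionAt f p H x)
      (hK : HasSecondOrderExpansionAt f p K x) : halfQuadForm H u ≤ halfQuadForm K u := by
    have := (hH.sub hK).halfQuadForm_le (a := 0) (fun z => by simp) u
    rw [halfQuadForm_sub_clm] at this
    linarith
  exact le_antisymm (hle hH hK) (hle hK hH)

lemma HasSecondOrderExpansionAt.of_forall_sub_eq [CompleteSpace F] [CompleteSpace G] {f : F → ℝ}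
    {g : G → ℝ} {p x : F} {H : F →L[ℝ] F} {y : G} (hf : HasSecondOrderExpansionAt f p H x)
    (i : G →L[ℝ] F) (hgf : ∀ h, g (y + h) - g y = f (x + i h) - f x) :
    HasSecondOrderExpansionAt g (i.adjoint p) (i.adjoint ∘L H ∘L i) y := by
  have hi : Tendsto i (𝓝 0) (𝓝 0) := by simpa using i.continuous.tendsto 0
  refine ((hf.comp_tendsto hi).congr_left fun h => ?_).trans_isBigO
    ((Asymptotics.IsBigO.norm_norm (i.isBigO_id (𝓝 0))).pow 2)
  simp only [Function.comp_apply, hgf, halfQuadForm, ContinuousLinearMap.comp_apply,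
    ContinuousLinearMap.adjoint_inner_left]

end ExpansionCalculus

section SumOfSemiconvex

variable {E₁ E₂ : Type*} [NormedAddCommGroup E₁] [InnerProductSpace ℝ E₁]
  [NormedAddCommGroup E₂] [InnerProductSpace ℝ E₂]

lemma adjoint_fstL_apply [CompleteSpace E₁] [CompleteSpace E₂] (x : E₁) :
    (WithLp.fstL 2 ℝ E₁ E₂).adjoint x = WithLp.toLp 2 (x, 0) :=
  ext_inner_right ℝ fun y => by
    simp [ContinuousLinearMap.adjoint_inner_left, WithLp.prod_inner_apply]

lemma adjoint_sndL_apply [CompleteSpace E₁] [CompleteSpace E₂] (x : E₂) :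
    (WithLp.sndL 2 ℝ E₁ E₂).adjoint x = WithLp.toLp 2 (0, x) :=
  ext_inner_right ℝ fun y => by
    simp [ContinuousLinearMap.adjoint_inner_left, WithLp.prod_inner_apply]

lemma IsSemiconvexWith.add_sub_halfQuadForm {A : E₁ → ℝ} {B : E₂ → ℝ} {C₁ C₂ : ℝ}
    (hA : IsSemiconvexWith C₁ A) (hB : IsSemiconvexWith C₂ B) (hC₁ : 0 ≤ C₁) (hC₂ : 0 ≤ C₂)
    {Q : WithLp 2 (E₁ × E₂) →L[ℝ] WithLp 2 (E₁ × E₂)}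
    (hQ : Q.toLinearMap.IsSymmetric) :
    IsSemiconvexWith (C₁ + C₂ + ‖Q‖) fun z : WithLp 2 (E₁ × E₂) =>
      A z.fst + B z.snd - halfQuadForm Q z := by
  intro z
  obtain ⟨g₁, hg₁⟩ := hA z.fst
  obtain ⟨g₂, hg₂⟩ := hB z.snd
  refine ⟨WithLp.toLp 2 (g₁, g₂) - Q z, fun y => ?_⟩
  have hy₁ := hg₁ y.fst
  have hy₂ := hg₂ y.snd
  rw [← WithLp.sub_fst] at hy₁
  rw [← WithLp.sub_snd] at hy₂
  have hQy := halfQuadForm_add hQ z (y - z)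
  rw [add_sub_cancel] at hQy
  have hQle := halfQuadForm_le_norm_mul_sq Q (y - z)
  have hinner : ⟪WithLp.toLp 2 (g₁, g₂), y - z⟫ = ⟪g₁, (y - z).fst⟫ + ⟪g₂, (y - z).snd⟫ :=
    WithLp.prod_inner_apply _ _
  have hcross₁ : C₁ * ‖(y - z).fst‖ ^ 2 ≤ C₁ * ‖y - z‖ ^ 2 := by
    gcongr
    exact WithLp.norm_fst_le _ _
  have hcross₂ : C₂ * ‖(y - z).snd‖ ^ 2 ≤ C₂ * ‖y - z‖ ^ 2 := by
    gcongr
    exact WithLp.norm_snd_le _ _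
  simp only
  rw [inner_sub_left, hinner, hQy]
  linarith

lemma HasSecondOrderExpansionAt.exists_fst_snd [CompleteSpace E₁] [CompleteSpace E₂]
    {A : E₁ → ℝ} {B : E₂ → ℝ} {p z : WithLp 2 (E₁ × E₂)}
    {H : WithLp 2 (E₁ × E₂) →L[ℝ] WithLp 2 (E₁ × E₂)}
    (hH : H.toLinearMap.IsSymmetric)
    (hAB : HasSecondOrderExpansionAt
      (fun z : WithLp 2 (E₁ × E₂) => A z.fst + B z.snd) p H z) :
    ∃ (M : E₁ →L[ℝ] E₁) (N : E₂ →L[ℝ] E₂), M.toLinearMap.IsSymmetric ∧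
      N.toLinearMap.IsSymmetric ∧ HasSecondOrderExpansionAt A p.fst M z.fst ∧
      HasSecondOrderExpansionAt B p.snd N z.snd ∧
      ∀ h : WithLp 2 (E₁ × E₂),
        halfQuadForm M h.fst + halfQuadForm N h.snd = halfQuadForm H h := by
  set π₁ := WithLp.fstL 2 ℝ E₁ E₂
  set π₂ := WithLp.sndL 2 ℝ E₁ E₂
  have hA : HasSecondOrderExpansionAt A p.fst (π₁ ∘L H ∘L π₁.adjoint) z.fst := by
    simpa [π₁] using hAB.of_forall_sub_eq π₁.adjoint (g := A) (y := z.fst) fun h => by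
      simp [π₁, adjoint_fstL_apply]
  have hB : HasSecondOrderExpansionAt B p.snd (π₂ ∘L H ∘L π₂.adjoint) z.snd := by
    simpa [π₂] using hAB.of_forall_sub_eq π₂.adjoint (g := B) (y := z.snd) fun h => by
      simp [π₂, adjoint_sndL_apply]
  have hH' := ContinuousLinearMap.isSelfAdjoint_iff_isSymmetric.2 hH
  refine ⟨_, _, (hH'.conj_adjoint π₁).isSymmetric, (hH'.conj_adjoint π₂).isSymmetric,
    hA, hB, fun h => ?_⟩
  have hsum := (hA.of_forall_sub_eq (g := fun z => A z.fst) (y := z) π₁ fun h => by simp [π₁]).add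
    (hB.of_forall_sub_eq (g := fun z => B z.snd) (y := z) π₂ fun h => by simp [π₂])
  have hp : π₁.adjoint p.fst + π₂.adjoint p.snd = p := by
    rw [adjoint_fstL_apply, adjoint_sndL_apply, ← WithLp.toLp_add,
      Prod.mk_add_mk, add_zero, zero_add]
    rfl
  rw [hp] at hsum
  rw [← hsum.halfQuadForm_eq hAB h, halfQuadForm_add_clm]
  simp [halfQuadForm, ContinuousLinearMap.adjoint_inner_left, π₁, π₂]

theorem IsSemiconvexWith.exists_hasSecondOrderExpansionAt_add [FiniteDimensional ℝ E₁]
    [FiniteDimensional ℝ E₂] {A : E₁ → ℝ} {B : E₂ → ℝ} {C₁ C₂ δ : ℝ}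
    (hA : IsSemiconvexWith C₁ A) (hB : IsSemiconvexWith C₂ B) (hC₁ : 0 ≤ C₁) (hC₂ : 0 ≤ C₂)
    {Q : WithLp 2 (E₁ × E₂) →L[ℝ] WithLp 2 (E₁ × E₂)}
    (hQ : Q.toLinearMap.IsSymmetric)
    {z₀ : WithLp 2 (E₁ × E₂)}
    (hmax : ∀ z : WithLp 2 (E₁ × E₂), A z.fst + B z.snd - halfQuadForm Q z ≤
      A z₀.fst + B z₀.snd - halfQuadForm Q z₀) (hδ : 0 < δ) :
    ∃ (z p : WithLp 2 (E₁ × E₂)) (M : E₁ →L[ℝ] E₁) (N : E₂ →L[ℝ] E₂),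
      ‖z - z₀‖ ≤ δ ∧ ‖p‖ ≤ δ ∧
      M.toLinearMap.IsSymmetric ∧ N.toLinearMap.IsSymmetric ∧
      HasSecondOrderExpansionAt A (p + Q z).fst M z.fst ∧
      HasSecondOrderExpansionAt B (p + Q z).snd N z.snd ∧
      ∀ h : WithLp 2 (E₁ × E₂),
        halfQuadForm M h.fst + halfQuadForm N h.snd ≤ halfQuadForm Q h + δ * ‖h‖ ^ 2 := by
  obtain ⟨z, p, H, hz, hp, hH, hle, hexp⟩ :=
    (hA.add_sub_halfQuadForm hB hC₁ hC₂ hQ).exists_small_hasSecondOrderExpansionAt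
      (by positivity) hmax hδ
  have hAB := hexp.add (hasSecondOrderExpansionAt_halfQuadForm hQ z)
  simp only [sub_add_cancel] at hAB
  obtain ⟨M, N, hM, hN, hMexp, hNexp, hMN⟩ := hAB.exists_fst_snd (hH.add hQ)
  refine ⟨z, p, M, N, hz, hp, hM, hN, hMexp, hNexp, fun h => ?_⟩
  rw [hMN, halfQuadForm_add_clm]
  linarith [hle h]

end SumOfSemiconvex

section SupConvolution

variable {G : Type*} [NormedAddCommGroup G] [InnerProductSpace ℝ G]

/-- `(p, M)` is a second-order superjet of `u` at `x` relative to `D`. -/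
def IsSuperjetWithinAt (u : G → ℝ) (D : Set G) (p : G) (M : G →L[ℝ] G) (x : G) : Prop :=
  ∀ ε > 0, ∀ᶠ y in 𝓝[D] x,
    u y ≤ u x + ⟪p, y - x⟫ + halfQuadForm M (y - x) + ε * ‖y - x‖ ^ 2

/-- `A ξ = sup_{y ∈ D} (u y - ½ ⟪S (y - ξ), y - ξ⟫)` is the sup-convolution of `u` over `D`, with
the supremum attained at `X ξ`. -/
structure IsSupConvolution (D : Set G) (u : G → ℝ) (S : G →L[ℝ] G) (A : G → ℝ) (X : G → G) :
    Prop where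
  mem (ξ : G) : X ξ ∈ D
  le (ξ : G) {y : G} (hy : y ∈ D) : u y - halfQuadForm S (y - ξ) ≤ A ξ
  eq (ξ : G) : A ξ = u (X ξ) - halfQuadForm S (X ξ - ξ)

lemma exists_isSupConvolution {D : Set G} {u : G → ℝ} {S : G →L[ℝ] G}
    (h : ∀ ξ, ∃ x ∈ D, IsMaxOn (fun y => u y - halfQuadForm S (y - ξ)) D x) :
    ∃ A X, IsSupConvolution D u S A X := by
  choose X hXD hX using h
  exact ⟨_, X, hXD, fun ξ _ hy => hX ξ hy, fun _ => rfl⟩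

namespace IsSupConvolution

variable {D : Set G} {u : G → ℝ} {S : G →L[ℝ] G} {A : G → ℝ} {X : G → G}

lemma add_inner_sub_halfQuadForm_le (hA : IsSupConvolution D u S A X)
    (hS : S.toLinearMap.IsSymmetric) (ξ h : G) :
    A ξ + ⟪S (X ξ - ξ), h⟫ - halfQuadForm S h ≤ A (ξ + h) := by
  have hle := hA.le (ξ + h) (hA.mem ξ)
  rw [← sub_sub, halfQuadForm_sub hS] at hle
  linarith [hA.eq ξ]

lemma isSemiconvexWith (hA : IsSupConvolution D u S A X) (hS : S.toLinearMap.IsSymmetric) :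
    IsSemiconvexWith ‖S‖ A := fun ξ => ⟨S (X ξ - ξ), fun η => by
  have hle := hA.add_inner_sub_halfQuadForm_le hS ξ (η - ξ)
  rw [add_sub_cancel] at hle
  linarith [halfQuadForm_le_norm_mul_sq S (η - ξ)]⟩

lemma gradient_eq {p ξ : G} {M : G →L[ℝ] G} (hA : IsSupConvolution D u S A X)
    (hS : S.toLinearMap.IsSymmetric) (hexp : HasSecondOrderExpansionAt A p M ξ) :
    p = S (X ξ - ξ) := by
  refine (sub_eq_zero.1 (eq_zero_of_eventually_inner_le_mul_norm_sq
    (c := ‖S‖ + ‖M‖ + 1) ?_)).symm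
  filter_upwards [hexp.def one_pos] with h hh
  rw [Real.norm_of_nonneg (sq_nonneg ‖h‖), Real.norm_eq_abs] at hh
  rw [inner_sub_left]
  linarith [(abs_le.1 hh).2, hA.add_inner_sub_halfQuadForm_le hS ξ h,
    halfQuadForm_le_norm_mul_sq S h, halfQuadForm_le_norm_mul_sq M h]

lemma isSuperjetWithinAt {p ξ : G} {M : G →L[ℝ] G} (hA : IsSupConvolution D u S A X)
    (hexp : HasSecondOrderExpansionAt A p M ξ) : IsSuperjetWithinAt u D p M (X ξ) := by
  intro ε hε
  have hlim : Tendsto (fun y => y - X ξ) (𝓝[D] X ξ) (𝓝 0) := by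
    have : ContinuousAt (fun y => y - X ξ) (X ξ) := by fun_prop
    simpa [ContinuousAt] using this.mono_left nhdsWithin_le_nhds
  filter_upwards [hlim.eventually (hexp.def hε), self_mem_nhdsWithin] with y hy hyD
  rw [Real.norm_of_nonneg (sq_nonneg ‖y - X ξ‖), Real.norm_eq_abs] at hy
  have hle := hA.le (ξ + (y - X ξ)) hyD
  rw [show y - (ξ + (y - X ξ)) = X ξ - ξ by abel] at hle
  linarith [(abs_le.1 hy).2, hA.eq ξ]

end IsSupConvolution

end SupConvolution

section TheoremOnSums

variable {E₁ E₂ : Type*} [NormedAddCommGroup E₁] [InnerProductSpace ℝ E₁] [FiniteDimensional ℝ E₁]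
  [NormedAddCommGroup E₂] [InnerProductSpace ℝ E₂] [FiniteDimensional ℝ E₂]

theorem exists_isSuperjetWithinAt_of_isSupConvolution {D₁ : Set E₁} {D₂ : Set E₂} {u : E₁ → ℝ}
    {v : E₂ → ℝ} {S₁ : E₁ →L[ℝ] E₁} {S₂ : E₂ →L[ℝ] E₂} {A : E₁ → ℝ} {B : E₂ → ℝ} {X : E₁ → E₁}
    {Y : E₂ → E₂} (hA : IsSupConvolution D₁ u S₁ A X) (hB : IsSupConvolution D₂ v S₂ B Y)
    (hS₁ : S₁.toLinearMap.IsSymmetric) (hS₂ : S₂.toLinearMap.IsSymmetric)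
    {Q : WithLp 2 (E₁ × E₂) →L[ℝ] WithLp 2 (E₁ × E₂)}
    (hQ : Q.toLinearMap.IsSymmetric)
    {z₀ : WithLp 2 (E₁ × E₂)}
    (hmax : ∀ z : WithLp 2 (E₁ × E₂), A z.fst + B z.snd - halfQuadForm Q z ≤
      A z₀.fst + B z₀.snd - halfQuadForm Q z₀) {δ : ℝ} (hδ : 0 < δ) :
    ∃ (z : WithLp 2 (E₁ × E₂)) (M : E₁ →L[ℝ] E₁) (N : E₂ →L[ℝ] E₂),
      M.toLinearMap.IsSymmetric ∧ N.toLinearMap.IsSymmetric ∧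
      A z₀.fst + B z₀.snd - halfQuadForm Q z₀ - δ ≤ A z.fst + B z.snd - halfQuadForm Q z ∧
      ‖S₁ (X z.fst - z.fst) - (Q z).fst‖ ≤ δ ∧ ‖S₂ (Y z.snd - z.snd) - (Q z).snd‖ ≤ δ ∧
      (∀ h : WithLp 2 (E₁ × E₂),
        halfQuadForm M h.fst + halfQuadForm N h.snd ≤ halfQuadForm Q h + δ * ‖h‖ ^ 2) ∧
      IsSuperjetWithinAt u D₁ (S₁ (X z.fst - z.fst)) M (X z.fst) ∧
      IsSuperjetWithinAt v D₂ (S₂ (Y z.snd - z.snd)) N (Y z.snd) := by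
  have hAsc := hA.isSemiconvexWith hS₁
  have hBsc := hB.isSemiconvexWith hS₂
  have hcont := (hAsc.add_sub_halfQuadForm hBsc (norm_nonneg _) (norm_nonneg _) hQ).continuous
  obtain ⟨ρ, hρ, hnear⟩ := Metric.continuousAt_iff.1 (hcont.continuousAt (x := z₀)) δ hδ
  obtain ⟨z, p, M, N, hz, hp, hM, hN, hMexp, hNexp, hMN⟩ :=
    hAsc.exists_hasSecondOrderExpansionAt_add hBsc (norm_nonneg _) (norm_nonneg _) hQ hmax
      (show 0 < min (ρ / 2) δ by positivity)
  have hpδ := hp.trans (min_le_right _ _)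
  have hMgrad := hA.gradient_eq hS₁ hMexp
  have hNgrad := hB.gradient_eq hS₂ hNexp
  refine ⟨z, M, N, hM, hN, ?_, ?_, ?_, fun h => (hMN h).trans ?_, ?_, ?_⟩
  · have hclose := hnear (x := z) (by
      rw [dist_eq_norm]
      linarith [hz.trans (min_le_left _ _)])
    linarith [(abs_lt.1 hclose).1]
  · rw [← hMgrad, WithLp.add_fst, add_sub_cancel_right]
    exact (WithLp.norm_fst_le _ p).trans hpδ
  · rw [← hNgrad, WithLp.add_snd, add_sub_cancel_right]
    exact (WithLp.norm_snd_le _ p).trans hpδ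
  · gcongr
    exact min_le_right _ _
  · exact hMgrad ▸ hA.isSuperjetWithinAt hMexp
  · exact hNgrad ▸ hB.isSuperjetWithinAt hNexp

end TheoremOnSums

/-! ### Space-time and quadratic test functions -/

section SpaceTimeGeometry

/-- Space-time `ℝ × E` with its Euclidean structure. Its points are written `toLp 2 (t, x)`. -/
abbrev SpaceTime (E : Type*) := WithLp 2 (ℝ × E)

/-- The closed time strip `[0, T] × E`. -/
def timeStrip (T : ℝ) (E : Type*) : Set (SpaceTime E) := {X | X.fst ∈ Icc 0 T}

lemma norm_sq_spaceTime {E : Type*} [NormedAddCommGroup E] (X : SpaceTime E) :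
    ‖X‖ ^ 2 = X.fst ^ 2 + ‖X.snd‖ ^ 2 := by
  rw [WithLp.prod_norm_sq_eq_of_L2, Real.norm_eq_abs, sq_abs]

variable {E : Type*} [NormedAddCommGroup E] [InnerProductSpace ℝ E]

lemma inner_spaceTime (X Y : SpaceTime E) : ⟪X, Y⟫ = X.fst * Y.fst + ⟪X.snd, Y.snd⟫ := by
  rw [WithLp.prod_inner_apply]
  simp [mul_comm]

/-- The value at a jet `(p, M)` of the parabolic operator with drift `b` and diffusion
matrix `∑ k, s k ⊗ s k`; on the jet of `φ` it is `∂ₜφ + Lφ`. -/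
def parabolicSymbol {ι : Type*} [Fintype ι] (b : E) (s : ι → E) (p : SpaceTime E)
    (M : SpaceTime E →L[ℝ] SpaceTime E) : ℝ :=
  p.fst + ⟪b, p.snd⟫ + ∑ k, halfQuadForm M (WithLp.toLp 2 (0, s k))

variable {ι : Type*} [Fintype ι]

lemma parabolicSymbol_neg (b : E) (s : ι → E) (p : SpaceTime E)
    (M : SpaceTime E →L[ℝ] SpaceTime E) :
    parabolicSymbol b s (-p) (-M) = -parabolicSymbol b s p M := by
  simp only [parabolicSymbol, halfQuadForm, WithLp.neg_fst, WithLp.neg_snd, inner_neg_right,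
    _root_.neg_apply, inner_neg_left, mul_neg, Finset.sum_neg_distrib]
  ring

lemma parabolicSymbol_add_smul_id (b : E) (s : ι → E) (p : SpaceTime E)
    (M : SpaceTime E →L[ℝ] SpaceTime E) (a : ℝ) :
    parabolicSymbol b s p (M + a • .id ℝ _) =
      parabolicSymbol b s p M + a * ∑ k, (1 / 2) * ‖s k‖ ^ 2 := by
  simp only [parabolicSymbol, halfQuadForm_add_clm, halfQuadForm_smul_clm, halfQuadForm_id,
    norm_sq_spaceTime, Finset.sum_add_distrib, Finset.mul_sum]
  simp [add_assoc]

end SpaceTimeGeometry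

section QuadraticTestFunction

/-- The quadratic polynomial with jet `(p, M)` at `X`, used as a test function. -/
def quadTest (p : SpaceTime (EucSp n)) (M : SpaceTime (EucSp n) →L[ℝ] SpaceTime (EucSp n))
    (X : SpaceTime (EucSp n)) (t : ℝ) (x : EucSp n) : ℝ :=
  ⟪p, WithLp.toLp 2 (t, x) - X⟫ + halfQuadForm M (WithLp.toLp 2 (t, x) - X)

/-- The column `k` of a matrix, as a Euclidean vector. -/
def euclideanCol (A : Matrix (Fin n) (Fin d) ℝ) (k : Fin d) : EucSp n := WithLp.toLp 2 (A.col k)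

variable {p : SpaceTime (EucSp n)} {M : SpaceTime (EucSp n) →L[ℝ] SpaceTime (EucSp n)}

lemma quadTest_neg (X : SpaceTime (EucSp n)) (t : ℝ) (x : EucSp n) :
    quadTest (-p) (-M) X t x = -quadTest p M X t x := by
  simp only [quadTest, halfQuadForm, inner_neg_left, _root_.neg_apply]
  ring

lemma quadTest_self (X : SpaceTime (EucSp n)) : quadTest p M X X.fst X.snd = 0 := by
  simp [quadTest, halfQuadForm, show WithLp.toLp 2 (X.fst, X.snd) = X from rfl]

lemma hasFDerivAt_quadTest (hM : M.toLinearMap.IsSymmetric) (X Z : SpaceTime (EucSp n)) :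
    HasFDerivAt (fun Z : SpaceTime (EucSp n) => quadTest p M X Z.fst Z.snd)
      (innerSL ℝ (p + M (Z - X))) Z := by
  have hsub := (hasFDerivAt_id (𝕜 := ℝ) Z).sub_const X
  rw [map_add]
  exact ((innerSL ℝ p).hasFDerivAt.comp Z hsub).add ((hasFDerivAt_halfQuadForm hM _).comp Z hsub)

lemma hasDerivAt_quadTest (hM : M.toLinearMap.IsSymmetric) (X : SpaceTime (EucSp n)) (t : ℝ)
    (x : EucSp n) :
    HasDerivAt (fun s => quadTest p M X s x) (p + M (WithLp.toLp 2 (t, x) - X)).fst t := by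
  have hline : HasDerivAt (fun s : ℝ => (WithLp.toLp 2 (s, x) : SpaceTime (EucSp n)))
      (WithLp.toLp 2 (1, 0)) t :=
    (WithLp.prodContinuousLinearEquiv 2 ℝ ℝ (EucSp n)).symm.hasFDerivAt.comp_hasDerivAt t
      ((hasDerivAt_id t).prodMk (hasDerivAt_const t x))
  refine ((hasFDerivAt_quadTest hM X _).comp_hasDerivAt t hline).congr_deriv ?_
  simp

lemma hasGradientAt_quadTest (hM : M.toLinearMap.IsSymmetric) (X : SpaceTime (EucSp n)) (t : ℝ)
    (x : EucSp n) :
    HasGradientAt (fun y => quadTest p M X t y) (p + M (WithLp.toLp 2 (t, x) - X)).snd x := by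
  have hslice : HasFDerivAt (fun y : EucSp n => (WithLp.toLp 2 (t, y) : SpaceTime (EucSp n)))
      _ x :=
    (WithLp.prodContinuousLinearEquiv 2 ℝ ℝ (EucSp n)).symm.hasFDerivAt.comp x
      ((hasFDerivAt_const t x).prodMk (hasFDerivAt_id x))
  rw [hasGradientAt_iff_hasFDerivAt]
  refine ((hasFDerivAt_quadTest hM X _).comp x hslice).congr_fderiv ?_
  ext v
  simp

lemma tderiv_quadTest (hM : M.toLinearMap.IsSymmetric)
    (X : SpaceTime (EucSp n)) (t : ℝ) (x : EucSp n) :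
    tderiv (quadTest p M X) t x = (p + M (WithLp.toLp 2 (t, x) - X)).fst :=
  (hasDerivAt_quadTest hM X t x).deriv

lemma xgrad_quadTest (hM : M.toLinearMap.IsSymmetric)
    (X : SpaceTime (EucSp n)) (t : ℝ) (x : EucSp n) :
    xgrad (quadTest p M X) t x = (p + M (WithLp.toLp 2 (t, x) - X)).snd :=
  (hasGradientAt_quadTest hM X t x).gradient

lemma hasFDerivAt_xgrad_quadTest
    (hM : M.toLinearMap.IsSymmetric)
    (X : SpaceTime (EucSp n)) (t : ℝ) (x : EucSp n) :
    HasFDerivAt (fun y => xgrad (quadTest p M X) t y)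
      (WithLp.sndL 2 ℝ ℝ (EucSp n) ∘L M ∘L (WithLp.sndL 2 ℝ ℝ (EucSp n)).adjoint) x := by
  have hgrad : (fun y => xgrad (quadTest p M X) t y) = fun y =>
      (WithLp.sndL 2 ℝ ℝ (EucSp n) ∘L M ∘L (WithLp.sndL 2 ℝ ℝ (EucSp n)).adjoint) y +
        (p + M (WithLp.toLp 2 (t, 0) - X)).snd := by
    funext y
    have hsplit : (WithLp.toLp 2 (t, y) : SpaceTime (EucSp n)) - X =
        WithLp.toLp 2 (0, y) + (WithLp.toLp 2 (t, 0) - X) := by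
      rw [← add_sub_assoc, ← WithLp.toLp_add]
      simp
    simp only [xgrad_quadTest hM, hsplit, ContinuousLinearMap.comp_apply, adjoint_sndL_apply,
      WithLp.sndL_apply, map_add, WithLp.add_snd]
    abel
  rw [hgrad]
  exact (ContinuousLinearMap.hasFDerivAt _).add_const _

lemma xhess_quadTest (hM : M.toLinearMap.IsSymmetric)
    (X : SpaceTime (EucSp n)) (t : ℝ) (x : EucSp n) :
    xhess (quadTest p M X) t x =
      Matrix.of fun i j => (M (WithLp.toLp 2 (0, EuclideanSpace.single j 1))).snd i := by
  ext i j
  simp only [xhess, Matrix.of_apply, (hasFDerivAt_xgrad_quadTest hM X t x).fderiv,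
    ContinuousLinearMap.comp_apply, adjoint_sndL_apply, WithLp.sndL_apply]

lemma isC12On_quadTest (hM : M.toLinearMap.IsSymmetric)
    (X : SpaceTime (EucSp n)) (s : Set (ℝ × EucSp n)) : IsC12On (quadTest p M X) s := by
  have hsub : Continuous fun q : ℝ × EucSp n => (WithLp.toLp 2 (q.1, q.2) : SpaceTime _) - X :=
    (WithLp.prod_continuous_toLp 2 ℝ (EucSp n)).sub continuous_const
  have hjet := (M.continuous.comp hsub).const_add p
  refine ⟨Continuous.continuousOn ?_, fun q _ => (hasDerivAt_quadTest hM X _ _).differentiableAt,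
    Continuous.continuousOn ?_, fun q _ => (hasGradientAt_quadTest hM X _ _).differentiableAt,
    fun q _ => (hasFDerivAt_xgrad_quadTest hM X _ _).differentiableAt,
    Continuous.continuousOn ?_, Continuous.continuousOn ?_⟩
  · unfold quadTest halfQuadForm
    fun_prop
  · simp only [tderiv_quadTest hM]
    exact (WithLp.fstL 2 ℝ ℝ (EucSp n)).continuous.comp hjet
  · simp only [xgrad_quadTest hM]
    exact (WithLp.sndL 2 ℝ ℝ (EucSp n)).continuous.comp hjet
  · simp only [xhess_quadTest hM]
    exact continuous_const

lemma trace_mul_transpose_mul_eq_sum_inner (A : Matrix (Fin n) (Fin d) ℝ)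
    (L : EucSp n →L[ℝ] EucSp n) :
    (A * Aᵀ * Matrix.of fun i j => L (EuclideanSpace.single j 1) i).trace =
      ∑ k, ⟪L (euclideanCol A k), euclideanCol A k⟫ := by
  have hL (v : EucSp n) (i : Fin n) : L v i = ∑ j, v j * L (EuclideanSpace.single j 1) i := by
    conv_lhs => rw [← (EuclideanSpace.basisFun (Fin n) ℝ).sum_repr v]
    simp [map_sum, map_smul]
  rw [Matrix.trace_mul_comm, ← Matrix.mul_assoc, Matrix.trace_mul_comm]
  simp only [Matrix.trace, Matrix.diag_apply, Matrix.mul_apply, Matrix.transpose_apply,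
    Matrix.of_apply, PiLp.inner_apply, RCLike.inner_apply, conj_trivial, Finset.mul_sum]
  refine Finset.sum_congr rfl fun k _ => Finset.sum_congr rfl fun i _ => ?_
  rw [hL, Finset.mul_sum]
  refine Finset.sum_congr rfl fun j _ => ?_
  simp only [euclideanCol, Matrix.col_apply]
  ring

lemma tderiv_add_Lop_quadTest (b : ℝ → EucSp n → EucSp n)
    (σ : ℝ → EucSp n → Matrix (Fin n) (Fin d) ℝ)
    (hM : M.toLinearMap.IsSymmetric)
    (X : SpaceTime (EucSp n)) :
    tderiv (quadTest p M X) X.fst X.snd + Lop b σ (quadTest p M X) X.fst X.snd =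
      parabolicSymbol (b X.fst X.snd) (euclideanCol (σ X.fst X.snd)) p M := by
  have htrace := trace_mul_transpose_mul_eq_sum_inner (σ X.fst X.snd)
    (WithLp.sndL 2 ℝ ℝ (EucSp n) ∘L M ∘L (WithLp.sndL 2 ℝ ℝ (EucSp n)).adjoint)
  simp only [ContinuousLinearMap.comp_apply, adjoint_sndL_apply, WithLp.sndL_apply] at htrace
  rw [Lop, tderiv_quadTest hM, xgrad_quadTest hM, xhess_quadTest hM,
    show WithLp.toLp 2 (X.fst, X.snd) - X = 0 from sub_self X, map_zero, add_zero, ← add_assoc,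
    htrace]
  simp [parabolicSymbol, halfQuadForm, Finset.mul_sum]

end QuadraticTestFunction

/-! ### Jets of viscosity sub- and supersolutions -/

section ViscosityJets

variable {T : ℝ} {b : ℝ → EucSp n → EucSp n} {σ : ℝ → EucSp n → Matrix (Fin n) (Fin d) ℝ}
  {f : ℝ → EucSp n → ℝ} {g : EucSp n → ℝ} {K : Set (EucSp n)} {c : ℝ → EucSp n → EucSp n → ℝ}
  {U V : ℝ → EucSp n → ℝ} {X p : SpaceTime (EucSp n)}
  {M : SpaceTime (EucSp n) →L[ℝ] SpaceTime (EucSp n)}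

lemma nonneg_of_forall_pos_nonneg_add_mul {a q : ℝ} (h : ∀ ε > 0, 0 ≤ a + ε * q) : 0 ≤ a := by
  have hlim : Tendsto (fun ε => a + ε * q) (𝓝[>] 0) (𝓝 (a + 0 * q)) :=
    (Continuous.tendsto (by fun_prop) 0).mono_left nhdsWithin_le_nhds
  rw [zero_mul, add_zero] at hlim
  exact ge_of_tendsto hlim (eventually_mem_nhdsWithin.mono h)

lemma isSymmetric_add_smul_id {F : Type*} [NormedAddCommGroup F] [InnerProductSpace ℝ F]
    {S : F →L[ℝ] F} (hS : S.toLinearMap.IsSymmetric) (a : ℝ) :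
    (S + a • .id ℝ F).toLinearMap.IsSymmetric :=
  hS.add (LinearMap.IsSymmetric.id.smul (conj_trivial a))

lemma IsSuperjetWithinAt.isLocalMaxOn_sub_quadTest
    (hJ : IsSuperjetWithinAt (fun Y => U Y.fst Y.snd) (timeStrip T (EucSp n)) p M X)
    {ε : ℝ} (hε : 0 < ε) :
    IsLocalMaxOn (fun q : ℝ × EucSp n =>
      U q.1 q.2 - quadTest p (M + ε • .id ℝ _) X q.1 q.2) (pdom T n) (X.fst, X.snd) := by
  have hpoint : Tendsto (fun q : ℝ × EucSp n => (WithLp.toLp 2 q : SpaceTime _))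
      (𝓝[pdom T n] (X.fst, X.snd)) (𝓝[timeStrip T (EucSp n)] X) :=
    tendsto_nhdsWithin_iff.2 ⟨(WithLp.prod_continuous_toLp 2 ℝ _).continuousWithinAt,
      eventually_mem_nhdsWithin.mono fun q hq => Ico_subset_Icc_self hq.1⟩
  filter_upwards [hpoint.eventually (hJ (ε / 2) (half_pos hε))] with q hq
  simp only [WithLp.toLp_fst, WithLp.toLp_snd] at hq
  rw [quadTest_self, quadTest, halfQuadForm_add_clm, halfQuadForm_smul_clm, halfQuadForm_id]
  linarith

theorem IsSubHJB.nonneg_or_le_Mop (hU : IsSubHJB T b σ f g K c U)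
    (hM : M.toLinearMap.IsSymmetric)
    (hX : X.fst ∈ Ico 0 T)
    (hJ : IsSuperjetWithinAt (fun Y => U Y.fst Y.snd) (timeStrip T (EucSp n)) p M X) :
    0 ≤ parabolicSymbol (b X.fst X.snd) (euclideanCol (σ X.fst X.snd)) p M + f X.fst X.snd ∨
      U X.fst X.snd ≤ Mop K c U X.fst X.snd := by
  refine or_iff_not_imp_right.2 fun hMop => nonneg_of_forall_pos_nonneg_add_mul
    (q := ∑ k, (1 / 2) * ‖euclideanCol (σ X.fst X.snd) k‖ ^ 2) fun ε hε => ?_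
  have hMε := isSymmetric_add_smul_id hM ε
  have hvisc := hU.1 X.fst X.snd ⟨hX, mem_univ _⟩ _ (isC12On_quadTest hMε X _)
    (hJ.isLocalMaxOn_sub_quadTest hε)
  have hsymbol := tderiv_add_Lop_quadTest (p := p) b σ hMε X
  rw [parabolicSymbol_add_smul_id] at hsymbol
  rcases min_le_iff.1 hvisc with hpde | hobst <;> linarith

theorem IsSuperHJB.nonneg_and_Mop_le (hV : IsSuperHJB T b σ f g K c V)
    (hM : M.toLinearMap.IsSymmetric)
    (hX : X.fst ∈ Ico 0 T)
    (hJ : IsSuperjetWithinAt (fun Y => -V Y.fst Y.snd) (timeStrip T (EucSp n)) p M X) :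
    0 ≤ parabolicSymbol (b X.fst X.snd) (euclideanCol (σ X.fst X.snd)) p M - f X.fst X.snd ∧
      Mop K c V X.fst X.snd ≤ V X.fst X.snd := by
  have hvisc (ε : ℝ) (hε : 0 < ε) :
      0 ≤ parabolicSymbol (b X.fst X.snd) (euclideanCol (σ X.fst X.snd)) p M - f X.fst X.snd +
        ε * ∑ k, (1 / 2) * ‖euclideanCol (σ X.fst X.snd) k‖ ^ 2 ∧
      Mop K c V X.fst X.snd ≤ V X.fst X.snd := by
    have hMε : (-(M + ε • .id ℝ _)).toLinearMap.IsSymmetric := by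
      simpa [add_comm] using (isSymmetric_add_smul_id hM ε).smul (conj_trivial (-1 : ℝ))
    have hmin : IsLocalMinOn (fun q : ℝ × EucSp n =>
        V q.1 q.2 - quadTest (-p) (-(M + ε • .id ℝ _)) X q.1 q.2) (pdom T n) (X.fst, X.snd) := by
      have hneg := (hJ.isLocalMaxOn_sub_quadTest (U := fun t x => -V t x) hε).neg
      simpa only [quadTest_neg, neg_sub, sub_neg_eq_add, add_comm] using hneg
    obtain ⟨hpde, hobst⟩ := le_min_iff.1
      (hV.1 X.fst X.snd ⟨hX, mem_univ _⟩ _ (isC12On_quadTest hMε X _) hmin)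
    have hsymbol := tderiv_add_Lop_quadTest (p := -p) b σ hMε X
    rw [parabolicSymbol_neg, parabolicSymbol_add_smul_id] at hsymbol
    exact ⟨by linarith, by linarith⟩
  exact ⟨nonneg_of_forall_pos_nonneg_add_mul fun ε hε => (hvisc ε hε).1, (hvisc 1 one_pos).2⟩

end ViscosityJets

/-! ### The doubling penalty -/

section AttainedMaxima

lemma eventually_forall_lt_of_forall_nonpos_lt {α : Type*} [TopologicalSpace α] {S : Set α}
    (hS : IsCompact S) {F φ : α → ℝ} (hF : UpperSemicontinuousOn F S)
    (hφ : LowerSemicontinuousOn φ S) {a : ℝ} (h : ∀ p ∈ S, φ p ≤ 0 → F p < a) :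
    ∀ᶠ ρ in 𝓝[>] (0 : ℝ), ∀ p ∈ S, φ p ≤ ρ → F p < a := by
  rcases (S ∩ F ⁻¹' Ici a).eq_empty_or_nonempty with hempty | hne
  · refine Eventually.of_forall fun ρ p hp _ => not_le.1 fun hle => ?_
    exact hempty.subset ⟨hp, hle⟩
  · obtain ⟨q, hq, hmin⟩ := (hφ.mono inter_subset_left).exists_isMinOn hne
      (hF.isCompact_inter_preimage_Ici hS a)
    have hq0 : 0 < φ q := not_le.1 fun hle => (h q hq.1 hle).not_ge hq.2
    filter_upwards [Ioo_mem_nhdsGT hq0] with ρ hρ p hp hle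
    exact not_le.1 fun hge => (hρ.2.trans_le (hmin ⟨hp, hge⟩)).not_ge hle

lemma exists_isMaxOn_of_forall_norm_le {F : Type*} [NormedAddCommGroup F] [ProperSpace F]
    {D : Set F} (hD : IsClosed D) {f : F → ℝ} (hf : UpperSemicontinuousOn f D) {x₀ : F}
    (hx₀ : x₀ ∈ D) {r : ℝ} (h : ∀ x ∈ D, f x₀ ≤ f x → ‖x‖ ≤ r) : ∃ x ∈ D, IsMaxOn f D x := by
  have hx₀r : x₀ ∈ D ∩ Metric.closedBall 0 r :=
    ⟨hx₀, mem_closedBall_zero_iff.2 (h x₀ hx₀ le_rfl)⟩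
  obtain ⟨x, hx, hmax⟩ := (hf.mono inter_subset_left).exists_isMaxOn ⟨x₀, hx₀r⟩
    ((isCompact_closedBall 0 r).inter_left hD)
  refine ⟨x, hx.1, fun y hy => ?_⟩
  rcases le_total (f x₀) (f y) with hle | hle
  · exact hmax ⟨hy, mem_closedBall_zero_iff.2 (h y hy hle)⟩
  · exact hle.trans (hmax hx₀r)

end AttainedMaxima

section ElementaryBounds

lemma norm_sub_sq_le_three_mul {E : Type*} [NormedAddCommGroup E] (x y ξ η : E) :
    ‖x - y‖ ^ 2 ≤ 3 * (‖x - ξ‖ ^ 2 + ‖y - η‖ ^ 2 + ‖ξ - η‖ ^ 2) := by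
  have htri : ‖x - y‖ ≤ ‖x - ξ‖ + ‖y - η‖ + ‖ξ - η‖ :=
    calc ‖x - y‖ = ‖(x - ξ) - (y - η) + (ξ - η)‖ := by congr 1; abel
      _ ≤ _ := (norm_add_le _ _).trans (by gcongr; exact norm_sub_le _ _)
  nlinarith [norm_nonneg (x - y), sq_nonneg (‖x - ξ‖ - ‖y - η‖), sq_nonneg (‖x - ξ‖ - ‖ξ - η‖),
    sq_nonneg (‖y - η‖ - ‖ξ - η‖)]

lemma le_sqrt_div_of_mul_sq_le {c x C : ℝ} (hc : 0 < c) (h : c * x ^ 2 ≤ C) : x ≤ √(C / c) :=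
  Real.le_sqrt_of_sq_le ((le_div_iff₀' hc).2 h)

lemma norm_spaceTime_le {E : Type*} [NormedAddCommGroup E] (X : SpaceTime E) :
    ‖X‖ ≤ |X.fst| + ‖X.snd‖ := by
  refine (sq_le_sq₀ (norm_nonneg _) (by positivity)).1 ?_
  nlinarith [norm_sq_spaceTime X, sq_abs X.fst, mul_nonneg (abs_nonneg X.fst) (norm_nonneg X.snd)]

lemma abs_fst_le_of_mem_timeStrip {E : Type*} {T : ℝ} {X : SpaceTime E}
    (hX : X ∈ timeStrip T E) : |X.fst| ≤ T :=
  (abs_of_nonneg hX.1).trans_le hX.2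

lemma upperSemicontinuousOn_sub_of_continuous {α : Type*} [TopologicalSpace α] {S : Set α}
    {f h : α → ℝ} (hf : UpperSemicontinuousOn f S) (hh : Continuous h) :
    UpperSemicontinuousOn (fun x => f x - h x) S := by
  simp only [sub_eq_add_neg]
  exact hf.add (hh.neg.upperSemicontinuous.upperSemicontinuousOn S)

end ElementaryBounds

section Penalty

variable {E : Type*} [NormedAddCommGroup E] [InnerProductSpace ℝ E]

/-- The operator acting as `a` on the time component and as `c` on the space component. -/
def spaceTimeScaling (E : Type*) [NormedAddCommGroup E] [InnerProductSpace ℝ E] (a c : ℝ) :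
    SpaceTime E →L[ℝ] SpaceTime E :=
  (WithLp.prodContinuousLinearEquiv 2 ℝ ℝ E).symm.toContinuousLinearMap ∘L
    (a • WithLp.fstL 2 ℝ ℝ E).prod (c • WithLp.sndL 2 ℝ ℝ E)

lemma spaceTimeScaling_apply (a c : ℝ) (Z : SpaceTime E) :
    spaceTimeScaling E a c Z = WithLp.toLp 2 (a * Z.fst, c • Z.snd) := rfl

lemma isSymmetric_spaceTimeScaling (a c : ℝ) :
    (spaceTimeScaling E a c).toLinearMap.IsSymmetric := by
  intro X Y
  simp only [ContinuousLinearMap.coe_coe, spaceTimeScaling_apply, inner_spaceTime,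
    WithLp.toLp_fst, WithLp.toLp_snd, inner_smul_left, inner_smul_right, conj_trivial]
  ring

lemma halfQuadForm_spaceTimeScaling (a c : ℝ) (Z : SpaceTime E) :
    halfQuadForm (spaceTimeScaling E a c) Z = (a * Z.fst ^ 2 + c * ‖Z.snd‖ ^ 2) / 2 := by
  simp only [halfQuadForm, spaceTimeScaling_apply, inner_spaceTime, WithLp.toLp_fst,
    WithLp.toLp_snd, inner_smul_left, conj_trivial, real_inner_self_eq_norm_sq]
  ring

/-- The penalty of the doubled problem. The anchors `ξ`, `η` are the variables of the
sup-convolutions of the two functions evaluated at `X`, `Y`; `a` and `c` penalise distances in time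
and in space, and `g` confines the anchors in space. -/
def doublingPenalty (a c g : ℝ) (X Y ξ η : SpaceTime E) : ℝ :=
  halfQuadForm (spaceTimeScaling E a c) (X - ξ) + halfQuadForm (spaceTimeScaling E a c) (Y - η)
    + halfQuadForm (spaceTimeScaling E a c) (ξ - η)
    + (halfQuadForm (spaceTimeScaling E 0 g) ξ + halfQuadForm (spaceTimeScaling E 0 g) η)

lemma doublingPenalty_eq (a c g : ℝ) (X Y ξ η : SpaceTime E) : doublingPenalty a c g X Y ξ η =
    (a * ((X.fst - ξ.fst) ^ 2 + (Y.fst - η.fst) ^ 2 + (ξ.fst - η.fst) ^ 2)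
    + c * (‖X.snd - ξ.snd‖ ^ 2 + ‖Y.snd - η.snd‖ ^ 2 + ‖ξ.snd - η.snd‖ ^ 2)
    + g * (‖ξ.snd‖ ^ 2 + ‖η.snd‖ ^ 2)) / 2 := by
  simp only [doublingPenalty, halfQuadForm_spaceTimeScaling, WithLp.sub_fst, WithLp.sub_snd]
  ring

lemma doublingPenalty_comm (a c g : ℝ) (X Y ξ η : SpaceTime E) :
    doublingPenalty a c g Y X η ξ = doublingPenalty a c g X Y ξ η := by
  rw [doublingPenalty_eq, doublingPenalty_eq, norm_sub_rev η.snd]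
  ring

lemma doublingPenalty_add_space (a c g : ℝ) (X Y ξ η : SpaceTime E) (ζ : E) :
    doublingPenalty a c g (WithLp.toLp 2 (X.fst, X.snd + ζ)) (WithLp.toLp 2 (Y.fst, Y.snd + ζ))
      (WithLp.toLp 2 (ξ.fst, ξ.snd + ζ)) (WithLp.toLp 2 (η.fst, η.snd + ζ)) =
    doublingPenalty a c g X Y ξ η +
      g / 2 * (‖ξ.snd + ζ‖ ^ 2 - ‖ξ.snd‖ ^ 2 + ‖η.snd + ζ‖ ^ 2 - ‖η.snd‖ ^ 2) := by
  simp only [doublingPenalty_eq, WithLp.toLp_fst, WithLp.toLp_snd, add_sub_add_right_eq_sub]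
  ring

variable {a c g C : ℝ} {X Y ξ η : SpaceTime E}

lemma doublingPenalty_nonneg (ha : 0 ≤ a) (hc : 0 ≤ c) (hg : 0 ≤ g) (X Y ξ η : SpaceTime E) :
    0 ≤ doublingPenalty a c g X Y ξ η := by
  rw [doublingPenalty_eq]
  positivity

lemma mul_sq_le_of_doublingPenalty_le (hc : 0 ≤ c) (hg : 0 ≤ g)
    (h : doublingPenalty a c g X Y ξ η ≤ C) :
    a * ((X.fst - ξ.fst) ^ 2 + (Y.fst - η.fst) ^ 2 + (ξ.fst - η.fst) ^ 2) ≤ 2 * C := by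
  rw [doublingPenalty_eq] at h
  have : 0 ≤ c * (‖X.snd - ξ.snd‖ ^ 2 + ‖Y.snd - η.snd‖ ^ 2 + ‖ξ.snd - η.snd‖ ^ 2) := by positivity
  have : 0 ≤ g * (‖ξ.snd‖ ^ 2 + ‖η.snd‖ ^ 2) := by positivity
  linarith

lemma mul_norm_sq_le_of_doublingPenalty_le (ha : 0 ≤ a) (hg : 0 ≤ g)
    (h : doublingPenalty a c g X Y ξ η ≤ C) :
    c * (‖X.snd - ξ.snd‖ ^ 2 + ‖Y.snd - η.snd‖ ^ 2 + ‖ξ.snd - η.snd‖ ^ 2) ≤ 2 * C := by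
  rw [doublingPenalty_eq] at h
  have : 0 ≤ a * ((X.fst - ξ.fst) ^ 2 + (Y.fst - η.fst) ^ 2 + (ξ.fst - η.fst) ^ 2) := by positivity
  have : 0 ≤ g * (‖ξ.snd‖ ^ 2 + ‖η.snd‖ ^ 2) := by positivity
  linarith

lemma mul_norm_sq_anchor_le_of_doublingPenalty_le (ha : 0 ≤ a) (hc : 0 ≤ c) (hg : 0 ≤ g)
    (h : doublingPenalty a c g X Y ξ η ≤ C) : g * ‖ξ.snd‖ ^ 2 ≤ 2 * C := by
  rw [doublingPenalty_eq] at h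
  have : 0 ≤ a * ((X.fst - ξ.fst) ^ 2 + (Y.fst - η.fst) ^ 2 + (ξ.fst - η.fst) ^ 2) := by positivity
  have : 0 ≤ c * (‖X.snd - ξ.snd‖ ^ 2 + ‖Y.snd - η.snd‖ ^ 2 + ‖ξ.snd - η.snd‖ ^ 2) := by positivity
  have : 0 ≤ g * ‖η.snd‖ ^ 2 := by positivity
  linarith

lemma mul_sq_fst_sub_le_of_doublingPenalty_le (ha : 0 ≤ a) (hc : 0 ≤ c) (hg : 0 ≤ g)
    (h : doublingPenalty a c g X Y ξ η ≤ C) : a * (X.fst - Y.fst) ^ 2 ≤ 6 * C := by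
  have h3 := norm_sub_sq_le_three_mul X.fst Y.fst ξ.fst η.fst
  simp only [Real.norm_eq_abs, sq_abs] at h3
  linarith [mul_le_mul_of_nonneg_left h3 ha, mul_sq_le_of_doublingPenalty_le hc hg h]

lemma mul_norm_sq_snd_sub_le_of_doublingPenalty_le (ha : 0 ≤ a) (hc : 0 ≤ c) (hg : 0 ≤ g)
    (h : doublingPenalty a c g X Y ξ η ≤ C) : c * ‖X.snd - Y.snd‖ ^ 2 ≤ 6 * C := by
  have h3 := norm_sub_sq_le_three_mul X.snd Y.snd ξ.snd η.snd
  linarith [mul_le_mul_of_nonneg_left h3 hc, mul_norm_sq_le_of_doublingPenalty_le ha hg h]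

lemma norm_le_of_doublingPenalty_le (ha : 0 ≤ a) (hc : 0 < c) (hg : 0 < g)
    (h : doublingPenalty a c g X Y ξ η ≤ C) :
    ‖X‖ ≤ |X.fst| + √(2 * C / c) + √(2 * C / g) := by
  have hXξ : ‖X.snd - ξ.snd‖ ≤ √(2 * C / c) := le_sqrt_div_of_mul_sq_le hc <|
    (mul_norm_sq_le_of_doublingPenalty_le ha hg.le h).trans' <| by
      gcongr
      nlinarith [sq_nonneg ‖Y.snd - η.snd‖, sq_nonneg ‖ξ.snd - η.snd‖]
  have hξ : ‖ξ.snd‖ ≤ √(2 * C / g) := le_sqrt_div_of_mul_sq_le hg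
    (mul_norm_sq_anchor_le_of_doublingPenalty_le ha hc.le hg.le h)
  linarith [norm_spaceTime_le X, norm_le_norm_sub_add X.snd ξ.snd]

lemma norm_anchor_le_of_doublingPenalty_le (ha : 0 < a) (hc : 0 ≤ c) (hg : 0 < g)
    (h : doublingPenalty a c g X Y ξ η ≤ C) :
    ‖ξ‖ ≤ |X.fst| + √(2 * C / a) + √(2 * C / g) := by
  have hXξ : |ξ.fst - X.fst| ≤ √(2 * C / a) := le_sqrt_div_of_mul_sq_le ha <|
    (mul_sq_le_of_doublingPenalty_le hc hg.le h).trans' <| by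
      rw [sq_abs, ← neg_sub, neg_sq]
      gcongr
      nlinarith [sq_nonneg (Y.fst - η.fst), sq_nonneg (ξ.fst - η.fst)]
  have hξ : ‖ξ.snd‖ ≤ √(2 * C / g) := le_sqrt_div_of_mul_sq_le hg
    (mul_norm_sq_anchor_le_of_doublingPenalty_le ha.le hc hg.le h)
  linarith [norm_spaceTime_le ξ, abs_sub_abs_le_abs_sub ξ.fst X.fst]

end Penalty

section DoubledMaximum

variable {E : Type*} [NormedAddCommGroup E] [InnerProductSpace ℝ E]

lemma isClosed_timeStrip (T : ℝ) : IsClosed (timeStrip T E) :=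
  isClosed_Icc.preimage (WithLp.fstL 2 ℝ ℝ E).continuous

lemma continuous_halfQuadForm {F : Type*} [NormedAddCommGroup F] [InnerProductSpace ℝ F]
    (S : F →L[ℝ] F) : Continuous (halfQuadForm S) := by
  unfold halfQuadForm
  fun_prop

lemma continuous_doublingPenalty (a c g : ℝ) :
    Continuous fun p : SpaceTime E × SpaceTime E × SpaceTime E × SpaceTime E =>
      doublingPenalty a c g p.1 p.2.1 p.2.2.1 p.2.2.2 := by
  unfold doublingPenalty halfQuadForm
  fun_prop

variable [FiniteDimensional ℝ E] {T B : ℝ} {u v : SpaceTime E → ℝ}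

lemma exists_isSupConvolution_timeStrip (hT : 0 ≤ T)
    (husc : UpperSemicontinuousOn u (timeStrip T E)) (hu : ∀ X ∈ timeStrip T E, |u X| ≤ B)
    {a c : ℝ} (ha : 0 ≤ a) (hc : 0 < c) :
    ∃ A X, IsSupConvolution (timeStrip T E) u (spaceTimeScaling E a c) A X := by
  have : ProperSpace (SpaceTime E) := FiniteDimensional.proper_real _
  refine exists_isSupConvolution fun ξ => ?_
  set Z : SpaceTime E := WithLp.toLp 2 (0, ξ.snd)
  have hZ : Z ∈ timeStrip T E := ⟨le_rfl, hT⟩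
  set S := spaceTimeScaling E a c
  set C := 2 * B + halfQuadForm S (Z - ξ)
  have hcont : Continuous fun X => halfQuadForm S (X - ξ) :=
    (continuous_halfQuadForm S).comp (continuous_sub_right ξ)
  have hF : UpperSemicontinuousOn (fun X => u X - halfQuadForm S (X - ξ)) (timeStrip T E) :=
    upperSemicontinuousOn_sub_of_continuous husc hcont
  refine exists_isMaxOn_of_forall_norm_le (isClosed_timeStrip T) hF hZ
    (r := T + (√(2 * C / c) + ‖ξ.snd‖)) fun X hX hle => ?_
  have hC : halfQuadForm S (X - ξ) ≤ C := by
    linarith [(abs_le.1 (hu X hX)).2, (abs_le.1 (hu Z hZ)).1]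
  rw [halfQuadForm_spaceTimeScaling, WithLp.sub_fst, WithLp.sub_snd] at hC
  have hXξ : ‖X.snd - ξ.snd‖ ≤ √(2 * C / c) := le_sqrt_div_of_mul_sq_le hc <| by
    linarith [mul_nonneg ha (sq_nonneg (X.fst - ξ.fst))]
  linarith [norm_spaceTime_le X, abs_fst_le_of_mem_timeStrip hX, norm_le_norm_sub_add X.snd ξ.snd]

lemma exists_forall_sub_doublingPenalty_le
    (husc : UpperSemicontinuousOn u (timeStrip T E)) (hu : ∀ X ∈ timeStrip T E, |u X| ≤ B)
    (hvsc : UpperSemicontinuousOn v (timeStrip T E)) (hv : ∀ X ∈ timeStrip T E, |v X| ≤ B)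
    {a c g : ℝ} (ha : 0 < a) (hc : 0 < c) (hg : 0 < g) {X₁ Y₁ : SpaceTime E}
    (hX₁ : X₁ ∈ timeStrip T E) (hY₁ : Y₁ ∈ timeStrip T E)
    (hnonneg : 0 ≤ u X₁ + v Y₁ - doublingPenalty a c g X₁ Y₁ X₁ Y₁) :
    ∃ X₀ ∈ timeStrip T E, ∃ Y₀ ∈ timeStrip T E, ∃ ξ₀ η₀,
      ∀ X ∈ timeStrip T E, ∀ Y ∈ timeStrip T E, ∀ ξ η,
        u X + v Y - doublingPenalty a c g X Y ξ η ≤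
          u X₀ + v Y₀ - doublingPenalty a c g X₀ Y₀ ξ₀ η₀ := by
  have : ProperSpace (SpaceTime E) := FiniteDimensional.proper_real _
  set D : Set (SpaceTime E × SpaceTime E × SpaceTime E × SpaceTime E) :=
    {p | p.1 ∈ timeStrip T E ∧ p.2.1 ∈ timeStrip T E}
  have hD : IsClosed D := ((isClosed_timeStrip T).preimage continuous_fst).inter
    ((isClosed_timeStrip T).preimage continuous_snd.fst)
  have hF : UpperSemicontinuousOn
      (fun p => u p.1 + v p.2.1 - doublingPenalty a c g p.1 p.2.1 p.2.2.1 p.2.2.2) D :=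
    upperSemicontinuousOn_sub_of_continuous
      ((husc.comp continuous_fst.continuousOn fun p hp => hp.1).add
        (hvsc.comp continuous_snd.fst.continuousOn fun p hp => hp.2))
      (continuous_doublingPenalty a c g)
  set R := T + √(2 * (2 * B) / a) + √(2 * (2 * B) / c) + √(2 * (2 * B) / g)
  obtain ⟨⟨X₀, Y₀, ξ₀, η₀⟩, ⟨hX₀, hY₀⟩, hmax⟩ := exists_isMaxOn_of_forall_norm_le hD hF
    (x₀ := (X₁, Y₁, X₁, Y₁)) ⟨hX₁, hY₁⟩ (r := R) <| by
      rintro ⟨X, Y, ξ, η⟩ ⟨hX, hY⟩ hle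
      have hpen : doublingPenalty a c g X Y ξ η ≤ 2 * B := by
        linarith [(abs_le.1 (hu X hX)).2, (abs_le.1 (hv Y hY)).2]
      have hpen' := (doublingPenalty_comm a c g X Y ξ η).trans_le hpen
      have hX' := norm_le_of_doublingPenalty_le ha.le hc hg hpen
      have hY' := norm_le_of_doublingPenalty_le ha.le hc hg hpen'
      have hξ := norm_anchor_le_of_doublingPenalty_le ha hc.le hg hpen
      have hη := norm_anchor_le_of_doublingPenalty_le ha hc.le hg hpen'
      have hra := Real.sqrt_nonneg (2 * (2 * B) / a)
      have hrc := Real.sqrt_nonneg (2 * (2 * B) / c)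
      have hXT := abs_fst_le_of_mem_timeStrip hX
      have hYT := abs_fst_le_of_mem_timeStrip hY
      simp only [Prod.norm_def, sup_le_iff]
      refine ⟨?_, ?_, ?_, ?_⟩ <;> linarith
  exact ⟨X₀, hX₀, Y₀, hY₀, ξ₀, η₀, fun X hX Y hY ξ η => hmax (a := (X, Y, ξ, η)) ⟨hX, hY⟩⟩

end DoubledMaximum

/-! ### Doubling of variables -/

section DoublingPoint

/-- The operator on pairs whose `halfQuadForm` at `(ξ, η)` is
`½ ⟪S (ξ - η), ξ - η⟫ + ½ ⟪R ξ, ξ⟫ + ½ ⟪R η, η⟫`. -/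
def couplingOperator {F : Type*} [NormedAddCommGroup F] [InnerProductSpace ℝ F]
    (S R : F →L[ℝ] F) : WithLp 2 (F × F) →L[ℝ] WithLp 2 (F × F) :=
  (WithLp.prodContinuousLinearEquiv 2 ℝ F F).symm.toContinuousLinearMap ∘L
    (S ∘L (WithLp.fstL 2 ℝ F F - WithLp.sndL 2 ℝ F F) + R ∘L WithLp.fstL 2 ℝ F F).prod
      (-(S ∘L (WithLp.fstL 2 ℝ F F - WithLp.sndL 2 ℝ F F)) + R ∘L WithLp.sndL 2 ℝ F F)

section Coupling

variable {F : Type*} [NormedAddCommGroup F] [InnerProductSpace ℝ F] {S R : F →L[ℝ] F}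

lemma inner_couplingOperator (z w : WithLp 2 (F × F)) : ⟪couplingOperator S R z, w⟫ =
    ⟪S (z.fst - z.snd), w.fst - w.snd⟫ + ⟪R z.fst, w.fst⟫ + ⟪R z.snd, w.snd⟫ := by
  calc ⟪couplingOperator S R z, w⟫ = ⟪S (z.fst - z.snd) + R z.fst, w.fst⟫ +
        ⟪-S (z.fst - z.snd) + R z.snd, w.snd⟫ := WithLp.prod_inner_apply _ _
    _ = _ := by
      simp only [inner_add_left, inner_neg_left, inner_sub_right]
      ring

lemma isSymmetric_couplingOperator (hS : S.toLinearMap.IsSymmetric)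
    (hR : R.toLinearMap.IsSymmetric) : (couplingOperator S R).toLinearMap.IsSymmetric := by
  intro z w
  rw [ContinuousLinearMap.coe_coe, real_inner_comm _ z, inner_couplingOperator,
    inner_couplingOperator]
  have hS' := hS (z.fst - z.snd) (w.fst - w.snd)
  have hR₁ := hR z.fst w.fst
  have hR₂ := hR z.snd w.snd
  simp only [ContinuousLinearMap.coe_coe] at hS' hR₁ hR₂
  rw [hS', hR₁, hR₂, real_inner_comm, real_inner_comm (R w.fst), real_inner_comm (R w.snd)]

lemma halfQuadForm_couplingOperator (z : WithLp 2 (F × F)) :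
    halfQuadForm (couplingOperator S R) z =
      halfQuadForm S (z.fst - z.snd) + (halfQuadForm R z.fst + halfQuadForm R z.snd) := by
  simp only [halfQuadForm, inner_couplingOperator]
  ring

end Coupling

variable {E : Type*} [NormedAddCommGroup E] [InnerProductSpace ℝ E]

/-- An almost maximum point of `u X + v Y - doublingPenalty a c g X Y ξ η` over the strip, up to an
error `δ`, together with second-order superjets `(p, M)` of `u` at `X` and `(q, N)` of `v` at `Y`
which agree up to `δ` with the derivatives of the penalty in `(ξ, η)`. -/
structure IsDoublingPoint (T : ℝ) (u v : SpaceTime E → ℝ) (a c g δ : ℝ)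
    (X Y ξ η p q : SpaceTime E) (M N : SpaceTime E →L[ℝ] SpaceTime E) : Prop where
  mem_fst : X ∈ timeStrip T E
  mem_snd : Y ∈ timeStrip T E
  symm_fst : M.toLinearMap.IsSymmetric
  symm_snd : N.toLinearMap.IsSymmetric
  le_add {X' Y' : SpaceTime E} (hX' : X' ∈ timeStrip T E) (hY' : Y' ∈ timeStrip T E)
    (ξ' η' : SpaceTime E) : u X' + v Y' - doublingPenalty a c g X' Y' ξ' η' ≤
      u X + v Y - doublingPenalty a c g X Y ξ η + δ
  gradient_fst :
    ‖p - (spaceTimeScaling E a c (ξ - η) + spaceTimeScaling E 0 g ξ)‖ ≤ δ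
  gradient_snd :
    ‖q - (-spaceTimeScaling E a c (ξ - η) + spaceTimeScaling E 0 g η)‖ ≤ δ
  hessian_le (h k : SpaceTime E) : halfQuadForm M h + halfQuadForm N k ≤
    halfQuadForm (spaceTimeScaling E a c) (h - k) + (halfQuadForm (spaceTimeScaling E 0 g) h
      + halfQuadForm (spaceTimeScaling E 0 g) k) + δ * (‖h‖ ^ 2 + ‖k‖ ^ 2)
  superjet_fst : IsSuperjetWithinAt u (timeStrip T E) p M X
  superjet_snd : IsSuperjetWithinAt v (timeStrip T E) q N Y

theorem exists_isDoublingPoint [FiniteDimensional ℝ E] {T B : ℝ} {u v : SpaceTime E → ℝ}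
    (hT : 0 ≤ T) (husc : UpperSemicontinuousOn u (timeStrip T E))
    (hu : ∀ X ∈ timeStrip T E, |u X| ≤ B)
    (hvsc : UpperSemicontinuousOn v (timeStrip T E)) (hv : ∀ X ∈ timeStrip T E, |v X| ≤ B)
    {a c g δ : ℝ} (ha : 0 < a) (hc : 0 < c) (hg : 0 < g) (hδ : 0 < δ) {X₁ Y₁ : SpaceTime E}
    (hX₁ : X₁ ∈ timeStrip T E) (hY₁ : Y₁ ∈ timeStrip T E)
    (hnonneg : 0 ≤ u X₁ + v Y₁ - doublingPenalty a c g X₁ Y₁ X₁ Y₁) :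
    ∃ X Y ξ η p q M N, IsDoublingPoint T u v a c g δ X Y ξ η p q M N := by
  obtain ⟨A, Xm, hA⟩ := exists_isSupConvolution_timeStrip hT husc hu ha.le hc
  obtain ⟨A', Ym, hA'⟩ := exists_isSupConvolution_timeStrip hT hvsc hv ha.le hc
  obtain ⟨X₀, hX₀, Y₀, hY₀, ξ₀, η₀, hmax⟩ :=
    exists_forall_sub_doublingPenalty_le husc hu hvsc hv ha hc hg hX₁ hY₁ hnonneg
  set S := spaceTimeScaling E a c
  set R := spaceTimeScaling E 0 g
  have hS : S.toLinearMap.IsSymmetric := isSymmetric_spaceTimeScaling a c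
  have hQ : (couplingOperator S R).toLinearMap.IsSymmetric :=
    isSymmetric_couplingOperator hS (isSymmetric_spaceTimeScaling 0 g)
  have hvalue : ∀ z : WithLp 2 (SpaceTime E × SpaceTime E),
      A z.fst + A' z.snd - halfQuadForm (couplingOperator S R) z = u (Xm z.fst) + v (Ym z.snd) -
        doublingPenalty a c g (Xm z.fst) (Ym z.snd) z.fst z.snd := fun z => by
    rw [hA.eq, hA'.eq, halfQuadForm_couplingOperator, doublingPenalty]
    ring
  have hle_max : u X₀ + v Y₀ - doublingPenalty a c g X₀ Y₀ ξ₀ η₀ ≤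
      A ξ₀ + A' η₀ - halfQuadForm (couplingOperator S R) (WithLp.toLp 2 (ξ₀, η₀)) := by
    rw [halfQuadForm_couplingOperator, WithLp.toLp_fst, WithLp.toLp_snd, doublingPenalty]
    linarith [hA.le ξ₀ hX₀, hA'.le η₀ hY₀]
  obtain ⟨z, M, N, hM, hN, hz, hp, hq, hMN, hJ, hJ'⟩ :=
    exists_isSuperjetWithinAt_of_isSupConvolution hA hA' hS hS hQ
      (z₀ := WithLp.toLp 2 (ξ₀, η₀))
      (fun z => ((hvalue z).trans_le (hmax _ (hA.mem _) _ (hA'.mem _) _ _)).trans hle_max) hδ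
  refine ⟨Xm z.fst, Ym z.snd, z.fst, z.snd, _, _, M, N, hA.mem _, hA'.mem _, hM, hN,
    fun hX' hY' ξ' η' => ?_, hp, hq, fun h k => ?_, hJ, hJ'⟩
  · have hmax' := hmax _ hX' _ hY' ξ' η'
    rw [hvalue z, WithLp.toLp_fst, WithLp.toLp_snd] at hz
    linarith
  · have hhk := hMN (WithLp.toLp 2 (h, k))
    rwa [halfQuadForm_couplingOperator, WithLp.prod_norm_sq_eq_of_L2] at hhk

namespace IsDoublingPoint

variable {T a c g δ : ℝ} {u v : SpaceTime E → ℝ} {X Y ξ η p q : SpaceTime E}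
  {M N : SpaceTime E →L[ℝ] SpaceTime E}

lemma fst_add_fst_le (h : IsDoublingPoint T u v a c g δ X Y ξ η p q M N) :
    p.fst + q.fst ≤ 2 * δ := by
  have hp := (le_abs_self _).trans ((WithLp.norm_fst_le _ _).trans h.gradient_fst)
  have hq := (le_abs_self _).trans ((WithLp.norm_fst_le _ _).trans h.gradient_snd)
  simp only [spaceTimeScaling_apply, WithLp.sub_fst, WithLp.add_fst, WithLp.neg_fst,
    WithLp.toLp_fst] at hp hq
  linarith

lemma norm_snd_fst_sub_le (h : IsDoublingPoint T u v a c g δ X Y ξ η p q M N) :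
    ‖p.snd - (c • (ξ.snd - η.snd) + g • ξ.snd)‖ ≤ δ := by
  simpa [spaceTimeScaling_apply] using (WithLp.norm_snd_le _ _).trans h.gradient_fst

lemma norm_snd_snd_sub_le (h : IsDoublingPoint T u v a c g δ X Y ξ η p q M N) :
    ‖q.snd - (-c • (ξ.snd - η.snd) + g • η.snd)‖ ≤ δ := by
  simpa [spaceTimeScaling_apply] using (WithLp.norm_snd_le _ _).trans h.gradient_snd

lemma halfQuadForm_space_add_le (h : IsDoublingPoint T u v a c g δ X Y ξ η p q M N) (x y : E) :
    halfQuadForm M (WithLp.toLp 2 (0, x)) + halfQuadForm N (WithLp.toLp 2 (0, y)) ≤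
      c / 2 * ‖x - y‖ ^ 2 + (g / 2 + δ) * (‖x‖ ^ 2 + ‖y‖ ^ 2) := by
  have hxy := h.hessian_le (WithLp.toLp 2 (0, x)) (WithLp.toLp 2 (0, y))
  simp only [halfQuadForm_spaceTimeScaling, norm_sq_spaceTime, WithLp.sub_fst, WithLp.sub_snd,
    WithLp.toLp_fst, WithLp.toLp_snd] at hxy
  linarith

lemma add_space_le (h : IsDoublingPoint T u v a c g δ X Y ξ η p q M N) (ζ : E) :
    u (WithLp.toLp 2 (X.fst, X.snd + ζ)) + v (WithLp.toLp 2 (Y.fst, Y.snd + ζ)) ≤ u X + v Y + δ +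
      g / 2 * (‖ξ.snd + ζ‖ ^ 2 - ‖ξ.snd‖ ^ 2 + ‖η.snd + ζ‖ ^ 2 - ‖η.snd‖ ^ 2) := by
  have hζ := h.le_add (X' := WithLp.toLp 2 (X.fst, X.snd + ζ))
    (Y' := WithLp.toLp 2 (Y.fst, Y.snd + ζ)) h.mem_fst h.mem_snd
    (WithLp.toLp 2 (ξ.fst, ξ.snd + ζ)) (WithLp.toLp 2 (η.fst, η.snd + ζ))
  rw [doublingPenalty_add_space] at hζ
  linarith

end IsDoublingPoint

end DoublingPoint

section NearDiagonal

variable {E : Type*} [NormedAddCommGroup E] {T B : ℝ} {u v : SpaceTime E → ℝ}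

/-- `L` is the limit as `r → 0` of the supremum of `u X + v Y` over points `X`, `Y` of the strip
with the same time and at spatial distance at most `r`. -/
structure IsDiagonalSup (T : ℝ) (u v : SpaceTime E → ℝ) (L : ℝ) : Prop where
  exists_forall_le {κ : ℝ} (hκ : 0 < κ) : ∃ r > 0, ∀ X ∈ timeStrip T E, ∀ Y ∈ timeStrip T E,
    X.fst = Y.fst → ‖X.snd - Y.snd‖ ≤ r → u X + v Y ≤ L + κ
  exists_sub_le {κ r : ℝ} (hκ : 0 < κ) (hr : 0 < r) : ∃ X ∈ timeStrip T E, ∃ Y ∈ timeStrip T E,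
    X.fst = Y.fst ∧ ‖X.snd - Y.snd‖ ≤ r ∧ L - κ ≤ u X + v Y

lemma exists_isDiagonalSup (hu : ∀ X ∈ timeStrip T E, |u X| ≤ B)
    (hv : ∀ X ∈ timeStrip T E, |v X| ≤ B) {X₀ : SpaceTime E} (hX₀ : X₀ ∈ timeStrip T E) :
    ∃ L, u X₀ + v X₀ ≤ L ∧ IsDiagonalSup T u v L := by
  set A : Set ℝ := {a | ∃ r > 0, ∀ X ∈ timeStrip T E, ∀ Y ∈ timeStrip T E, X.fst = Y.fst →
    ‖X.snd - Y.snd‖ ≤ r → u X + v Y ≤ a}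
  have hne : A.Nonempty := ⟨2 * B, 1, one_pos, fun X hX Y hY _ _ => by
    linarith [(abs_le.1 (hu X hX)).2, (abs_le.1 (hv Y hY)).2]⟩
  have hlb : ∀ a ∈ A, u X₀ + v X₀ ≤ a := fun a ⟨r, hr, ha⟩ =>
    ha X₀ hX₀ X₀ hX₀ rfl (by simpa using hr.le)
  refine ⟨sInf A, le_csInf hne hlb, fun {κ} hκ => ?_, fun {κ r} hκ hr => ?_⟩
  · obtain ⟨a, ⟨r, hr, ha⟩, hlt⟩ := exists_lt_of_csInf_lt hne (lt_add_of_pos_right (sInf A) hκ)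
    exact ⟨r, hr, fun X hX Y hY ht hd => (ha X hX Y hY ht hd).trans hlt.le⟩
  · by_contra! hlt
    have hmem : sInf A - κ ∈ A := ⟨r, hr, fun X hX Y hY ht hd => (hlt X hX Y hY ht hd).le⟩
    linarith [csInf_le ⟨_, hlb⟩ hmem]

variable [InnerProductSpace ℝ E]

lemma IsDiagonalSup.exists_doublingPenalty_le {L κ ε : ℝ} (hL : IsDiagonalSup T u v L)
    (hκ : 0 < κ) (hε : 0 < ε) :
    ∃ X ∈ timeStrip T E, ∃ Y ∈ timeStrip T E, ∃ γ > 0, γ ≤ κ ∧ L - κ ≤ u X + v Y ∧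
      ∀ a, doublingPenalty a (1 / ε) (2 * γ) X Y X Y ≤ 2 * κ := by
  obtain ⟨X, hX, Y, hY, htime, hdist, hval⟩ :=
    hL.exists_sub_le hκ (show 0 < √(2 * κ * ε) by positivity)
  have hdist' : 1 / ε * ‖X.snd - Y.snd‖ ^ 2 ≤ 2 * κ := by
    rw [one_div_mul_eq_div, div_le_iff₀ hε]
    exact (Real.le_sqrt (norm_nonneg _) (by positivity)).1 hdist
  set q := ‖X.snd‖ ^ 2 + ‖Y.snd‖ ^ 2
  refine ⟨X, hX, Y, hY, min κ (κ / (q + 1)), by positivity, min_le_left _ _, hval, fun a => ?_⟩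
  have hγ : min κ (κ / (q + 1)) * q ≤ κ :=
    calc min κ (κ / (q + 1)) * q ≤ κ / (q + 1) * (q + 1) := by
          gcongr
          · exact min_le_right _ _
          · exact (lt_add_one q).le
      _ = κ := div_mul_cancel₀ _ (by positivity)
  rw [doublingPenalty_eq, htime]
  simp only [sub_self, norm_zero]
  linarith

lemma eventually_forall_lt_of_diagonal_lt [FiniteDimensional ℝ E]
    {C : Set (SpaceTime E × SpaceTime E)} (hC : IsClosed C) {F : SpaceTime E × SpaceTime E → ℝ}
    (hF : UpperSemicontinuousOn F C) {l : ℝ} (h : ∀ p ∈ C, p.1.fst = p.2.fst → F p < l) (R : ℝ) :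
    ∀ᶠ ρ in 𝓝[>] (0 : ℝ), ∀ p ∈ C, ‖p.1‖ ≤ R → ‖p.2‖ ≤ R → |p.1.fst - p.2.fst| ≤ ρ → F p < l := by
  have : ProperSpace (SpaceTime E) := FiniteDimensional.proper_real _
  have hcompact : IsCompact (C ∩ Metric.closedBall 0 R ×ˢ Metric.closedBall 0 R) :=
    ((isCompact_closedBall _ _).prod (isCompact_closedBall _ _)).inter_left hC
  have htime : Continuous fun p : SpaceTime E × SpaceTime E => |p.1.fst - p.2.fst| := by fun_prop
  filter_upwards [eventually_forall_lt_of_forall_nonpos_lt hcompact (hF.mono inter_subset_left)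
    (htime.lowerSemicontinuous.lowerSemicontinuousOn _) fun p hp hle =>
      h p hp.1 (sub_eq_zero.1 (abs_nonpos_iff.1 hle))] with ρ hρ p hp h₁ h₂
  exact hρ p ⟨hp, mem_closedBall_zero_iff.2 h₁, mem_closedBall_zero_iff.2 h₂⟩

end NearDiagonal

section Localisation

variable {E : Type*} [NormedAddCommGroup E] [InnerProductSpace ℝ E] {T B : ℝ}
  {u v : SpaceTime E → ℝ}

/-- The pairs of points of the strip at spatial distance at most `r`. -/
def closePairs (T : ℝ) (E : Type*) [NormedAddCommGroup E] (r : ℝ) :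
    Set (SpaceTime E × SpaceTime E) :=
  {p | p.1 ∈ timeStrip T E ∧ p.2 ∈ timeStrip T E ∧ ‖p.1.snd - p.2.snd‖ ≤ r}

lemma isClosed_closePairs (T r : ℝ) : IsClosed (closePairs T E r) := by
  have hdist : Continuous fun p : SpaceTime E × SpaceTime E => ‖p.1.snd - p.2.snd‖ := by fun_prop
  exact ((isClosed_timeStrip T).preimage continuous_fst).inter
    (((isClosed_timeStrip T).preimage continuous_snd).inter (isClosed_le hdist continuous_const))

lemma eventually_near_diagonal [FiniteDimensional ℝ E] {L r l ε : ℝ}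
    (husc : UpperSemicontinuousOn u (timeStrip T E))
    (hvsc : UpperSemicontinuousOn v (timeStrip T E))
    (hL : ∀ X ∈ timeStrip T E, ∀ Y ∈ timeStrip T E, X.fst = Y.fst → ‖X.snd - Y.snd‖ ≤ r →
      u X + v Y < L)
    (hterm : ∀ X ∈ timeStrip T E, ∀ Y ∈ timeStrip T E, X.fst = T → Y.fst = T →
      ‖X.snd - Y.snd‖ ≤ r → u X + v Y < l)
    {Θ : SpaceTime E × SpaceTime E → ℝ} (hΘ : Continuous Θ) (hε : 0 < ε)
    (hΘ₀ : ∀ p, p.1.fst = p.2.fst → Θ p = 0) (R : ℝ) :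
    ∀ᶠ ρ in 𝓝[>] (0 : ℝ), ∀ p ∈ closePairs T E r, ‖p.1‖ ≤ R → ‖p.2‖ ≤ R →
      |p.1.fst - p.2.fst| ≤ ρ → u p.1 + v p.2 < L ∧
        (p.1.fst = T ∨ p.2.fst = T → u p.1 + v p.2 < l) ∧ Θ p < ε := by
  have hC := isClosed_closePairs (E := E) T r
  have hF : UpperSemicontinuousOn (fun p => u p.1 + v p.2) (closePairs T E r) :=
    (husc.comp continuous_fst.continuousOn fun p hp => hp.1).add
      (hvsc.comp continuous_snd.continuousOn fun p hp => hp.2.1)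
  have hfinal : IsClosed {p : SpaceTime E × SpaceTime E | p.1.fst = T ∨ p.2.fst = T} :=
    (isClosed_eq (by fun_prop) continuous_const).union
      (isClosed_eq (by fun_prop) continuous_const)
  filter_upwards [
    eventually_forall_lt_of_diagonal_lt hC hF (fun p hp h => hL _ hp.1 _ hp.2.1 h hp.2.2) R,
    eventually_forall_lt_of_diagonal_lt (hC.inter hfinal) (hF.mono inter_subset_left) (l := l)
      (fun p ⟨hp, hpT⟩ h => hterm _ hp.1 _ hp.2.1 (hpT.elim id h.trans)
        (hpT.elim h.symm.trans id) hp.2.2) R,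
    eventually_forall_lt_of_diagonal_lt hC (hΘ.upperSemicontinuous.upperSemicontinuousOn _)
      (fun p _ h => (hΘ₀ p h).trans_lt hε) R] with ρ h₁ h₂ h₃ p hp hp₁ hp₂ hρ
  exact ⟨h₁ p hp hp₁ hp₂ hρ, fun hpT => h₂ p ⟨hp, hpT⟩ hp₁ hp₂ hρ, h₃ p hp hp₁ hp₂ hρ⟩

/-- A doubling point with small penalty, away from the terminal time, whose two points are so close
in time that `Θ` is small compared with the spatial scale `ε`. -/
structure IsLocalisedDoublingPoint (T : ℝ) (u v : SpaceTime E → ℝ)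
    (Θ : SpaceTime E × SpaceTime E → ℝ) (a ε γ κ r : ℝ) (X Y ξ η p q : SpaceTime E)
    (M N : SpaceTime E →L[ℝ] SpaceTime E) : Prop extends
    IsDoublingPoint T u v a (1 / ε) (2 * γ) κ X Y ξ η p q M N where
  a_pos : 0 < a
  ε_pos : 0 < ε
  γ_pos : 0 < γ
  ε_le : ε ≤ κ
  γ_le : γ ≤ κ
  penalty_le : doublingPenalty a (1 / ε) (2 * γ) X Y ξ η ≤ 6 * κ
  fst_lt : X.fst < T
  snd_lt : Y.fst < T
  abs_time_sub_le : |X.fst - Y.fst| ≤ r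
  norm_space_sub_le : ‖X.snd - Y.snd‖ ≤ r
  time_modulus_le : Θ (X, Y) ≤ ε ^ 2

lemma mem_closePairs_of_doublingPenalty_le {a ε γ r ρ : ℝ} {X Y ξ η : SpaceTime E}
    (hX : X ∈ timeStrip T E) (hY : Y ∈ timeStrip T E) (ha : 0 < a) (hε : 0 < ε) (hγ : 0 < γ)
    (hr : 0 ≤ r) (hρ : 0 ≤ ρ) (haρ : 12 * B ≤ a * ρ ^ 2) (hεr : ε * (12 * B) ≤ r ^ 2)
    (h : doublingPenalty a (1 / ε) γ X Y ξ η ≤ 2 * B) :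
    (X, Y) ∈ closePairs T E r ∧ |X.fst - Y.fst| ≤ ρ := by
  have hc : 0 < 1 / ε := by positivity
  have hspace := mul_norm_sq_snd_sub_le_of_doublingPenalty_le ha.le hc.le hγ.le h
  have htime := mul_sq_fst_sub_le_of_doublingPenalty_le ha.le hc.le hγ.le h
  refine ⟨⟨hX, hY, ?_⟩, ?_⟩
  · rw [one_div_mul_eq_div, div_le_iff₀' hε] at hspace
    exact le_of_sq_le_sq (by linarith) hr
  · exact abs_le_of_sq_le_sq (le_of_mul_le_mul_left (by linarith) ha) hρ

theorem exists_isLocalisedDoublingPoint [FiniteDimensional ℝ E] {m κ r : ℝ}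
    (husc : UpperSemicontinuousOn u (timeStrip T E)) (hu : ∀ X ∈ timeStrip T E, |u X| ≤ B)
    (hvsc : UpperSemicontinuousOn v (timeStrip T E)) (hv : ∀ X ∈ timeStrip T E, |v X| ≤ B)
    {X₀ : SpaceTime E} (hX₀ : X₀ ∈ timeStrip T E) (hm : m ≤ u X₀ + v X₀) (hκ : 0 < κ)
    (hκm : 8 * κ ≤ m) (hr : 0 < r)
    (hterm : ∀ X ∈ timeStrip T E, ∀ Y ∈ timeStrip T E, X.fst = T → Y.fst = T →
      ‖X.snd - Y.snd‖ ≤ r → u X + v Y < m / 2)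
    {Θ : SpaceTime E × SpaceTime E → ℝ} (hΘ : Continuous Θ)
    (hΘ₀ : ∀ p, p.1.fst = p.2.fst → Θ p = 0) :
    ∃ a ε γ X Y ξ η p q M N, IsLocalisedDoublingPoint T u v Θ a ε γ κ r X Y ξ η p q M N := by
  obtain ⟨L, hL₀, hL⟩ := exists_isDiagonalSup hu hv hX₀
  have hB : 0 < B := by linarith [(abs_le.1 (hu X₀ hX₀)).2, (abs_le.1 (hv X₀ hX₀)).2]
  obtain ⟨r₁, hr₁, hLr⟩ := hL.exists_forall_le hκ
  set r₀ := min r₁ r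
  set ε := min κ (r₀ ^ 2 / (12 * B))
  have hr₀ : 0 < r₀ := by positivity
  have hε : 0 < ε := by positivity
  have hεr : ε * (12 * B) ≤ r₀ ^ 2 := (le_div_iff₀ (by positivity)).1 (min_le_right _ _)
  obtain ⟨X₁, hX₁, Y₁, hY₁, γ, hγ, hγκ, hval₁, hpen₁⟩ := hL.exists_doublingPenalty_le hκ hε
  obtain ⟨ρ, hnear, hρ, hρr⟩ := ((eventually_near_diagonal (r := r₀) (L := L + 2 * κ)
    husc hvsc (fun X hX Y hY ht hd => by linarith [hLr X hX Y hY ht (hd.trans (min_le_left _ _))])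
    (fun X hX Y hY htX htY hd => hterm X hX Y hY htX htY (hd.trans (min_le_right _ _)))
    hΘ (sq_pos_of_pos hε) hΘ₀ (T + √(2 * (2 * B) / (1 / ε)) + √(2 * (2 * B) / (2 * γ)))).and
      (Ioc_mem_nhdsGT hr)).exists
  set a := 12 * B / ρ ^ 2
  have ha : 0 < a := by positivity
  obtain ⟨X, Y, ξ, η, p, q, M, N, h⟩ := exists_isDoublingPoint (hX₀.1.trans hX₀.2) husc hu hvsc hv
    ha (one_div_pos.2 hε) (mul_pos two_pos hγ) hκ hX₁ hY₁ (by linarith [hpen₁ a])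
  have hval := h.le_add hX₁ hY₁ X₁ Y₁
  have hcrude : doublingPenalty a (1 / ε) (2 * γ) X Y ξ η ≤ 2 * B := by
    linarith [hpen₁ a, (abs_le.1 (hu X h.mem_fst)).2, (abs_le.1 (hv Y h.mem_snd)).2]
  have hcrude' := (doublingPenalty_comm a (1 / ε) (2 * γ) X Y ξ η).trans_le hcrude
  obtain ⟨hXY, htime⟩ := mem_closePairs_of_doublingPenalty_le h.mem_fst h.mem_snd ha hε
    (mul_pos two_pos hγ) hr₀.le hρ.le (div_mul_cancel₀ _ (by positivity)).ge hεr hcrude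
  obtain ⟨hlt, hltT, hΘlt⟩ := hnear (X, Y) hXY
    ((norm_le_of_doublingPenalty_le ha.le (one_div_pos.2 hε) (mul_pos two_pos hγ) hcrude).trans
      (by gcongr; exact abs_fst_le_of_mem_timeStrip h.mem_fst))
    ((norm_le_of_doublingPenalty_le ha.le (one_div_pos.2 hε) (mul_pos two_pos hγ) hcrude').trans
      (by gcongr; exact abs_fst_le_of_mem_timeStrip h.mem_snd)) htime
  have hpen := doublingPenalty_nonneg ha.le (one_div_pos.2 hε).le (mul_pos two_pos hγ).le X Y ξ η
  have hpen₁' := hpen₁ a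
  have hge : m / 2 ≤ u X + v Y := by linarith
  have hnotT : X.fst ≠ T ∧ Y.fst ≠ T := not_or.1 fun hT => (hltT hT).not_ge hge
  exact ⟨a, ε, γ, X, Y, ξ, η, p, q, M, N, h, ha, hε, hγ, min_le_left _ _, hγκ,
    by linarith, h.mem_fst.2.lt_of_ne hnotT.1, h.mem_snd.2.lt_of_ne hnotT.2,
    htime.trans hρr, hXY.2.2.trans (min_le_right _ _), hΘlt.le⟩

end Localisation

/-! ### Comparison in terms of jets -/

section Coefficients

variable {E ι : Type*} [NormedAddCommGroup E] [Fintype ι]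

/-- The drift `b` and the diffusion columns `s` are continuous, `‖b‖ ≤ Cb`, `∑ k, ‖s k‖² ≤ Cs`, and
both are `L`-Lipschitz in space for times in `[0, T]`, the columns in the `ℓ²` sense. -/
structure IsLipschitzCoefficients (T Cb Cs L : ℝ) (b : ℝ → E → E) (s : ℝ → E → ι → E) :
    Prop where
  continuous_drift : Continuous fun p : ℝ × E => b p.1 p.2
  continuous_col (k : ι) : Continuous fun p : ℝ × E => s p.1 p.2 k
  lipschitz_nonneg : 0 ≤ L
  norm_drift_le (t : ℝ) (x : E) : ‖b t x‖ ≤ Cb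
  sum_norm_col_sq_le (t : ℝ) (x : E) : ∑ k, ‖s t x k‖ ^ 2 ≤ Cs
  norm_drift_sub_le {t : ℝ} (ht : t ∈ Icc 0 T) (x y : E) : ‖b t x - b t y‖ ≤ L * ‖x - y‖
  sum_norm_col_sub_sq_le {t : ℝ} (ht : t ∈ Icc 0 T) (x y : E) :
    ∑ k, ‖s t x k - s t y k‖ ^ 2 ≤ (L * ‖x - y‖) ^ 2

/-- The squared increment of the coefficients between two times, at the position of the second
point. -/
def timeIncrementSq (b : ℝ → E → E) (s : ℝ → E → ι → E) (P : SpaceTime E × SpaceTime E) : ℝ :=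
  ‖b P.1.fst P.2.snd - b P.2.fst P.2.snd‖ ^ 2 +
    ∑ k, ‖s P.1.fst P.2.snd k - s P.2.fst P.2.snd k‖ ^ 2

lemma timeIncrementSq_of_fst_eq (b : ℝ → E → E) (s : ℝ → E → ι → E)
    {P : SpaceTime E × SpaceTime E} (h : P.1.fst = P.2.fst) : timeIncrementSq b s P = 0 := by
  simp [timeIncrementSq, h]

lemma sum_norm_sub_sq_le_two_mul (s₁ s₂ s₃ : ι → E) : ∑ k, ‖s₁ k - s₃ k‖ ^ 2 ≤
    2 * ∑ k, ‖s₁ k - s₂ k‖ ^ 2 + 2 * ∑ k, ‖s₂ k - s₃ k‖ ^ 2 := by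
  rw [← mul_add, ← Finset.sum_add_distrib, Finset.mul_sum]
  gcongr with k
  calc ‖s₁ k - s₃ k‖ ^ 2 ≤ (‖s₁ k - s₂ k‖ + ‖s₂ k - s₃ k‖) ^ 2 := by
        gcongr
        exact norm_sub_le_norm_sub_add_norm_sub _ _ _
    _ ≤ 2 * (‖s₁ k - s₂ k‖ ^ 2 + ‖s₂ k - s₃ k‖ ^ 2) := add_sq_le

variable {T Cb Cs L : ℝ} {b : ℝ → E → E} {s : ℝ → E → ι → E}

lemma IsLipschitzCoefficients.continuous_timeIncrementSq
    (h : IsLipschitzCoefficients T Cb Cs L b s) : Continuous (timeIncrementSq b s) := by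
  have hfst : Continuous fun P : SpaceTime E × SpaceTime E => (P.1.fst, P.2.snd) := by fun_prop
  have hsnd : Continuous fun P : SpaceTime E × SpaceTime E => (P.2.fst, P.2.snd) := by fun_prop
  exact (((h.continuous_drift.comp hfst).sub (h.continuous_drift.comp hsnd)).norm.pow 2).add
    (continuous_finsetSum _ fun k _ =>
      (((h.continuous_col k).comp hfst).sub ((h.continuous_col k).comp hsnd)).norm.pow 2)

end Coefficients

section AnchorEstimates

variable {E : Type*} [SeminormedAddCommGroup E]

lemma mul_norm_le_of_mul_norm_sq_le {γ κ : ℝ} {ξ : E} (hγ : 0 ≤ γ) (hγκ : γ ≤ κ)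
    (h : γ * ‖ξ‖ ^ 2 ≤ 6 * κ) : γ * ‖ξ‖ ≤ 3 * κ := by
  have hκ : 0 ≤ κ := hγ.trans hγκ
  refine le_of_sq_le_sq ?_ (by positivity)
  calc (γ * ‖ξ‖) ^ 2 = γ * (γ * ‖ξ‖ ^ 2) := by ring
    _ ≤ κ * (6 * κ) := by gcongr
    _ ≤ (3 * κ) ^ 2 := by linarith [sq_nonneg κ]

lemma mul_norm_add_sq_sub_le {γ κ R : ℝ} {ξ ζ : E} (hγ : 0 ≤ γ) (hγκ : γ ≤ κ)
    (h : γ * ‖ξ‖ ^ 2 ≤ 6 * κ) (hζ : ‖ζ‖ ≤ R) :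
    γ * (‖ξ + ζ‖ ^ 2 - ‖ξ‖ ^ 2) ≤ (6 * R + R ^ 2) * κ := by
  have hR : 0 ≤ R := (norm_nonneg ζ).trans hζ
  have hξ := mul_norm_le_of_mul_norm_sq_le hγ hγκ h
  calc γ * (‖ξ + ζ‖ ^ 2 - ‖ξ‖ ^ 2) ≤ γ * ((‖ξ‖ + R) ^ 2 - ‖ξ‖ ^ 2) := by
        gcongr
        exact (norm_add_le _ _).trans (by gcongr)
    _ = 2 * (γ * ‖ξ‖) * R + γ * R ^ 2 := by ring
    _ ≤ 2 * (3 * κ) * R + κ * R ^ 2 := by gcongr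
    _ = (6 * R + R ^ 2) * κ := by ring

end AnchorEstimates

section LocalisedEstimates

variable {E ι : Type*} [NormedAddCommGroup E] [InnerProductSpace ℝ E] [Fintype ι]

lemma inner_add_inner_le_of_norm_sub_le {β₁ β₂ p q D G₁ G₂ : E} {C κ : ℝ}
    (h₁ : ‖β₁‖ ≤ C) (h₂ : ‖β₂‖ ≤ C) (hp : ‖p - (D + G₁)‖ ≤ κ) (hq : ‖q - (-D + G₂)‖ ≤ κ) :
    ⟪β₁, p⟫ + ⟪β₂, q⟫ ≤ ‖β₁ - β₂‖ * ‖D‖ + C * (2 * κ + ‖G₁‖ + ‖G₂‖) := by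
  have hsplit : ⟪β₁, p⟫ + ⟪β₂, q⟫ = ⟪β₁ - β₂, D⟫ + ⟪β₁, p - (D + G₁)⟫ +
      ⟪β₂, q - (-D + G₂)⟫ + ⟪β₁, G₁⟫ + ⟪β₂, G₂⟫ := by
    simp only [inner_sub_left, inner_sub_right, inner_add_right, inner_neg_right]
    ring
  have hC : 0 ≤ C := (norm_nonneg _).trans h₁
  have hcs {β z : E} {r : ℝ} (hβ : ‖β‖ ≤ C) (hz : ‖z‖ ≤ r) : ⟪β, z⟫ ≤ C * r :=
    (real_inner_le_norm β z).trans (mul_le_mul hβ hz (norm_nonneg z) hC)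
  linarith [real_inner_le_norm (β₁ - β₂) D, hcs h₁ hp, hcs h₂ hq, hcs h₁ le_rfl (z := G₁),
    hcs h₂ le_rfl (z := G₂)]

namespace IsLocalisedDoublingPoint

section Penalty

variable {T a ε γ κ r : ℝ} {u v : SpaceTime E → ℝ} {Θ : SpaceTime E × SpaceTime E → ℝ}
  {X Y ξ η p q : SpaceTime E} {M N : SpaceTime E →L[ℝ] SpaceTime E}

lemma κ_pos (h : IsLocalisedDoublingPoint T u v Θ a ε γ κ r X Y ξ η p q M N) : 0 < κ :=
  h.ε_pos.trans_le h.ε_le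

lemma norm_snd_sub_sq_le (h : IsLocalisedDoublingPoint T u v Θ a ε γ κ r X Y ξ η p q M N) :
    ‖X.snd - Y.snd‖ ^ 2 ≤ 36 * κ * ε := by
  have hpen := mul_norm_sq_snd_sub_le_of_doublingPenalty_le h.a_pos.le (one_div_pos.2 h.ε_pos).le
    (mul_pos two_pos h.γ_pos).le h.penalty_le
  rw [one_div_mul_eq_div, div_le_iff₀ h.ε_pos] at hpen
  linarith

lemma norm_anchor_sub_sq_le (h : IsLocalisedDoublingPoint T u v Θ a ε γ κ r X Y ξ η p q M N) :
    ‖ξ.snd - η.snd‖ ^ 2 ≤ 12 * κ * ε := by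
  have hpen := mul_norm_sq_le_of_doublingPenalty_le h.a_pos.le (mul_pos two_pos h.γ_pos).le
    h.penalty_le
  rw [one_div_mul_eq_div, div_le_iff₀ h.ε_pos] at hpen
  linarith [sq_nonneg ‖X.snd - ξ.snd‖, sq_nonneg ‖Y.snd - η.snd‖]

lemma mul_norm_fst_anchor_sq_le
    (h : IsLocalisedDoublingPoint T u v Θ a ε γ κ r X Y ξ η p q M N) :
    γ * ‖ξ.snd‖ ^ 2 ≤ 6 * κ := by
  linarith [mul_norm_sq_anchor_le_of_doublingPenalty_le h.a_pos.le (one_div_pos.2 h.ε_pos).le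
    (mul_pos two_pos h.γ_pos).le h.penalty_le]

lemma mul_norm_snd_anchor_sq_le
    (h : IsLocalisedDoublingPoint T u v Θ a ε γ κ r X Y ξ η p q M N) :
    γ * ‖η.snd‖ ^ 2 ≤ 6 * κ := by
  linarith [mul_norm_sq_anchor_le_of_doublingPenalty_le h.a_pos.le (one_div_pos.2 h.ε_pos).le
    (mul_pos two_pos h.γ_pos).le ((doublingPenalty_comm _ _ _ X Y ξ η).trans_le h.penalty_le)]

lemma add_space_le_of_norm_le (h : IsLocalisedDoublingPoint T u v Θ a ε γ κ r X Y ξ η p q M N)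
    {R : ℝ} {ζ : E} (hζ : ‖ζ‖ ≤ R) :
    u (WithLp.toLp 2 (X.fst, X.snd + ζ)) + v (WithLp.toLp 2 (Y.fst, Y.snd + ζ)) ≤
      u X + v Y + (1 + 2 * (6 * R + R ^ 2)) * κ := by
  have hξ := mul_norm_add_sq_sub_le h.γ_pos.le h.γ_le h.mul_norm_fst_anchor_sq_le hζ
  have hη := mul_norm_add_sq_sub_le h.γ_pos.le h.γ_le h.mul_norm_snd_anchor_sq_le hζ
  linarith [h.add_space_le ζ]

end Penalty

variable {T a ε γ κ r Cb Cs L : ℝ} {u v : SpaceTime E → ℝ} {b : ℝ → E → E} {s : ℝ → E → ι → E}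
  {X Y ξ η p q : SpaceTime E} {M N : SpaceTime E →L[ℝ] SpaceTime E}

lemma norm_drift_sub_le
    (h : IsLocalisedDoublingPoint T u v (timeIncrementSq b s) a ε γ κ r X Y ξ η p q M N)
    (hbs : IsLipschitzCoefficients T Cb Cs L b s) :
    ‖b X.fst X.snd - b Y.fst Y.snd‖ ≤ L * ‖X.snd - Y.snd‖ + ε := by
  have htime : ‖b X.fst Y.snd - b Y.fst Y.snd‖ ≤ ε :=
    le_of_sq_le_sq ((le_add_of_nonneg_right (by positivity)).trans h.time_modulus_le) h.ε_pos.le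
  linarith [hbs.norm_drift_sub_le h.mem_fst X.snd Y.snd,
    norm_sub_le_norm_sub_add_norm_sub (b X.fst X.snd) (b X.fst Y.snd) (b Y.fst Y.snd)]

lemma sum_norm_col_sub_sq_le
    (h : IsLocalisedDoublingPoint T u v (timeIncrementSq b s) a ε γ κ r X Y ξ η p q M N)
    (hbs : IsLipschitzCoefficients T Cb Cs L b s) :
    ∑ k, ‖s X.fst X.snd k - s Y.fst Y.snd k‖ ^ 2 ≤ 2 * ε * ((36 * L ^ 2 + 1) * κ) := by
  have htime : ∑ k, ‖s X.fst Y.snd k - s Y.fst Y.snd k‖ ^ 2 ≤ ε ^ 2 :=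
    (le_add_of_nonneg_left (by positivity)).trans h.time_modulus_le
  have hspace : (L * ‖X.snd - Y.snd‖) ^ 2 ≤ L ^ 2 * (36 * κ * ε) := by
    rw [mul_pow]
    gcongr
    exact h.norm_snd_sub_sq_le
  have hεκ : ε ^ 2 ≤ ε * κ := by
    rw [sq]
    exact mul_le_mul_of_nonneg_left h.ε_le h.ε_pos.le
  linarith [sum_norm_sub_sq_le_two_mul (s X.fst X.snd) (s X.fst Y.snd) (s Y.fst Y.snd),
    hbs.sum_norm_col_sub_sq_le h.mem_fst X.snd Y.snd]

lemma norm_drift_sub_mul_le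
    (h : IsLocalisedDoublingPoint T u v (timeIncrementSq b s) a ε γ κ r X Y ξ η p q M N)
    (hbs : IsLipschitzCoefficients T Cb Cs L b s) :
    ‖b X.fst X.snd - b Y.fst Y.snd‖ * ‖(1 / ε) • (ξ.snd - η.snd)‖ ≤ (24 * L + 4) * κ := by
  have hε := h.ε_pos
  have hL := hbs.lipschitz_nonneg
  have hanchor : ‖ξ.snd - η.snd‖ ≤ 4 * κ := by
    refine le_of_sq_le_sq ?_ (by linarith [h.κ_pos])
    calc ‖ξ.snd - η.snd‖ ^ 2 ≤ 12 * κ * ε := h.norm_anchor_sub_sq_le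
      _ ≤ 12 * κ * κ := by
        gcongr
        · linarith [h.κ_pos]
        · exact h.ε_le
      _ ≤ (4 * κ) ^ 2 := by linarith [sq_nonneg κ]
  have hprod : ‖X.snd - Y.snd‖ * ‖ξ.snd - η.snd‖ ≤ 24 * κ * ε := by
    linarith [two_mul_le_add_sq ‖X.snd - Y.snd‖ ‖ξ.snd - η.snd‖, h.norm_snd_sub_sq_le,
      h.norm_anchor_sub_sq_le]
  rw [norm_smul, Real.norm_of_nonneg (by positivity), one_div, ← div_eq_inv_mul, ← mul_div_assoc,
    div_le_iff₀ hε]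
  calc ‖b X.fst X.snd - b Y.fst Y.snd‖ * ‖ξ.snd - η.snd‖
      ≤ (L * ‖X.snd - Y.snd‖ + ε) * ‖ξ.snd - η.snd‖ := by
        gcongr
        exact h.norm_drift_sub_le hbs
    _ = L * (‖X.snd - Y.snd‖ * ‖ξ.snd - η.snd‖) + ε * ‖ξ.snd - η.snd‖ := by ring
    _ ≤ L * (24 * κ * ε) + ε * (4 * κ) := by gcongr
    _ = (24 * L + 4) * κ * ε := by ring

lemma inner_drift_add_le
    (h : IsLocalisedDoublingPoint T u v (timeIncrementSq b s) a ε γ κ r X Y ξ η p q M N)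
    (hbs : IsLipschitzCoefficients T Cb Cs L b s) :
    ⟪b X.fst X.snd, p.snd⟫ + ⟪b Y.fst Y.snd, q.snd⟫ ≤ (24 * L + 4 + 14 * Cb) * κ := by
  have hCb : 0 ≤ Cb := (norm_nonneg _).trans (hbs.norm_drift_le 0 0)
  have hanchor (ζ : E) (hζ : γ * ‖ζ‖ ^ 2 ≤ 6 * κ) : ‖(2 * γ) • ζ‖ ≤ 6 * κ := by
    rw [norm_smul, Real.norm_of_nonneg (mul_pos two_pos h.γ_pos).le]
    linarith [mul_norm_le_of_mul_norm_sq_le h.γ_pos.le h.γ_le hζ]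
  have hq := h.norm_snd_snd_sub_le
  rw [neg_smul] at hq
  calc _ ≤ _ := inner_add_inner_le_of_norm_sub_le (hbs.norm_drift_le _ _)
        (hbs.norm_drift_le _ _) h.norm_snd_fst_sub_le hq
    _ ≤ (24 * L + 4) * κ + Cb * (2 * κ + 6 * κ + 6 * κ) :=
      add_le_add (h.norm_drift_sub_mul_le hbs) (mul_le_mul_of_nonneg_left (by
        linarith [hanchor _ h.mul_norm_fst_anchor_sq_le, hanchor _ h.mul_norm_snd_anchor_sq_le])
        hCb)
    _ = _ := by ring

lemma sum_halfQuadForm_col_add_le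
    (h : IsLocalisedDoublingPoint T u v (timeIncrementSq b s) a ε γ κ r X Y ξ η p q M N)
    (hbs : IsLipschitzCoefficients T Cb Cs L b s) :
    ∑ k, halfQuadForm M (WithLp.toLp 2 (0, s X.fst X.snd k)) +
      ∑ k, halfQuadForm N (WithLp.toLp 2 (0, s Y.fst Y.snd k)) ≤
        (36 * L ^ 2 + 1 + 4 * Cs) * κ := by
  have hε := h.ε_pos
  have hγκ : 2 * γ / 2 + κ ≤ 2 * κ := by linarith [h.γ_le]
  have hκ := h.κ_pos
  rw [← Finset.sum_add_distrib]
  calc _ ≤ ∑ k, (1 / ε / 2 * ‖s X.fst X.snd k - s Y.fst Y.snd k‖ ^ 2 +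
        (2 * γ / 2 + κ) * (‖s X.fst X.snd k‖ ^ 2 + ‖s Y.fst Y.snd k‖ ^ 2)) :=
        Finset.sum_le_sum fun k _ => h.halfQuadForm_space_add_le _ _
    _ = 1 / ε / 2 * ∑ k, ‖s X.fst X.snd k - s Y.fst Y.snd k‖ ^ 2 + (2 * γ / 2 + κ) *
        (∑ k, ‖s X.fst X.snd k‖ ^ 2 + ∑ k, ‖s Y.fst Y.snd k‖ ^ 2) := by
      rw [Finset.sum_add_distrib, ← Finset.mul_sum, ← Finset.mul_sum, Finset.sum_add_distrib]
    _ ≤ 1 / ε / 2 * (2 * ε * ((36 * L ^ 2 + 1) * κ)) + 2 * κ * (Cs + Cs) := by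
      gcongr
      · exact h.sum_norm_col_sub_sq_le hbs
      · exact hbs.sum_norm_col_sq_le _ _
      · exact hbs.sum_norm_col_sq_le _ _
    _ = (36 * L ^ 2 + 1 + 4 * Cs) * κ := by
      field_simp
      ring

lemma parabolicSymbol_add_le
    (h : IsLocalisedDoublingPoint T u v (timeIncrementSq b s) a ε γ κ r X Y ξ η p q M N)
    (hbs : IsLipschitzCoefficients T Cb Cs L b s) :
    parabolicSymbol (b X.fst X.snd) (s X.fst X.snd) p M +
      parabolicSymbol (b Y.fst Y.snd) (s Y.fst Y.snd) q N ≤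
        (7 + 24 * L + 14 * Cb + 36 * L ^ 2 + 4 * Cs) * κ := by
  unfold parabolicSymbol
  linarith [h.fst_add_fst_le, h.inner_drift_add_le hbs, h.sum_halfQuadForm_col_add_le hbs]

end IsLocalisedDoublingPoint

end LocalisedEstimates

section JetComparison

variable {E ι : Type*} [NormedAddCommGroup E] [InnerProductSpace ℝ E] [Fintype ι]

/-- The subsolution inequality of (HJB) read on second-order superjets, with the supremum in the
intervention operator replaced by approximate maximisers. -/
def IsJetSubsolution (T : ℝ) (b : ℝ → E → E) (s : ℝ → E → ι → E) (f : ℝ → E → ℝ) (K : Set E)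
    (c : ℝ → E → E → ℝ) (u : SpaceTime E → ℝ) : Prop :=
  ∀ ⦃X p : SpaceTime E⦄ ⦃M : SpaceTime E →L[ℝ] SpaceTime E⦄, X.fst ∈ Ico 0 T →
    M.toLinearMap.IsSymmetric → IsSuperjetWithinAt u (timeStrip T E) p M X →
      0 ≤ parabolicSymbol (b X.fst X.snd) (s X.fst X.snd) p M + f X.fst X.snd ∨
        ∀ δ > 0, ∃ ζ ∈ K,
          u X ≤ u (WithLp.toLp 2 (X.fst, X.snd + ζ)) - c X.fst X.snd ζ + δ

/-- The supersolution inequality of (HJB) for `-v`, strict by `α` in the equation and by `β` in the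
obstacle condition, read on second-order superjets of `v`. -/
def IsNegJetStrictSupersolution (T α β : ℝ) (b : ℝ → E → E) (s : ℝ → E → ι → E)
    (f : ℝ → E → ℝ) (K : Set E) (c : ℝ → E → E → ℝ) (v : SpaceTime E → ℝ) : Prop :=
  ∀ ⦃X p : SpaceTime E⦄ ⦃M : SpaceTime E →L[ℝ] SpaceTime E⦄, X.fst ∈ Ico 0 T →
    M.toLinearMap.IsSymmetric → IsSuperjetWithinAt v (timeStrip T E) p M X →
      f X.fst X.snd + α ≤ parabolicSymbol (b X.fst X.snd) (s X.fst X.snd) p M ∧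
        ∀ ζ ∈ K, v X + β ≤ v (WithLp.toLp 2 (X.fst, X.snd + ζ)) + c X.fst X.snd ζ

variable {T B Cb Cs L R α β κ r : ℝ} {b : ℝ → E → E} {s : ℝ → E → ι → E} {f : ℝ → E → ℝ}
  {g : E → ℝ} {K : Set E} {c : ℝ → E → E → ℝ} {u v : SpaceTime E → ℝ}

lemma eventually_mul_lt (C : ℝ) {l : ℝ} (hl : 0 < l) : ∀ᶠ κ in 𝓝[>] (0 : ℝ), C * κ < l := by
  have hlim : Tendsto (fun κ => C * κ) (𝓝[>] 0) (𝓝 (C * 0)) :=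
    (continuous_const_mul C).continuousWithinAt
  exact hlim.eventually_lt_const (by rwa [mul_zero])

lemma IsLocalisedDoublingPoint.min_le_of_isJetSubsolution
    {a ε γ : ℝ} {X Y ξ η p q : SpaceTime E} {M N : SpaceTime E →L[ℝ] SpaceTime E}
    (h : IsLocalisedDoublingPoint T u v (timeIncrementSq b s) a ε γ κ r X Y ξ η p q M N)
    (hbs : IsLipschitzCoefficients T Cb Cs L b s) (hK : ∀ ζ ∈ K, ‖ζ‖ ≤ R)
    (hu : IsJetSubsolution T b s f K c u) (hv : IsNegJetStrictSupersolution T α β b s f K c v)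
    (hf : |f X.fst X.snd - f Y.fst Y.snd| ≤ κ)
    (hc : ∀ ζ ∈ K, |c X.fst X.snd ζ - c Y.fst Y.snd ζ| ≤ κ) :
    α ≤ (8 + 24 * L + 14 * Cb + 36 * L ^ 2 + 4 * Cs) * κ ∨
      β ≤ (3 + 2 * (6 * R + R ^ 2)) * κ := by
  obtain ⟨hpde_v, hobst_v⟩ := hv ⟨h.mem_snd.1, h.snd_lt⟩ h.symm_snd h.superjet_snd
  rcases hu ⟨h.mem_fst.1, h.fst_lt⟩ h.symm_fst h.superjet_fst with hpde_u | hobst_u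
  · left
    linarith [h.parabolicSymbol_add_le hbs, (abs_le.1 hf).2]
  · right
    obtain ⟨ζ, hζ, hle⟩ := hobst_u κ h.κ_pos
    linarith [hobst_v ζ hζ, h.add_space_le_of_norm_le (hK ζ hζ), (abs_le.1 (hc ζ hζ)).1]

theorem IsJetSubsolution.add_nonpos [FiniteDimensional ℝ E]
    (hbs : IsLipschitzCoefficients T Cb Cs L b s)
    (hf : UniformContinuousOn (fun P : ℝ × E => f P.1 P.2) (Icc 0 T ×ˢ univ))
    (hg : UniformContinuous g) (hK : ∀ ζ ∈ K, ‖ζ‖ ≤ R)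
    (hc : UniformContinuousOn (fun P : ℝ × E × E => c P.1 P.2.1 P.2.2)
      (Icc 0 T ×ˢ univ ×ˢ K))
    (hα : 0 < α) (hβ : 0 < β)
    (husc : UpperSemicontinuousOn u (timeStrip T E)) (huB : ∀ X ∈ timeStrip T E, |u X| ≤ B)
    (hvsc : UpperSemicontinuousOn v (timeStrip T E)) (hvB : ∀ X ∈ timeStrip T E, |v X| ≤ B)
    (hu : IsJetSubsolution T b s f K c u) (hv : IsNegJetStrictSupersolution T α β b s f K c v)
    (huT : ∀ X : SpaceTime E, X.fst = T → u X ≤ g X.snd)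
    (hvT : ∀ X : SpaceTime E, X.fst = T → v X ≤ -g X.snd)
    {X₀ : SpaceTime E} (hX₀ : X₀ ∈ timeStrip T E) : u X₀ + v X₀ ≤ 0 := by
  by_contra! hm
  obtain ⟨κ, hκα, hκβ, hκm, hκ⟩ := ((eventually_mul_lt
    (8 + 24 * L + 14 * Cb + 36 * L ^ 2 + 4 * Cs) hα).and ((eventually_mul_lt
      (3 + 2 * (6 * R + R ^ 2)) hβ).and ((eventually_mul_lt 8 hm).and self_mem_nhdsWithin))).exists
  obtain ⟨rf, hrf, hf⟩ := Metric.uniformContinuousOn_iff_le.1 hf κ hκ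
  obtain ⟨rc, hrc, hc⟩ := Metric.uniformContinuousOn_iff_le.1 hc κ hκ
  obtain ⟨rg, hrg, hg⟩ := Metric.uniformContinuous_iff_le.1 hg (2 * κ) (mul_pos two_pos hκ)
  have hterm (X : SpaceTime E) (_ : X ∈ timeStrip T E) (Y : SpaceTime E) (_ : Y ∈ timeStrip T E)
      (hXT : X.fst = T) (hYT : Y.fst = T) (hXY : ‖X.snd - Y.snd‖ ≤ min rf (min rc rg)) :
      u X + v Y < (u X₀ + v X₀) / 2 := by
    have hgXY := hg (dist_eq_norm X.snd Y.snd ▸ hXY.trans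
      ((min_le_right _ _).trans (min_le_right _ _)))
    linarith [(abs_le.1 hgXY).2, huT X hXT, hvT Y hYT, show 0 < κ from hκ]
  obtain ⟨a, ε, γ, X, Y, ξ, η, p, q, M, N, h⟩ := exists_isLocalisedDoublingPoint husc huB hvsc hvB
    hX₀ le_rfl hκ hκm.le (by positivity) hterm hbs.continuous_timeIncrementSq
    fun _ => timeIncrementSq_of_fst_eq b s
  have hdist : dist (X.fst, X.snd) (Y.fst, Y.snd) ≤ min rf (min rc rg) := by
    rw [Prod.dist_eq, Real.dist_eq, dist_eq_norm]
    exact sup_le h.abs_time_sub_le h.norm_space_sub_le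
  have hfXY := hf (X.fst, X.snd) ⟨h.mem_fst, mem_univ _⟩ (Y.fst, Y.snd) ⟨h.mem_snd, mem_univ _⟩
    (hdist.trans (min_le_left _ _))
  have hcXY (ζ : E) (hζ : ζ ∈ K) := hc (X.fst, X.snd, ζ) ⟨h.mem_fst, mem_univ _, hζ⟩
    (Y.fst, Y.snd, ζ) ⟨h.mem_snd, mem_univ _, hζ⟩ (by
      have hle := hdist.trans ((min_le_right _ _).trans (min_le_left _ _))
      rw [Prod.dist_eq, sup_le_iff] at hle
      rw [Prod.dist_eq, Prod.dist_eq, dist_self]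
      exact sup_le hle.1 (sup_le hle.2 hrc.le))
  exact (h.min_le_of_isJetSubsolution hbs hK hu hv hfXY hcXY).elim hκα.not_ge hκβ.not_ge

end JetComparison

/-! ### Comparison principle -/

section MatrixCoefficients

lemma sum_norm_euclideanCol_sq_le (A : Matrix (Fin n) (Fin d) ℝ) :
    ∑ k, ‖euclideanCol A k‖ ^ 2 ≤ (∑ i, ∑ j, |A i j|) ^ 2 := by
  have hcol (k : Fin d) : ‖euclideanCol A k‖ ≤ ∑ i, |A i k| := by
    rw [EuclideanSpace.norm_eq]
    refine Real.sqrt_le_iff.2 ⟨Finset.sum_nonneg fun _ _ => abs_nonneg _, ?_⟩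
    exact Finset.sum_sq_le_sq_sum_of_nonneg fun i _ => norm_nonneg _
  calc ∑ k, ‖euclideanCol A k‖ ^ 2 ≤ ∑ k, (∑ i, |A i k|) ^ 2 := by
        gcongr with k
        exact hcol k
    _ ≤ (∑ k, ∑ i, |A i k|) ^ 2 := Finset.sum_sq_le_sq_sum_of_nonneg
        fun k _ => Finset.sum_nonneg fun _ _ => abs_nonneg _
    _ = _ := by rw [Finset.sum_comm]

lemma sum_norm_euclideanCol_sub_sq_le (A B : Matrix (Fin n) (Fin d) ℝ) :
    ∑ k, ‖euclideanCol A k - euclideanCol B k‖ ^ 2 ≤ (∑ i, ∑ j, |A i j - B i j|) ^ 2 :=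
  sum_norm_euclideanCol_sq_le (A - B)

lemma continuous_euclideanCol (k : Fin d) :
    Continuous fun A : Matrix (Fin n) (Fin d) ℝ => euclideanCol A k :=
  (PiLp.continuous_toLp 2 _).comp (continuous_pi fun i => continuous_id.matrix_elem i k)

lemma isLipschitzCoefficients_euclideanCol {T Cb Cs L : ℝ} {b : ℝ → EucSp n → EucSp n}
    {σ : ℝ → EucSp n → Matrix (Fin n) (Fin d) ℝ}
    (hb : Continuous fun p : ℝ × EucSp n => b p.1 p.2)
    (hσ : Continuous fun p : ℝ × EucSp n => σ p.1 p.2)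
    (hCb : ∀ t x, ‖b t x‖ ≤ Cb) (hCs : ∀ t x i j, |σ t x i j| ≤ Cs) (hL : 0 ≤ L)
    (hlip : ∀ t ∈ Icc 0 T, ∀ x y,
      ‖b t x - b t y‖ + ∑ i, ∑ j, |σ t x i j - σ t y i j| ≤ L * ‖x - y‖) :
    IsLipschitzCoefficients T Cb ((∑ _i : Fin n, ∑ _j : Fin d, Cs) ^ 2) L b
      fun t x => euclideanCol (σ t x) where
  continuous_drift := hb
  continuous_col k := (continuous_euclideanCol k).comp hσ
  lipschitz_nonneg := hL
  norm_drift_le := hCb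
  sum_norm_col_sq_le t x := by
    refine (sum_norm_euclideanCol_sq_le _).trans ?_
    gcongr
    exact hCs t x _ _
  norm_drift_sub_le ht x y := (le_add_of_nonneg_right (by positivity)).trans (hlip _ ht x y)
  sum_norm_col_sub_sq_le ht x y := by
    refine (sum_norm_euclideanCol_sub_sq_le _ _).trans ?_
    gcongr
    exact (le_add_of_nonneg_left (norm_nonneg _)).trans (hlip _ ht x y)

end MatrixCoefficients

section Intervention

variable {K : Set (EucSp n)} {c : ℝ → EucSp n → EucSp n → ℝ} {W : ℝ → EucSp n → ℝ} {t B : ℝ}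
  {x ζ : EucSp n}

lemma sub_le_Mop (hW : ∀ y, W t y ≤ B) (hc : ∀ ξ ∈ K, 0 ≤ c t x ξ) (hζ : ζ ∈ K) :
    W t (x + ζ) - c t x ζ ≤ Mop K c W t x := by
  refine le_csSup ⟨B, ?_⟩ ⟨ζ, hζ, rfl⟩
  rintro _ ⟨ξ, hξ, rfl⟩
  exact (sub_le_self _ (hc ξ hξ)).trans (hW _)

lemma exists_Mop_sub_lt (hK : K.Nonempty) (c : ℝ → EucSp n → EucSp n → ℝ)
    (W : ℝ → EucSp n → ℝ) (t : ℝ) (x : EucSp n) {δ : ℝ} (hδ : 0 < δ) :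
    ∃ ζ ∈ K, Mop K c W t x - δ < W t (x + ζ) - c t x ζ := by
  obtain ⟨_, ⟨ζ, hζ, rfl⟩, hlt⟩ := exists_lt_of_lt_csSup (hK.image _) (sub_lt_self _ hδ)
  exact ⟨ζ, hζ, hlt⟩

end Intervention

section JetCalculus

variable {F : Type*} [NormedAddCommGroup F] [InnerProductSpace ℝ F] {u : F → ℝ} {D : Set F}
  {p x : F} {M : F →L[ℝ] F}

lemma IsSuperjetWithinAt.add_affine (h : IsSuperjetWithinAt u D p M x) (a : F) (r : ℝ) :
    IsSuperjetWithinAt (fun y => u y + (⟪a, y⟫ + r)) D (p + a) M x := by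
  intro ε hε
  filter_upwards [h ε hε] with y hy
  rw [inner_add_left, inner_sub_right a]
  linarith

lemma IsSuperjetWithinAt.const_mul (h : IsSuperjetWithinAt u D p M x) {l : ℝ} (hl : 0 < l) :
    IsSuperjetWithinAt (fun y => l * u y) D (l • p) (l • M) x := by
  intro ε hε
  filter_upwards [h (ε / l) (div_pos hε hl)] with y hy
  rw [real_inner_smul_left, halfQuadForm_smul_clm]
  calc l * u y ≤ l * (u x + ⟪p, y - x⟫ + halfQuadForm M (y - x) + ε / l * ‖y - x‖ ^ 2) := by gcongr
    _ = _ := by field_simp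

variable {ι : Type*} [Fintype ι]

lemma parabolicSymbol_smul (b : F) (s : ι → F) (p : SpaceTime F)
    (M : SpaceTime F →L[ℝ] SpaceTime F) (l : ℝ) :
    parabolicSymbol b s (l • p) (l • M) = l * parabolicSymbol b s p M := by
  simp only [parabolicSymbol, halfQuadForm_smul_clm, WithLp.smul_fst, WithLp.smul_snd,
    inner_smul_right, ← Finset.mul_sum, smul_eq_mul]
  ring

lemma parabolicSymbol_add_time (b : F) (s : ι → F) (p : SpaceTime F)
    (M : SpaceTime F →L[ℝ] SpaceTime F) (a : ℝ) :
    parabolicSymbol b s (p + WithLp.toLp 2 (a, 0)) M = parabolicSymbol b s p M + a := by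
  simp only [parabolicSymbol, WithLp.add_fst, WithLp.add_snd, WithLp.toLp_fst, WithLp.toLp_snd,
    add_zero]
  ring

end JetCalculus

section StrictPerturbation

/-- The negative of `(1 - μ) V + μ (A (T - t) + C)`. For `A` and `C` large compared with `f` and
`g`, the barrier `A (T - t) + C` is a strict supersolution, and the convex combination inherits a
strictness proportional to `μ`. -/
def negStrictPerturbation (T A C μ : ℝ) (V : ℝ → EucSp n → ℝ) (X : SpaceTime (EucSp n)) : ℝ :=
  -((1 - μ) * V X.fst X.snd + μ * (A * (T - X.fst) + C))

variable {T A C μ B k : ℝ} {b : ℝ → EucSp n → EucSp n}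
  {σ : ℝ → EucSp n → Matrix (Fin n) (Fin d) ℝ}
  {f : ℝ → EucSp n → ℝ} {g : EucSp n → ℝ} {K : Set (EucSp n)} {c : ℝ → EucSp n → EucSp n → ℝ}
  {U V : ℝ → EucSp n → ℝ} {X p : SpaceTime (EucSp n)}
  {M : SpaceTime (EucSp n) →L[ℝ] SpaceTime (EucSp n)}

lemma upperSemicontinuousOn_negStrictPerturbation
    (hV : UpperSemicontinuousOn (fun X => -V X.fst X.snd) (timeStrip T (EucSp n)))
    (hμ : μ ≤ 1) :
    UpperSemicontinuousOn (negStrictPerturbation T A C μ V) (timeStrip T (EucSp n)) := by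
  have hbarrier : Continuous fun X : SpaceTime (EucSp n) => μ * (A * (T - X.fst) + C) := by
    fun_prop
  have hscaled : UpperSemicontinuousOn (fun X => (1 - μ) * -V X.fst X.snd)
      (timeStrip T (EucSp n)) :=
    (continuous_const_mul (1 - μ)).comp_upperSemicontinuousOn hV
      (monotone_mul_left_of_nonneg (sub_nonneg.2 hμ))
  convert upperSemicontinuousOn_sub_of_continuous hscaled hbarrier using 2 with X
  rw [negStrictPerturbation]
  ring

lemma abs_negStrictPerturbation_le (hA : 0 ≤ A) (hC : 0 ≤ C) (hμ₀ : 0 ≤ μ) (hμ₁ : μ ≤ 1)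
    (hX : X ∈ timeStrip T (EucSp n)) (hV : |V X.fst X.snd| ≤ B) :
    |negStrictPerturbation T A C μ V X| ≤ B + (A * T + C) := by
  have hbarrier₀ : 0 ≤ A * (T - X.fst) + C :=
    add_nonneg (mul_nonneg hA (sub_nonneg.2 hX.2)) hC
  have hbarrier : A * (T - X.fst) + C ≤ A * T + C := by
    gcongr
    exact sub_le_self _ hX.1
  rw [negStrictPerturbation, abs_neg]
  refine (abs_add_le _ _).trans (add_le_add ?_ ?_)
  · rw [abs_mul, abs_of_nonneg (sub_nonneg.2 hμ₁)]
    exact (mul_le_of_le_one_left (abs_nonneg _) (sub_le_self _ hμ₀)).trans hV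
  · rw [abs_of_nonneg (mul_nonneg hμ₀ hbarrier₀)]
    exact (mul_le_of_le_one_left hbarrier₀ hμ₁).trans hbarrier

lemma negStrictPerturbation_terminal_le (hgC : g X.snd ≤ C) (hV : g X.snd ≤ V T X.snd)
    (hμ₀ : 0 ≤ μ) (hμ₁ : μ ≤ 1) (hX : X.fst = T) :
    negStrictPerturbation T A C μ V X ≤ -g X.snd := by
  rw [negStrictPerturbation, hX, neg_le_neg_iff]
  linarith [mul_le_mul_of_nonneg_left hV (sub_nonneg.2 hμ₁), mul_le_mul_of_nonneg_left hgC hμ₀]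

lemma IsSuperjetWithinAt.of_negStrictPerturbation (hμ : μ < 1) {D : Set (SpaceTime (EucSp n))}
    (hJ : IsSuperjetWithinAt (negStrictPerturbation T A C μ V) D p M X) :
    IsSuperjetWithinAt (fun Y => -V Y.fst Y.snd) D
      ((1 - μ)⁻¹ • (p + WithLp.toLp 2 (-(μ * A), 0))) ((1 - μ)⁻¹ • M) X := by
  have hl : 0 < 1 - μ := sub_pos.2 hμ
  convert (hJ.add_affine (WithLp.toLp 2 (-(μ * A), 0)) (μ * (A * T + C))).const_mul
    (inv_pos.2 hl) using 2 with Y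
  simp only [negStrictPerturbation, inner_spaceTime, WithLp.toLp_fst, WithLp.toLp_snd,
    inner_zero_left]
  field_simp
  ring

lemma IsSuperHJB.isNegJetStrictSupersolution (hV : IsSuperHJB T b σ f g K c V)
    (hfA : ∀ t x, f t x + 1 ≤ A) (hVB : ∀ t ∈ Icc 0 T, ∀ x, |V t x| ≤ B) (hk : 0 ≤ k)
    (hck : ∀ t x, ∀ ξ ∈ K, k ≤ c t x ξ) (hμ₀ : 0 ≤ μ) (hμ₁ : μ < 1) :
    IsNegJetStrictSupersolution T μ (μ * k) b (fun t x => euclideanCol (σ t x)) f K c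
      (negStrictPerturbation T A C μ V) := by
  intro X p M hX hM hJ
  have hl : 0 < 1 - μ := sub_pos.2 hμ₁
  obtain ⟨hpde, hobst⟩ := hV.nonneg_and_Mop_le (hM.smul (conj_trivial _)) hX
    (hJ.of_negStrictPerturbation hμ₁)
  constructor
  · rw [parabolicSymbol_smul, parabolicSymbol_add_time, sub_nonneg, le_inv_mul_iff₀ hl] at hpde
    linarith [mul_le_mul_of_nonneg_left (hfA X.fst X.snd) hμ₀]
  · intro ζ hζ
    have hle := (sub_le_Mop (fun y => (abs_le.1 (hVB _ (Ico_subset_Icc_self hX) y)).2)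
      (fun ξ hξ => hk.trans (hck X.fst X.snd ξ hξ)) hζ).trans hobst
    simp only [negStrictPerturbation, WithLp.toLp_fst, WithLp.toLp_snd]
    linarith [mul_le_mul_of_nonneg_left hle hl.le,
      mul_le_mul_of_nonneg_left (hck X.fst X.snd ζ hζ) hμ₀]

lemma IsSubHJB.isJetSubsolution (hU : IsSubHJB T b σ f g K c U) (hK : K.Nonempty) :
    IsJetSubsolution T b (fun t x => euclideanCol (σ t x)) f K c fun X => U X.fst X.snd := by
  intro X p M hX hM hJ
  refine (hU.nonneg_or_le_Mop hM hX hJ).imp id fun hle δ hδ => ?_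
  obtain ⟨ζ, hζ, hlt⟩ := exists_Mop_sub_lt hK c U X.fst X.snd hδ
  exact ⟨ζ, hζ, by simp only [WithLp.toLp_fst, WithLp.toLp_snd]; linarith⟩

lemma le_of_forall_add_neg_convexComb_nonpos {a v D : ℝ}
    (h : ∀ μ ∈ Ioo (0 : ℝ) 1, a + -((1 - μ) * v + μ * D) ≤ 0) : a ≤ v := by
  have hlim : Tendsto (fun μ => a + -((1 - μ) * v + μ * D)) (𝓝[>] 0)
      (𝓝 (a + -((1 - 0) * v + 0 * D))) :=
    (Continuous.tendsto (by fun_prop) 0).mono_left nhdsWithin_le_nhds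
  linarith [le_of_tendsto hlim (eventually_of_mem (Ioo_mem_nhdsGT one_pos) h)]

theorem IsSubHJB.le_of_isSuperHJB {Cb Cs Cf Cg L R : ℝ}
    (hbs : IsLipschitzCoefficients T Cb Cs L b fun t x => euclideanCol (σ t x))
    (hfC : ∀ t x, |f t x| ≤ Cf)
    (hf : UniformContinuousOn (fun P : ℝ × EucSp n => f P.1 P.2) (Icc 0 T ×ˢ univ))
    (hgC : ∀ x, |g x| ≤ Cg) (hg : UniformContinuous g)
    (hK : K.Nonempty) (hKR : ∀ ζ ∈ K, ‖ζ‖ ≤ R)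
    (hc : UniformContinuousOn (fun P : ℝ × EucSp n × EucSp n => c P.1 P.2.1 P.2.2)
      (Icc 0 T ×ˢ univ ×ˢ K))
    (hk : 0 < k) (hck : ∀ t x, ∀ ξ ∈ K, k ≤ c t x ξ)
    (hUsc : UpperSemicontinuousOn (fun X => U X.fst X.snd) (timeStrip T (EucSp n)))
    (hVsc : UpperSemicontinuousOn (fun X => -V X.fst X.snd) (timeStrip T (EucSp n)))
    (hUB : ∀ t ∈ Icc 0 T, ∀ x, |U t x| ≤ B) (hVB : ∀ t ∈ Icc 0 T, ∀ x, |V t x| ≤ B)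
    (hU : IsSubHJB T b σ f g K c U) (hV : IsSuperHJB T b σ f g K c V)
    {t : ℝ} (ht : t ∈ Icc 0 T) (x : EucSp n) : U t x ≤ V t x := by
  have hCf : 0 ≤ Cf + 1 := add_nonneg ((abs_nonneg _).trans (hfC t x)) zero_le_one
  have hCg : 0 ≤ Cg := (abs_nonneg _).trans (hgC x)
  have hbarrier : 0 ≤ (Cf + 1) * T + Cg :=
    add_nonneg (mul_nonneg hCf (ht.1.trans ht.2)) hCg
  refine le_of_forall_add_neg_convexComb_nonpos (D := (Cf + 1) * (T - t) + Cg) fun μ hμ => ?_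
  exact (hU.isJetSubsolution hK).add_nonpos (X₀ := WithLp.toLp 2 (t, x)) hbs hf hg hKR hc hμ.1
    (mul_pos hμ.1 hk) hUsc
    (fun X hX => (hUB _ hX _).trans (le_add_of_nonneg_right hbarrier))
    (upperSemicontinuousOn_negStrictPerturbation hVsc hμ.2.le)
    (fun X hX => abs_negStrictPerturbation_le hCf hCg hμ.1.le hμ.2.le hX (hVB _ hX _))
    (hV.isNegJetStrictSupersolution (fun t x => by linarith [(abs_le.1 (hfC t x)).2]) hVB hk.le
      hck hμ.1.le hμ.2)
    (fun X hX => hX ▸ hU.2 X.snd)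
    (fun X hX => negStrictPerturbation_terminal_le (abs_le.1 (hgC _)).2 (hV.2 _) hμ.1.le hμ.2.le hX)
    ht

end StrictPerturbation

/-! ### Semicontinuous envelopes -/

section Envelopes

variable {T t C : ℝ} {W : ℝ → EucSp n → ℝ}

lemma neBot_nhdsWithin_time_lt (ht : t ≤ T) (x : EucSp n) :
    (𝓝[{p : ℝ × EucSp n | p.1 < T}] (t, x)).NeBot := by
  rw [← mem_closure_iff_nhdsWithin_neBot,
    show {p : ℝ × EucSp n | p.1 < T} = Iio T ×ˢ univ by ext; simp, closure_prod_eq, closure_Iio,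
    closure_univ]
  exact ⟨ht, mem_univ x⟩

lemma isBoundedUnder_le_of_abs_le (hW : ∀ t x, |W t x| ≤ C) (l : Filter (ℝ × EucSp n)) :
    l.IsBoundedUnder (· ≤ ·) fun p => W p.1 p.2 :=
  isBoundedUnder_of ⟨C, fun p => (abs_le.1 (hW p.1 p.2)).2⟩

lemma isBoundedUnder_ge_of_abs_le (hW : ∀ t x, |W t x| ≤ C) (l : Filter (ℝ × EucSp n)) :
    l.IsBoundedUnder (· ≥ ·) fun p => W p.1 p.2 :=
  isBoundedUnder_of ⟨-C, fun p => (abs_le.1 (hW p.1 p.2)).1⟩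

lemma abs_neg_apply_le (hW : ∀ t x, |W t x| ≤ C) (t : ℝ) (x : EucSp n) : |-W t x| ≤ C :=
  (abs_neg _).trans_le (hW t x)

lemma lscEnvT_eq_neg_uscEnvT_neg (hW : ∀ t x, |W t x| ≤ C) (ht : t ≤ T) (x : EucSp n) :
    lscEnvT T W t x = -uscEnvT T (fun s y => -W s y) t x := by
  have := neBot_nhdsWithin_time_lt ht x
  have hneg := abs_neg_apply_le hW
  simpa [lscEnvT, uscEnvT, Function.comp_def] using
    ((monotone_id (α := ℝ)).neg.map_limsup_of_continuousAt
      (fun p : ℝ × EucSp n => -W p.1 p.2) continuous_neg.continuousAt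
      (isBoundedUnder_le_of_abs_le hneg _)
      (isBoundedUnder_ge_of_abs_le hneg _).isCoboundedUnder_le).symm

lemma lscEnvT_le_uscEnvT (hW : ∀ t x, |W t x| ≤ C) (ht : t ≤ T) (x : EucSp n) :
    lscEnvT T W t x ≤ uscEnvT T W t x := by
  have := neBot_nhdsWithin_time_lt ht x
  exact liminf_le_limsup (isBoundedUnder_le_of_abs_le hW _) (isBoundedUnder_ge_of_abs_le hW _)

lemma uscEnvT_le_of_eventually_le (hW : ∀ t x, |W t x| ≤ C) (ht : t ≤ T) {z : ℝ}
    (h : ∀ᶠ p in 𝓝[{p : ℝ × EucSp n | p.1 < T}] (t, x), W p.1 p.2 ≤ z) :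
    uscEnvT T W t x ≤ z := by
  have := neBot_nhdsWithin_time_lt ht x
  exact limsup_le_of_le (isBoundedUnder_ge_of_abs_le hW _).isCoboundedUnder_le h

lemma abs_uscEnvT_le (hW : ∀ t x, |W t x| ≤ C) (ht : t ≤ T) (x : EucSp n) :
    |uscEnvT T W t x| ≤ C := by
  have := neBot_nhdsWithin_time_lt ht x
  refine abs_le.2 ⟨?_, uscEnvT_le_of_eventually_le hW ht
    (Eventually.of_forall fun p => (abs_le.1 (hW p.1 p.2)).2)⟩
  exact le_limsup_of_le (isBoundedUnder_le_of_abs_le hW _) fun z hz => by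
    obtain ⟨p, hp⟩ := hz.exists
    exact (abs_le.1 (hW p.1 p.2)).1.trans hp

lemma abs_lscEnvT_le (hW : ∀ t x, |W t x| ≤ C) (ht : t ≤ T) (x : EucSp n) :
    |lscEnvT T W t x| ≤ C := by
  rw [lscEnvT_eq_neg_uscEnvT_neg hW ht, abs_neg]
  exact abs_uscEnvT_le (abs_neg_apply_le hW) ht x

lemma upperSemicontinuousOn_uscEnvT (hW : ∀ t x, |W t x| ≤ C) :
    UpperSemicontinuousOn (fun X => uscEnvT T W X.fst X.snd) (timeStrip T (EucSp n)) := by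
  intro X _ y hy
  obtain ⟨z, hXz, hzy⟩ := exists_between hy
  have hlt : ∀ᶠ p in 𝓝[{p : ℝ × EucSp n | p.1 < T}] (X.fst, X.snd), W p.1 p.2 < z :=
    eventually_lt_of_limsup_lt hXz (isBoundedUnder_le_of_abs_le hW _)
  have hpair : Continuous fun Y : SpaceTime (EucSp n) => (Y.fst, Y.snd) := by fun_prop
  filter_upwards [nhdsWithin_le_nhds (hpair.continuousAt.eventually
    (eventually_eventually_nhds.2 (eventually_nhdsWithin_iff.1 hlt))), self_mem_nhdsWithin]
    with Y hY hYT
  exact (uscEnvT_le_of_eventually_le hW hYT.2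
    (eventually_nhdsWithin_iff.2 (hY.mono fun p hp hpT => (hp hpT).le))).trans_lt hzy

lemma upperSemicontinuousOn_neg_lscEnvT (hW : ∀ t x, |W t x| ≤ C) :
    UpperSemicontinuousOn (fun X => -lscEnvT T W X.fst X.snd) (timeStrip T (EucSp n)) := by
  intro X hX
  refine (upperSemicontinuousOn_uscEnvT (abs_neg_apply_le hW) X hX).congr_of_eventuallyEq hX ?_
  filter_upwards [self_mem_nhdsWithin] with Y hY
  simp [lscEnvT_eq_neg_uscEnvT_neg hW hY.2]

lemma le_uscEnvT (hW : ∀ t x, |W t x| ≤ C) (ht : t < T) (x : EucSp n) :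
    W t x ≤ uscEnvT T W t x := by
  by_contra! h
  have hlt : ∀ᶠ p in 𝓝[{p : ℝ × EucSp n | p.1 < T}] (t, x), W p.1 p.2 < W t x :=
    eventually_lt_of_limsup_lt h (isBoundedUnder_le_of_abs_le hW _)
  exact lt_irrefl _ (hlt.self_of_nhdsWithin ht)

lemma lscEnvT_le (hW : ∀ t x, |W t x| ≤ C) (ht : t < T) (x : EucSp n) :
    lscEnvT T W t x ≤ W t x := by
  rw [lscEnvT_eq_neg_uscEnvT_neg hW ht.le, neg_le]
  exact le_uscEnvT (abs_neg_apply_le hW) ht x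

lemma continuousOn_of_uscEnvT_le_lscEnvT (hW : ∀ t x, |W t x| ≤ C)
    (h : ∀ t ∈ Ico 0 T, ∀ x, uscEnvT T W t x ≤ lscEnvT T W t x) :
    ContinuousOn (fun p : ℝ × EucSp n => W p.1 p.2) (pdom T n) := by
  rintro ⟨t, x⟩ ⟨ht, -⟩
  have husc := le_uscEnvT hW ht.2 x
  have hlsc := lscEnvT_le hW ht.2 x
  have hlim := tendsto_of_liminf_eq_limsup (hlsc.antisymm (husc.trans (h t ht x)))
    (((h t ht x).trans hlsc).antisymm husc) (isBoundedUnder_le_of_abs_le hW _)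
    (isBoundedUnder_ge_of_abs_le hW _)
  exact hlim.mono_left (nhdsWithin_mono _ fun p hp => hp.1.2)

lemma envelopes_eq_of_uscEnvT_le_lscEnvT {C₁ C₂ : ℝ} {W₁ W₂ : ℝ → EucSp n → ℝ}
    (hW₁ : ∀ t x, |W₁ t x| ≤ C₁) (hW₂ : ∀ t x, |W₂ t x| ≤ C₂)
    (h₁₂ : ∀ t ∈ Icc 0 T, ∀ x, uscEnvT T W₁ t x ≤ lscEnvT T W₂ t x)
    (h₂₁ : ∀ t ∈ Icc 0 T, ∀ x, uscEnvT T W₂ t x ≤ lscEnvT T W₁ t x) :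
    ∀ t ∈ Icc 0 T, ∀ x, uscEnvT T W₁ t x = lscEnvT T W₁ t x ∧
      lscEnvT T W₁ t x = uscEnvT T W₂ t x ∧ uscEnvT T W₂ t x = lscEnvT T W₂ t x := by
  intro t ht x
  have h₁ := lscEnvT_le_uscEnvT hW₁ ht.2 x
  have h₂ := lscEnvT_le_uscEnvT hW₂ ht.2 x
  have h₁₂ := h₁₂ t ht x
  have h₂₁ := h₂₁ t ht x
  exact ⟨by linarith, by linarith, by linarith⟩

lemma eq_of_uscEnvT_le_lscEnvT {C₁ C₂ : ℝ} {W₁ W₂ : ℝ → EucSp n → ℝ}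
    (hW₁ : ∀ t x, |W₁ t x| ≤ C₁) (hW₂ : ∀ t x, |W₂ t x| ≤ C₂) (ht : t < T) {x : EucSp n}
    (h₁₂ : uscEnvT T W₁ t x ≤ lscEnvT T W₂ t x) (h₂₁ : uscEnvT T W₂ t x ≤ lscEnvT T W₁ t x) :
    W₁ t x = W₂ t x :=
  (((le_uscEnvT hW₁ ht x).trans h₁₂).trans (lscEnvT_le hW₂ ht x)).antisymm
    (((le_uscEnvT hW₂ ht x).trans h₂₁).trans (lscEnvT_le hW₁ ht x))

end Envelopes

/-! ### Uniqueness -/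

theorem IsViscSolHJB.uscEnvT_le_lscEnvT {T Cb Cs Cf Cg L R k C₁ C₂ : ℝ}
    {b : ℝ → EucSp n → EucSp n} {σ : ℝ → EucSp n → Matrix (Fin n) (Fin d) ℝ}
    {f : ℝ → EucSp n → ℝ} {g : EucSp n → ℝ} {K : Set (EucSp n)}
    {c : ℝ → EucSp n → EucSp n → ℝ} {W₁ W₂ : ℝ → EucSp n → ℝ}
    (hbs : IsLipschitzCoefficients T Cb Cs L b fun t x => euclideanCol (σ t x))
    (hfC : ∀ t x, |f t x| ≤ Cf)
    (hf : UniformContinuousOn (fun P : ℝ × EucSp n => f P.1 P.2) (Icc 0 T ×ˢ univ))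
    (hgC : ∀ x, |g x| ≤ Cg) (hg : UniformContinuous g)
    (hK : K.Nonempty) (hKR : ∀ ζ ∈ K, ‖ζ‖ ≤ R)
    (hc : UniformContinuousOn (fun P : ℝ × EucSp n × EucSp n => c P.1 P.2.1 P.2.2)
      (Icc 0 T ×ˢ univ ×ˢ K))
    (hk : 0 < k) (hck : ∀ t x, ∀ ξ ∈ K, k ≤ c t x ξ)
    (hC₁ : ∀ t x, |W₁ t x| ≤ C₁) (hC₂ : ∀ t x, |W₂ t x| ≤ C₂)
    (hW₁ : IsViscSolHJB T b σ f g K c W₁) (hW₂ : IsViscSolHJB T b σ f g K c W₂)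
    {t : ℝ} (ht : t ∈ Icc 0 T) (x : EucSp n) : uscEnvT T W₁ t x ≤ lscEnvT T W₂ t x :=
  hW₁.1.le_of_isSuperHJB hbs hfC hf hgC hg hK hKR hc hk hck
    (upperSemicontinuousOn_uscEnvT hC₁) (upperSemicontinuousOn_neg_lscEnvT hC₂)
    (fun _ hs y => (abs_uscEnvT_le hC₁ hs.2 y).trans (le_max_left C₁ C₂))
    (fun _ hs y => (abs_lscEnvT_le hC₂ hs.2 y).trans (le_max_right C₁ C₂)) hW₂.2 ht x

theorem uniqueness_HJB_general
    {n d : ℕ} (T : ℝ)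
    (b : ℝ → EucSp n → EucSp n) (σ : ℝ → EucSp n → Matrix (Fin n) (Fin d) ℝ)
    (f : ℝ → EucSp n → ℝ) (g : EucSp n → ℝ)
    (K : Set (EucSp n)) (c : ℝ → EucSp n → EucSp n → ℝ)
    (hb_cont : Continuous fun p : ℝ × EucSp n => b p.1 p.2)
    (hσ_cont : Continuous fun p : ℝ × EucSp n => σ p.1 p.2)
    (hb_bdd : ∃ C, ∀ t x, ‖b t x‖ ≤ C)
    (hσ_bdd : ∃ C, ∀ t x i j, |σ t x i j| ≤ C)
    (hlip : ∃ C > (0 : ℝ), ∀ t ∈ Icc (0 : ℝ) T, ∀ x x' : EucSp n,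
      ‖b t x - b t x'‖ + (∑ i, ∑ j, |σ t x i j - σ t x' i j|) ≤ C * ‖x - x'‖)
    (hf_bdd : ∃ C, ∀ t x, |f t x| ≤ C)
    (hf_uc : UniformContinuousOn (fun p : ℝ × EucSp n => f p.1 p.2) (Icc 0 T ×ˢ univ))
    (hg_bdd : ∃ C, ∀ x, |g x| ≤ C) (hg_uc : UniformContinuous g)
    (hK : K.Nonempty) (hK_bdd : Bornology.IsBounded K)
    (hc_uc : UniformContinuousOn (fun p : ℝ × EucSp n × EucSp n => c p.1 p.2.1 p.2.2)
      (Icc 0 T ×ˢ univ ×ˢ K))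
    (k : ℝ) (hk : 0 < k) (hck : ∀ t x, ∀ ξ ∈ K, k ≤ c t x ξ)
    (W₁ W₂ : ℝ → EucSp n → ℝ)
    (hW₁_bdd : ∃ C, ∀ t x, |W₁ t x| ≤ C) (hW₂_bdd : ∃ C, ∀ t x, |W₂ t x| ≤ C)
    (hW₁ : IsViscSolHJB T b σ f g K c W₁) (hW₂ : IsViscSolHJB T b σ f g K c W₂) :
    (∀ t ∈ Icc (0 : ℝ) T, ∀ x,
        uscEnvT T W₁ t x = lscEnvT T W₁ t x ∧
        lscEnvT T W₁ t x = uscEnvT T W₂ t x ∧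
        uscEnvT T W₂ t x = lscEnvT T W₂ t x) ∧
    (∀ t ∈ Ico (0 : ℝ) T, ∀ x, W₁ t x = W₂ t x) ∧
    ContinuousOn (fun p : ℝ × EucSp n => W₁ p.1 p.2) (pdom T n) := by
  obtain ⟨Cb, hCb⟩ := hb_bdd
  obtain ⟨Cs, hCs⟩ := hσ_bdd
  obtain ⟨L, hL, hlip⟩ := hlip
  obtain ⟨Cf, hCf⟩ := hf_bdd
  obtain ⟨Cg, hCg⟩ := hg_bdd
  obtain ⟨R, hR⟩ := hK_bdd.exists_norm_le
  obtain ⟨C₁, hC₁⟩ := hW₁_bdd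
  obtain ⟨C₂, hC₂⟩ := hW₂_bdd
  have hcoeff := isLipschitzCoefficients_euclideanCol hb_cont hσ_cont hCb hCs hL.le hlip
  have hle₁₂ : ∀ t ∈ Icc 0 T, ∀ x, uscEnvT T W₁ t x ≤ lscEnvT T W₂ t x := fun t ht x =>
    hW₁.uscEnvT_le_lscEnvT hcoeff hCf hf_uc hCg hg_uc hK hR hc_uc hk hck hC₁ hC₂ hW₂ ht x
  have hle₂₁ : ∀ t ∈ Icc 0 T, ∀ x, uscEnvT T W₂ t x ≤ lscEnvT T W₁ t x := fun t ht x =>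
    hW₂.uscEnvT_le_lscEnvT hcoeff hCf hf_uc hCg hg_uc hK hR hc_uc hk hck hC₂ hC₁ hW₁ ht x
  have henv := envelopes_eq_of_uscEnvT_le_lscEnvT hC₁ hC₂ hle₁₂ hle₂₁
  have hIco {t : ℝ} (ht : t ∈ Ico 0 T) : t ∈ Icc 0 T := Ico_subset_Icc_self ht
  exact ⟨henv,
    fun t ht x => eq_of_uscEnvT_le_lscEnvT hC₁ hC₂ ht.2 (hle₁₂ t (hIco ht) x) (hle₂₁ t (hIco ht) x),
    continuousOn_of_uscEnvT_le_lscEnvT hC₁ fun t ht x => (henv t (hIco ht) x).1.le⟩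

/-- **Uniqueness of bounded viscosity solutions** of equation (HJB): two bounded viscosity
solutions have identical (and equal to each other) usc and lsc envelopes on `[0,T] × ℝⁿ`;
in particular they coincide on `[0,T) × ℝⁿ` and are continuous there. -/
theorem uniqueness_HJB
    {n d : ℕ} (hn : 0 < n) (hd : 0 < d) (T : ℝ) (hT : 0 < T)
    (b : ℝ → EucSp n → EucSp n) (σ : ℝ → EucSp n → Matrix (Fin n) (Fin d) ℝ)
    (f : ℝ → EucSp n → ℝ) (g : EucSp n → ℝ)
    (K : Set (EucSp n)) (c : ℝ → EucSp n → EucSp n → ℝ)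
    -- (H1)
    (hb_cont : Continuous fun p : ℝ × EucSp n => b p.1 p.2)
    (hσ_cont : Continuous fun p : ℝ × EucSp n => σ p.1 p.2)
    (hb_bdd : ∃ C, ∀ t x, ‖b t x‖ ≤ C)
    (hσ_bdd : ∃ C, ∀ t x i j, |σ t x i j| ≤ C)
    (hlip : ∃ C > (0:ℝ), ∀ t ∈ Set.Icc (0:ℝ) T, ∀ x x' : EucSp n,
      ‖b t x - b t x'‖ + (∑ i, ∑ j, |σ t x i j - σ t x' i j|) ≤ C * ‖x - x'‖)
    -- (H2)
    (hf_bdd : ∃ C, ∀ t x, |f t x| ≤ C)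
    (hf_uc : UniformContinuousOn (fun p : ℝ × EucSp n => f p.1 p.2)
      (Set.Icc 0 T ×ˢ Set.univ))
    (hg_bdd : ∃ C, ∀ x, |g x| ≤ C)
    (hg_uc : UniformContinuous g)
    -- (H3)
    (hK : K.Nonempty) (hKcomp : IsCompact K)
    (hc_uc : UniformContinuousOn (fun p : ℝ × EucSp n × EucSp n => c p.1 p.2.1 p.2.2)
      (Set.Icc 0 T ×ˢ Set.univ ×ˢ K))
    (k : ℝ) (hk : 0 < k) (hck : ∀ t x, ∀ ξ ∈ K, k ≤ c t x ξ)
    (hc_sub : ∀ t x, ∀ ξ₁ ∈ K, ∀ ξ₂ ∈ K, ξ₁ + ξ₂ ∈ K →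
      c t x (ξ₁ + ξ₂) ≤ c t x ξ₁ + c t x ξ₂)
    -- the two bounded viscosity solutions
    (W₁ W₂ : ℝ → EucSp n → ℝ)
    (hW₁_bdd : ∃ C, ∀ t x, |W₁ t x| ≤ C) (hW₂_bdd : ∃ C, ∀ t x, |W₂ t x| ≤ C)
    (hW₁ : IsViscSolHJB T b σ f g K c W₁) (hW₂ : IsViscSolHJB T b σ f g K c W₂) :
    (∀ t ∈ Set.Icc (0:ℝ) T, ∀ x,
        uscEnvT T W₁ t x = lscEnvT T W₁ t x ∧
        lscEnvT T W₁ t x = uscEnvT T W₂ t x ∧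
        uscEnvT T W₂ t x = lscEnvT T W₂ t x) ∧
    (∀ t ∈ Set.Ico (0:ℝ) T, ∀ x, W₁ t x = W₂ t x) ∧
    ContinuousOn (fun p : ℝ × EucSp n => W₁ p.1 p.2) (pdom T n) :=
  uniqueness_HJB_general T b σ f g K c hb_cont hσ_cont hb_bdd hσ_bdd hlip hf_bdd hf_uc hg_bdd hg_uc
    hK hKcomp.isBounded hc_uc k hk hck W₁ W₂ hW₁_bdd hW₂_bdd hW₁ hW₂
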